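/- Let G be a finite group and p a prime. If k(G) ≥ (3/p²)·|G|, then G is p-solvable. -/

import Mathlib

/-- A group `G` is `p`-solvable if it has a subnormal series `⊥ = H₀ ⊴ H₁ ⊴ ⋯ ⊴ Hₙ = ⊤`
in which each factor `H_{i+1}/H_i` is either a `p`-group or has order coprime to `p`. -/
def IsPSolvable (p : ℕ) (G : Type*) [Group G] : Prop :=
  ∃ (n : ℕ) (H : Fin (n + 1) → Subgroup G),
    H 0 = ⊥ ∧ H (Fin.last n) = ⊤ ∧
    (∀ i : Fin n, H i.castSucc ≤ H i.succ) ∧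
    (∀ i : Fin n, ∃ _ : ((H i.castSucc).subgroupOf (H i.succ)).Normal,
      IsPGroup p (↥(H i.succ) ⧸ (H i.castSucc).subgroupOf (H i.succ)) ∨
      (Nat.card (↥(H i.succ) ⧸ (H i.castSucc).subgroupOf (H i.succ))).Coprime p)



open scoped Classical in
/-- Complete data on the irreducible complex matrix representations of a finite group. -/
structure IrrData (G : Type*) [Group G] [Fintype G] where
  r : ℕ
  d : Fin r → ℕ
  pos : ∀ i, 0 < d i
  ρ : ∀ i, G →* Matrix (Fin (d i)) (Fin (d i)) ℂ
  surj : ∀ i, Submodule.span ℂ (Set.range (ρ i)) = ⊤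
  col : ∀ x y : G, ∑ i, (ρ i y).trace * (ρ i x⁻¹).trace =
    ((Finset.univ.filter (fun g : G => y * g = g * x)).card : ℂ)
  indep : ∀ c : Fin r → ℂ, (∀ g, ∑ i, c i * (ρ i g).trace = 0) → ∀ i, c i = 0

theorem exists_irrData (G : Type*) [Group G] [Fintype G] : Nonempty (IrrData G) := by
  classical
  obtain ⟨r, d, hd, ⟨e⟩⟩ :=
    IsSemisimpleRing.exists_algEquiv_pi_matrix_of_isAlgClosed ℂ (MonoidAlgebra ℂ G)
  let ρ : ∀ i, G →* Matrix (Fin (d i)) (Fin (d i)) ℂ := fun i =>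
    ((Pi.evalMonoidHom (fun i => Matrix (Fin (d i)) (Fin (d i)) ℂ) i).comp (e : MonoidAlgebra ℂ G →* _)).comp
      (MonoidAlgebra.of ℂ G)
  have hρ : ∀ i g, ρ i g = e (MonoidAlgebra.of ℂ G g) i := fun i g => rfl
  have hspan : Submodule.span ℂ (Set.range (MonoidAlgebra.of ℂ G)) = ⊤ := by
    rw [eq_top_iff]
    intro f _
    induction f using MonoidAlgebra.induction_on with
    | of g => exact Submodule.subset_span ⟨g, rfl⟩
    | add f g hf hg => exact Submodule.add_mem _ (hf trivial) (hg trivial)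
    | smul c f hf => exact Submodule.smul_mem _ _ (hf trivial)
  refine ⟨⟨r, d, fun i => Nat.pos_of_ne_zero (hd i).out, ρ, ?_, ?_, ?_⟩⟩
  · intro i
    rw [eq_top_iff]
    intro M _
    let φ : MonoidAlgebra ℂ G →ₗ[ℂ] Matrix (Fin (d i)) (Fin (d i)) ℂ :=
      (LinearMap.proj i).comp e.toLinearMap
    have h1 : e.symm (Pi.single i M) ∈ Submodule.span ℂ (Set.range (MonoidAlgebra.of ℂ G)) := by
      rw [hspan]; trivial
    have h2 := Submodule.mem_map_of_mem (f := φ) h1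
    rw [Submodule.map_span] at h2
    have h3 : φ (e.symm (Pi.single i M)) = M := by simp [φ]
    rw [h3, ← Set.range_comp] at h2
    exact h2
  · intro x y
    let T : MonoidAlgebra ℂ G →ₗ[ℂ] MonoidAlgebra ℂ G :=
      (LinearMap.mulLeft ℂ (MonoidAlgebra.of ℂ G y)).comp
        (LinearMap.mulRight ℂ (MonoidAlgebra.of ℂ G x⁻¹))
    have hT1 : LinearMap.trace ℂ _ T =
        ((Finset.univ.filter (fun g : G => y * g = g * x)).card : ℂ) := by
      rw [LinearMap.trace_eq_matrix_trace ℂ (MonoidAlgebra.basis G ℂ), Matrix.trace,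
        Finset.card_filter]
      push_cast
      refine Finset.sum_congr rfl fun g _ => ?_
      rw [Matrix.diag_apply, LinearMap.toMatrix_apply]
      have : T (MonoidAlgebra.basis G ℂ g) = MonoidAlgebra.single (y * (g * x⁻¹)) 1 := by
        simp [T, MonoidAlgebra.single_mul_single]
      rw [this]
      have h2 : (MonoidAlgebra.basis G ℂ).repr (MonoidAlgebra.single (y * (g * x⁻¹)) 1) =
        Finsupp.single (y * (g * x⁻¹)) 1 := rfl
      rw [h2, Finsupp.single_apply]
      have h3 : (y * (g * x⁻¹) = g) ↔ (y * g = g * x) := by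
        rw [← mul_assoc, mul_inv_eq_iff_eq_mul]
      simp only [h3]
    have hT2 : LinearMap.trace ℂ _ T = ∑ i, (ρ i y).trace * (ρ i x⁻¹).trace := by
      rw [← LinearMap.trace_conj' T e.toLinearEquiv]
      rw [LinearMap.trace_eq_matrix_trace ℂ (Pi.basis fun i => Matrix.stdBasis ℂ (Fin (d i)) (Fin (d i)))]
      rw [Matrix.trace, Fintype.sum_sigma]
      refine Finset.sum_congr rfl fun i _ => ?_
      rw [Fintype.sum_prod_type, Matrix.trace, Matrix.trace, Finset.sum_mul_sum]
      refine Finset.sum_congr rfl fun a _ => Finset.sum_congr rfl fun b _ => ?_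
      rw [Matrix.diag_apply, LinearMap.toMatrix_apply, Pi.basis_repr, LinearEquiv.conj_apply_apply,
        Pi.basis_apply, Matrix.stdBasis_eq_single]
      have h1 : e.toLinearEquiv (T (e.toLinearEquiv.symm (Pi.single i (Matrix.single a b 1)))) i
          = ρ i y * (Matrix.single a b 1 * ρ i x⁻¹) := by
        change e (MonoidAlgebra.of ℂ G y * (e.symm (Pi.single i (Matrix.single a b 1)) *
          MonoidAlgebra.of ℂ G x⁻¹)) i = _
        rw [map_mul, map_mul, AlgEquiv.apply_symm_apply, Pi.mul_apply, Pi.mul_apply,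
          Pi.single_eq_same, hρ, hρ]
      rw [h1]
      have h2 : ∀ M : Matrix (Fin (d i)) (Fin (d i)) ℂ,
        (Matrix.stdBasis ℂ (Fin (d i)) (Fin (d i))).repr M (a, b) = M a b := fun M => rfl
      rw [h2, ← Matrix.mul_assoc, Matrix.mul_apply, Finset.sum_eq_single b]
      · simp
      · intro j _ hj
        rw [Matrix.mul_single_apply_of_ne _ _ _ _ _ hj, zero_mul]
      · simp
    rw [← hT2, hT1]
  · intro c hc i
    let φ : MonoidAlgebra ℂ G →ₗ[ℂ] ℂ :=
      ∑ i, c i • (Matrix.traceLinearMap _ ℂ ℂ).comp ((LinearMap.proj i).comp e.toLinearMap)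
    have h0 : ∀ f, φ f = ∑ i, c i * (e f i).trace := by
      intro f; simp [φ]
    have h1 : φ = 0 := by
      apply LinearMap.ext_on hspan
      rintro _ ⟨g, rfl⟩
      rw [h0]; exact hc g
    have := hd i
    have h2 := h0 (e.symm (Pi.single i (Matrix.single 0 0 1)))
    rw [h1, LinearMap.zero_apply, Finset.sum_eq_single i] at h2
    · simpa using h2.symm
    · intro j _ hj
      simp [Pi.single_eq_of_ne hj]
    · simp
-- PB

/-- An idempotent matrix has natural number trace. -/
theorem idem_trace_nat {n : Type*} [Fintype n] [DecidableEq n] (P : Matrix n n ℂ)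
    (hP : P * P = P) : ∃ m : ℕ, P.trace = m := by
  have hi : IsIdempotentElem (Matrix.toLin' P) := by
    change Matrix.toLin' P * Matrix.toLin' P = _
    rw [Module.End.mul_eq_comp, ← Matrix.toLin'_mul, hP]
  refine ⟨Module.finrank ℂ (LinearMap.range (Matrix.toLin' P)), ?_⟩
  rw [← Matrix.trace_toLin'_eq, (LinearMap.IsIdempotentElem.isProj_range _ hi).trace]

theorem idem_trace_zero {n : Type*} [Fintype n] [DecidableEq n] (P : Matrix n n ℂ)
    (hP : P * P = P) (h : P.trace = 0) : P = 0 := by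
  have hi : IsIdempotentElem (Matrix.toLin' P) := by
    change Matrix.toLin' P * Matrix.toLin' P = _
    rw [Module.End.mul_eq_comp, ← Matrix.toLin'_mul, hP]
  have := LinearMap.IsIdempotentElem.eq_zero_of_trace_eq_zero hi
    (by rw [Matrix.trace_toLin'_eq]; exact h)
  exact (Matrix.toLin').map_eq_zero_iff.mp this

/-- The averaging matrix of a matrix representation. -/
noncomputable def avgM {G n : Type*} [Group G] [Fintype G] [Fintype n] [DecidableEq n]
    (σ : G →* Matrix n n ℂ) : Matrix n n ℂ := (Fintype.card G : ℂ)⁻¹ • ∑ g, σ g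

section avg
set_option linter.unusedSectionVars false
variable {G n : Type*} [Group G] [Fintype G] [Fintype n] [DecidableEq n]

theorem mul_avgM (σ : G →* Matrix n n ℂ) (h : G) : σ h * avgM σ = avgM σ := by
  unfold avgM
  rw [Matrix.mul_smul, Finset.mul_sum]
  congr 1
  simp only [← map_mul]
  exact Equiv.sum_comp (Equiv.mulLeft h) (fun g => σ g)

theorem avgM_idem (σ : G →* Matrix n n ℂ) : avgM σ * avgM σ = avgM σ := by
  conv_lhs => enter [1]; unfold avgM
  rw [Matrix.smul_mul, Finset.sum_mul]
  simp only [mul_avgM, Finset.sum_const, Finset.card_univ]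
  rw [← Nat.cast_smul_eq_nsmul ℂ, smul_smul, inv_mul_cancel₀, one_smul]
  exact_mod_cast Fintype.card_ne_zero

theorem trace_avgM (σ : G →* Matrix n n ℂ) :
    (avgM σ).trace = (Fintype.card G : ℂ)⁻¹ * ∑ g, (σ g).trace := by
  unfold avgM
  rw [Matrix.trace_smul, Matrix.trace_sum, smul_eq_mul]

theorem avg_nat (σ : G →* Matrix n n ℂ) :
    ∃ m : ℕ, (Fintype.card G : ℂ)⁻¹ * ∑ g, (σ g).trace = m := by
  rw [← trace_avgM]
  exact idem_trace_nat _ (avgM_idem σ)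

/-- If all traces are the dimension, then the representation is trivial. -/
theorem trivial_of_trace (σ : G →* Matrix n n ℂ) (h : ∀ g, (σ g).trace = Fintype.card n) (g : G) :
    σ g = 1 := by
  have h1 : (avgM σ).trace = Fintype.card n := by
    rw [trace_avgM]
    simp only [h, Finset.sum_const, Finset.card_univ, nsmul_eq_mul]
    rw [inv_mul_cancel_left₀]
    exact_mod_cast Fintype.card_ne_zero
  have h2 : (1 - avgM σ) = 0 := by
    apply idem_trace_zero
    · rw [mul_sub, mul_one, sub_mul, one_mul, avgM_idem, sub_self, sub_zero]
    · rw [Matrix.trace_sub, h1, Matrix.trace_one, sub_self]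
  have h3 := mul_avgM σ g
  rw [← sub_eq_zero.mp h2, mul_one] at h3
  exact h3

/-- Kronecker product of matrix representations. -/
noncomputable def kronR {m : Type*} [Fintype m] [DecidableEq m]
    (σ : G →* Matrix n n ℂ) (τ : G →* Matrix m m ℂ) : G →* Matrix (n × m) (n × m) ℂ where
  toFun g := Matrix.kronecker (σ g) (τ g)
  map_one' := by simp [Matrix.kronecker]
  map_mul' a b := by
    simp only [map_mul]
    exact Matrix.mul_kronecker_mul _ _ _ _

theorem trace_kronR {m : Type*} [Fintype m] [DecidableEq m]
    (σ : G →* Matrix n n ℂ) (τ : G →* Matrix m m ℂ) (g : G) :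
    (kronR σ τ g).trace = (σ g).trace * (τ g).trace := Matrix.trace_kronecker _ _

/-- Dual matrix representation. -/
noncomputable def dualR (σ : G →* Matrix n n ℂ) : G →* Matrix n n ℂ where
  toFun g := (σ g⁻¹).transpose
  map_one' := by simp
  map_mul' a b := by
    rw [mul_inv_rev, map_mul, Matrix.transpose_mul]

theorem trace_dualR (σ : G →* Matrix n n ℂ) (g : G) :
    (dualR σ g).trace = (σ g⁻¹).trace := Matrix.trace_transpose _

theorem trace_conj (σ : G →* Matrix n n ℂ) (g h : G) : (σ (h * g * h⁻¹)).trace = (σ g).trace := by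
  rw [map_mul, Matrix.trace_mul_comm, ← map_mul]
  simp

end avg

namespace IrrData
variable {G : Type*} [Group G] [Fintype G] (I : IrrData G)

/-- Irreducible characters. -/
noncomputable def χ (i : Fin I.r) (g : G) : ℂ := (I.ρ i g).trace

theorem χ_conj (i : Fin I.r) (g h : G) : I.χ i (h * g * h⁻¹) = I.χ i g := trace_conj _ _ _

theorem χ_one (i : Fin I.r) : I.χ i 1 = I.d i := by simp [χ]

theorem colsum (f : G → ℂ) (x : G) :
    ∑ i, I.χ i x * ∑ g, f g * I.χ i g⁻¹ = ∑ h : G, f (h⁻¹ * x * h) := by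
  classical
  simp only [Finset.mul_sum]
  rw [Finset.sum_comm]
  have : ∀ g, ∑ i, I.χ i x * (f g * I.χ i g⁻¹) =
      ∑ h : G, if x * h = h * g then f g else 0 := by
    intro g
    have := I.col g x
    rw [Finset.card_filter] at this
    push_cast at this
    calc _ = f g * ∑ i, (I.ρ i x).trace * (I.ρ i g⁻¹).trace := by
          rw [Finset.mul_sum]; refine Finset.sum_congr rfl fun i _ => ?_
          simp only [χ]; ring
      _ = _ := by
          rw [this, Finset.mul_sum]; refine Finset.sum_congr rfl fun i _ => ?_
          split_ifs <;> simp
  simp only [this]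
  rw [Finset.sum_comm]
  refine Finset.sum_congr rfl fun h _ => ?_
  rw [Finset.sum_eq_single (h⁻¹ * x * h)]
  · rw [if_pos]; group
  · intro b _ hb
    rw [if_neg]
    intro h2
    apply hb
    rw [mul_assoc, h2]; group
  · simp

theorem expand (f : G → ℂ) (hf : ∀ g h, f (h * g * h⁻¹) = f g) (x : G) :
    f x = ∑ i, ((Fintype.card G : ℂ)⁻¹ * ∑ g, f g * I.χ i g⁻¹) * I.χ i x := by
  have h := I.colsum f x
  have h1 : ∀ h : G, f (h⁻¹ * x * h) = f x := fun h => by simpa using hf x h⁻¹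
  simp only [h1, Finset.sum_const, Finset.card_univ, nsmul_eq_mul] at h
  have h2 : (Fintype.card G : ℂ) ≠ 0 := by exact_mod_cast Fintype.card_ne_zero
  rw [← mul_right_inj' h2, ← h, Finset.mul_sum]
  refine Finset.sum_congr rfl fun i _ => ?_
  field_simp

theorem row (i j : Fin I.r) :
    ∑ g, I.χ i g * I.χ j g⁻¹ = if i = j then (Fintype.card G : ℂ) else 0 := by
  have h2 : (Fintype.card G : ℂ) ≠ 0 := by exact_mod_cast Fintype.card_ne_zero
  have h := I.expand (I.χ i) (fun g h => I.χ_conj i g h)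
  have h3 := I.indep (fun j => ((Fintype.card G : ℂ)⁻¹ * ∑ g, I.χ i g * I.χ j g⁻¹) -
    if i = j then 1 else 0) (by
      intro g
      simp only [sub_mul, Finset.sum_sub_distrib]
      have := h g
      simp only [χ] at this ⊢
      rw [← this]
      simp) j
  rw [sub_eq_zero] at h3
  rw [inv_mul_eq_iff_eq_mul₀ h2] at h3
  rw [h3]; split_ifs <;> simp

theorem row_self (i : Fin I.r) : ∑ g, I.χ i g * I.χ i g⁻¹ = (Fintype.card G : ℂ) := by
  rw [row, if_pos rfl]

theorem dec {n : Type*} [Fintype n] [DecidableEq n] (σ : G →* Matrix n n ℂ) :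
    ∃ m : Fin I.r → ℕ, (∀ g, (σ g).trace = ∑ i, m i * I.χ i g) ∧
      ∀ i, (Fintype.card G : ℂ)⁻¹ * ∑ g, (σ g).trace * I.χ i g⁻¹ = m i := by
  have h : ∀ i, ∃ m : ℕ, (Fintype.card G : ℂ)⁻¹ * ∑ g, (σ g).trace * I.χ i g⁻¹ = m := by
    intro i
    obtain ⟨m, hm⟩ := avg_nat (kronR σ (dualR (I.ρ i)))
    refine ⟨m, ?_⟩
    rw [← hm]
    simp only [trace_kronR, trace_dualR, χ]
  choose m hm using h
  refine ⟨m, fun g => ?_, hm⟩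
  have := I.expand (fun g => (σ g).trace) (fun g h => trace_conj σ g h) g
  simp only [hm] at this
  exact this

/-- A group element acting trivially in all small irreducible representations is killed by every
small representation. -/
theorem constituent {n : ℕ} (σ : G →* Matrix (Fin n) (Fin n) ℂ) (c : G)
    (hc : ∀ i, I.d i ≤ n → I.ρ i c = 1) : σ c = 1 := by
  obtain ⟨m, hm, -⟩ := I.dec σ
  have h1 : (n : ℂ) = ∑ i, (m i * I.d i : ℂ) := by
    have := hm 1
    simp only [map_one, Matrix.trace_one, Fintype.card_fin, χ_one] at this
    exact this
  have h2 : n = ∑ i, m i * I.d i := by exact_mod_cast h1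
  have h3 : ∀ i, m i ≠ 0 → I.d i ≤ n := by
    intro i hi
    calc I.d i ≤ m i * I.d i := Nat.le_mul_of_pos_left _ (Nat.pos_of_ne_zero hi)
      _ ≤ _ := by rw [h2]; exact Finset.single_le_sum (f := fun i => m i * I.d i)
                    (fun _ _ => Nat.zero_le _) (Finset.mem_univ i)
  have : Fintype (Subgroup.zpowers c) := Fintype.ofFinite _
  have h4 := trivial_of_trace (σ.comp (Subgroup.zpowers c).subtype) (by
    rintro ⟨_, k, rfl⟩
    simp only [MonoidHom.comp_apply, Subgroup.subtype_apply, Fintype.card_fin]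
    rw [hm, h1]
    refine Finset.sum_congr rfl fun i _ => ?_
    by_cases hi : m i = 0
    · simp [hi]
    · have : I.ρ i (c ^ k) = 1 := by
        have hk : c ∈ (I.ρ i).ker := hc i (h3 i hi)
        exact (I.ρ i).ker.zpow_mem hk k
      simp [χ, this]) ⟨c, Subgroup.mem_zpowers c⟩
  simpa using h4

theorem exists_triv : ∃ i0, (∀ g, I.χ i0 g = 1) ∧ ∀ i, i ≠ i0 → ∑ g, I.χ i g = 0 := by
  have hcard : (Fintype.card G : ℂ) ≠ 0 := by exact_mod_cast Fintype.card_ne_zero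
  obtain ⟨m, hm, hm2⟩ := I.dec (1 : G →* Matrix (Fin 1) (Fin 1) ℂ)
  simp only [MonoidHom.one_apply, Matrix.trace_one, Fintype.card_fin, Nat.cast_one, one_mul] at hm hm2
  have hinv : ∀ i, ∑ g, I.χ i g⁻¹ = ∑ g, I.χ i g := fun i =>
    Equiv.sum_comp (Equiv.inv G) (fun g => I.χ i g)
  have h1 : ∑ i, (m i : ℂ) * m i = 1 := by
    have : ∑ g : G, (1 : ℂ) = ∑ g, ∑ i, m i * I.χ i g := Finset.sum_congr rfl fun g _ => hm g
    rw [Finset.sum_comm] at this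
    simp only [← Finset.mul_sum, Finset.sum_const, Finset.card_univ, nsmul_eq_mul, mul_one] at this
    rw [← mul_right_inj' hcard, mul_one]
    conv_rhs => rw [this]
    rw [Finset.mul_sum]
    refine Finset.sum_congr rfl fun i _ => ?_
    rw [← hinv, ← hm2 i]; field_simp
  have h2 : ∑ i, m i * m i = 1 := by exact_mod_cast h1
  obtain ⟨i0, -, hi0⟩ : ∃ i0 ∈ Finset.univ, m i0 * m i0 ≠ 0 := by
    apply Finset.exists_ne_zero_of_sum_ne_zero
    rw [h2]; exact one_ne_zero
  have h3 : ∀ i, i ≠ i0 → m i * m i0 = 0 ∧ m i = 0 := by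
    intro i hi
    have : m i * m i + m i0 * m i0 ≤ 1 := by
      rw [← h2]
      exact Finset.add_le_sum (f := fun i => m i * m i) (fun _ _ => Nat.zero_le _)
        (Finset.mem_univ i) (Finset.mem_univ i0) hi
    have h4 : 1 ≤ m i0 * m i0 := Nat.pos_of_ne_zero hi0
    have h5 : m i * m i = 0 := by omega
    have h6 : m i = 0 := by simpa using h5
    simp [h6]
  have h4 : m i0 = 1 := by
    rw [Finset.sum_eq_single i0 (fun i _ hi => by simp [(h3 i hi).2]) (by simp)] at h2
    exact Nat.eq_one_of_mul_eq_one_right h2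
  refine ⟨i0, fun g => ?_, fun i hi => ?_⟩
  · have := hm g
    rw [Finset.sum_eq_single i0 (fun i _ hi => by rw [(h3 i hi).2]; simp) (by simp), h4] at this
    simpa using this.symm
  · have := hm2 i
    rw [(h3 i hi).2, hinv] at this
    simpa [hcard] using this

theorem schur (i : Fin I.r) (M : Matrix (Fin (I.d i)) (Fin (I.d i)) ℂ)
    (hM : ∀ g, I.ρ i g * M = M * I.ρ i g) : ∃ c : ℂ, M = c • 1 := by
  have h : ∀ N, N * M = M * N := by
    intro N
    have hN : N ∈ Submodule.span ℂ (Set.range (I.ρ i)) := by rw [I.surj]; trivial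
    induction hN using Submodule.span_induction with
    | mem x hx => obtain ⟨g, rfl⟩ := hx; exact hM g
    | zero => simp
    | add x y _ _ hx hy => rw [add_mul, mul_add, hx, hy]
    | smul c x _ hx => rw [Matrix.smul_mul, Matrix.mul_smul, hx]
  have h2 := Matrix.mem_range_scalar_of_commute_single (M := M) (fun a b _ => h _)
  obtain ⟨c, hc⟩ := h2
  exact ⟨c, by rw [← hc]; simp [Matrix.smul_one_eq_diagonal]⟩

theorem sum_sq : ∑ i, (I.d i) ^ 2 = Fintype.card G := by
  have h := I.col 1 1
  simp only [inv_one, map_one, Matrix.trace_one, Fintype.card_fin, one_mul, mul_one,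
    Finset.filter_true, Finset.card_univ] at h
  have h2 : ∑ i, I.d i * I.d i = Fintype.card G := by exact_mod_cast h
  simpa only [sq] using h2

theorem r_eq : I.r = Nat.card (ConjClasses G) := by
  classical
  have hcard : (Fintype.card G : ℂ) ≠ 0 := by exact_mod_cast Fintype.card_ne_zero
  have h1 := card_comm_eq_card_conjClasses_mul_card G
  have h2 : (Nat.card {p : G × G // Commute p.1 p.2} : ℂ) = I.r * Fintype.card G := by
    have : (Nat.card {p : G × G // Commute p.1 p.2} : ℂ) =
        ∑ x : G, ∑ i, (I.ρ i x).trace * (I.ρ i x⁻¹).trace := by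
      simp only [I.col]
      rw [Nat.card_eq_fintype_card, Fintype.card_subtype, Finset.card_filter,
        Fintype.sum_prod_type]
      push_cast
      refine Finset.sum_congr rfl fun x _ => ?_
      rw [Finset.card_filter]
      push_cast
      rfl
    rw [this, Finset.sum_comm]
    have h3 := fun i => I.row_self i
    simp only [χ] at h3
    simp [h3]
  rw [h1, Nat.card_eq_fintype_card (α := G)] at h2
  push_cast at h2
  exact_mod_cast (mul_right_cancel₀ hcard h2).symm

theorem centralizer_sum (x : G) : ∑ i, I.χ i x * I.χ i x⁻¹ =
    (Nat.card (Subgroup.centralizer ({x} : Set G)) : ℂ) := by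
  classical
  simp only [χ]
  rw [I.col, Nat.card_eq_fintype_card, Fintype.card_subtype]
  congr 2
  ext g
  simp [Subgroup.mem_centralizer_iff]

end IrrData


/-- An element `y` of order `p ^ a`. -/
structure Cyc (G : Type*) [Group G] [Fintype G] (p a : ℕ) where
  y : G
  hy : orderOf y = p ^ a

/-- Local data: a `p`-element `y` of order `p ^ a` whose centralizer is `⟨y⟩ × K` with `K` of
order prime to `p`. -/
structure Loc (G : Type*) [Group G] [Fintype G] (p a : ℕ) extends Cyc G p a where
  K : Subgroup G
  hKy : ∀ k ∈ K, Commute k y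
  hK : (Nat.card K).Coprime p
  hC : ∀ c, Commute c y → ∃ (i : ℕ) (k : G), k ∈ K ∧ c = y ^ i * k

namespace Cyc
variable {G : Type*} [Group G] [Fintype G] {p a : ℕ} [Fact p.Prime] (L : Cyc G p a)

set_option linter.unusedSectionVars false

/-- Powers of `y` indexed by `ZMod (p ^ a)`. -/
def Y (i : ZMod (p ^ a)) : G := L.y ^ i.val

theorem Y_nat (m : ℕ) : L.Y (m : ZMod (p ^ a)) = L.y ^ m := by
  unfold Y
  rw [ZMod.val_natCast, ← L.hy, pow_mod_orderOf]

theorem Y_zero : L.Y 0 = 1 := by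
  have := L.Y_nat 0
  simpa using this

theorem Y_one : L.Y 1 = L.y := by
  have := L.Y_nat 1
  simpa using this

theorem Y_add (i j : ZMod (p ^ a)) : L.Y (i + j) = L.Y i * L.Y j := by
  obtain ⟨m, rfl⟩ := ZMod.natCast_zmod_surjective i
  obtain ⟨m', rfl⟩ := ZMod.natCast_zmod_surjective j
  rw [← Nat.cast_add, Y_nat, Y_nat, Y_nat, pow_add]

theorem Y_neg (i : ZMod (p ^ a)) : L.Y (-i) = (L.Y i)⁻¹ := by
  apply eq_inv_of_mul_eq_one_left
  rw [← Y_add, neg_add_cancel, Y_zero]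

theorem Y_mul_nat (i : ZMod (p ^ a)) (m : ℕ) : L.Y (i * m) = L.Y i ^ m := by
  obtain ⟨m', rfl⟩ := ZMod.natCast_zmod_surjective i
  rw [← Nat.cast_mul, Y_nat, Y_nat, pow_mul]

theorem Y_inj {i j : ZMod (p ^ a)} (h : L.Y i = L.Y j) : i = j := by
  obtain ⟨m, rfl⟩ := ZMod.natCast_zmod_surjective i
  obtain ⟨m', rfl⟩ := ZMod.natCast_zmod_surjective j
  rw [Y_nat, Y_nat, pow_eq_pow_iff_modEq, L.hy] at h
  exact (ZMod.natCast_eq_natCast_iff _ _ _).mpr h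

theorem Y_pow_card (i : ZMod (p ^ a)) : (L.Y i) ^ (p ^ a) = 1 := by
  rw [← Y_mul_nat]
  simp [Y_zero]

end Cyc

namespace Loc
variable {G : Type*} [Group G] [Fintype G] {p a : ℕ} [Fact p.Prime] (L : Loc G p a)
set_option linter.unusedSectionVars false

theorem Y_comm {k : G} (hk : k ∈ L.K) (i : ZMod (p ^ a)) : Commute k (L.Y i) :=
  (L.hKy k hk).pow_right _

theorem pow_cardK {k : G} (hk : k ∈ L.K) : k ^ Nat.card L.K = 1 := by
  have : (⟨k, hk⟩ : L.K) ^ Nat.card L.K = 1 := pow_card_eq_one'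
  exact congrArg Subtype.val this

/-- An exponent extracting the `p`-part. -/
theorem exists_exp : ∃ M : ℕ, ∀ (i : ZMod (p ^ a)) (k : G), k ∈ L.K → (L.Y i * k) ^ M = L.Y i := by
  obtain ⟨M, h1, h2⟩ := Nat.chineseRemainder (Nat.Coprime.pow_left a L.hK.symm) 1 0
  refine ⟨M, fun i k hk => ?_⟩
  rw [((L.Y_comm hk i).symm).mul_pow]
  have h3 : k ^ M = 1 := by
    obtain ⟨t, rfl⟩ := (Nat.modEq_zero_iff_dvd).mp h2
    rw [pow_mul, L.pow_cardK hk, one_pow]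
  have h4 : L.Y i ^ M = L.Y i := by
    rw [← Cyc.Y_mul_nat, (ZMod.natCast_eq_natCast_iff _ _ _).mpr h1]; simp
  rw [h3, h4, mul_one]

theorem decomp_unique {i j : ZMod (p ^ a)} {k l : G} (hk : k ∈ L.K) (hl : l ∈ L.K)
    (h : L.Y i * k = L.Y j * l) : i = j ∧ k = l := by
  obtain ⟨M, hM⟩ := L.exists_exp
  have h1 := congrArg (· ^ M) h
  simp only [hM _ _ hk, hM _ _ hl] at h1
  have h2 := L.Y_inj h1
  subst h2
  exact ⟨rfl, mul_left_cancel h⟩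

/-- `g` normalizes `⟨y⟩` acting as multiplication by `u`. -/
def Nm (g : G) (u : ZMod (p ^ a)) : Prop := g * L.y * g⁻¹ = L.Y u

theorem Nm.conj {L : Loc G p a} {g : G} {u : ZMod (p ^ a)} (h : L.Nm g u) (i : ZMod (p ^ a)) :
    g * L.Y i * g⁻¹ = L.Y (u * i) := by
  obtain ⟨m, rfl⟩ := ZMod.natCast_zmod_surjective i
  rw [Cyc.Y_mul_nat, Cyc.Y_nat, ← conj_pow, h]

theorem Nm.unique {L : Loc G p a} {g : G} {u v : ZMod (p ^ a)} (h : L.Nm g u) (h' : L.Nm g v) :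
    u = v := L.Y_inj (h.symm.trans h')

theorem Nm.one : L.Nm 1 1 := by simp [Nm, Cyc.Y_one]

theorem Nm.mul {L : Loc G p a} {g h : G} {u v : ZMod (p ^ a)} (hg : L.Nm g u) (hh : L.Nm h v) :
    L.Nm (g * h) (u * v) := by
  unfold Nm
  rw [← hg.conj, ← hh]; group

theorem Nm.y_eq {L : Loc G p a} {g : G} {u : ZMod (p ^ a)} (h : L.Nm g u) :
    ∃ m : ℕ, (L.Y u) ^ m = L.y := by
  have h1 : orderOf (L.Y u) = orderOf L.y := by
    rw [← h]
    exact orderOf_injective (MulAut.conj g).toMonoidHom (MulAut.conj g).injective L.y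
  have h2 : Subgroup.zpowers (L.Y u) = Subgroup.zpowers L.y := by
    apply Subgroup.eq_of_le_of_card_ge
    · rw [Subgroup.zpowers_le]; exact Subgroup.pow_mem _ (Subgroup.mem_zpowers _) _
    · rw [Nat.card_zpowers, Nat.card_zpowers, h1]
  have h3 : L.y ∈ Subgroup.zpowers (L.Y u) := by rw [h2]; exact Subgroup.mem_zpowers _
  exact mem_powers_iff_mem_zpowers.mpr h3

theorem Nm.inv {L : Loc G p a} {g : G} {u : ZMod (p ^ a)} (h : L.Nm g u) :
    ∃ v, L.Nm g⁻¹ v ∧ v * u = 1 := by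
  obtain ⟨m, hm⟩ := h.y_eq
  have h1 : L.Nm g⁻¹ m := by
    unfold Nm
    rw [Cyc.Y_nat]
    have : L.y = g * L.y ^ m * g⁻¹ := by rw [← conj_pow, h, hm]
    conv_lhs => rw [this]
    group
  refine ⟨m, h1, ?_⟩
  have := h1.mul h
  rw [inv_mul_cancel] at this
  exact this.unique (Nm.one L)

theorem Nm.conj_mem {L : Loc G p a} {g : G} {u : ZMod (p ^ a)} (h : L.Nm g u) {k : G}
    (hk : k ∈ L.K) : g * k * g⁻¹ ∈ L.K := by
  have hc : Commute (g * k * g⁻¹) L.y := by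
    obtain ⟨m, hm⟩ := h.y_eq
    rw [← hm]
    apply Commute.pow_right
    rw [← h]
    have := L.hKy k hk
    unfold Commute SemiconjBy at *
    have e1 : g * k * g⁻¹ * (g * L.y * g⁻¹) = g * (k * L.y) * g⁻¹ := by group
    have e2 : g * L.y * g⁻¹ * (g * k * g⁻¹) = g * (L.y * k) * g⁻¹ := by group
    rw [e1, e2, this]
  obtain ⟨i, l, hl, hil⟩ := L.hC _ hc
  have h1 := congrArg (· ^ Nat.card L.K) hil
  simp only [conj_pow, L.pow_cardK hk] at h1
  rw [(((L.hKy l hl).pow_right i).symm).mul_pow, L.pow_cardK hl, ← pow_mul] at h1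
  simp only [mul_one, mul_inv_cancel] at h1
  have h2 := orderOf_dvd_of_pow_eq_one h1.symm
  rw [L.hy] at h2
  have h3 := (Nat.Coprime.pow_left a L.hK.symm).dvd_of_dvd_mul_right h2
  rw [← L.hy] at h3
  rw [hil, orderOf_dvd_iff_pow_eq_one.mp h3, one_mul]
  exact hl

theorem conj_solve {g : G} {i j : ZMod (p ^ a)} {k l : G} (hk : k ∈ L.K) (hl : l ∈ L.K)
    (h : L.Y i * k * g = g * (L.Y j * l)) : g * L.Y j * g⁻¹ = L.Y i := by
  obtain ⟨M, hM⟩ := L.exists_exp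
  have h1 : g * (L.Y j * l) * g⁻¹ = L.Y i * k := by rw [← h]; group
  have h2 := congrArg (· ^ M) h1
  simp only [conj_pow, hM _ _ hk, hM _ _ hl] at h2
  exact h2

theorem conj_solve_unit {g : G} {i j : ZMod (p ^ a)} (hj : IsUnit j)
    (h : g * L.Y j * g⁻¹ = L.Y i) : ∃ u, L.Nm g u := by
  obtain ⟨v, hv⟩ := hj.exists_right_inv
  obtain ⟨m, rfl⟩ := ZMod.natCast_zmod_surjective v
  refine ⟨i * m, ?_⟩
  unfold Nm
  rw [Cyc.Y_mul_nat, ← h, conj_pow, ← Cyc.Y_mul_nat, hv, Cyc.Y_one]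

theorem Nm.solve_iff {L : Loc G p a} {g : G} {u : ZMod (p ^ a)} (h : L.Nm g u)
    {i j : ZMod (p ^ a)} {k l : G} (hk : k ∈ L.K) (hl : l ∈ L.K) :
    L.Y i * k * g = g * (L.Y j * l) ↔ i = u * j ∧ k = g * l * g⁻¹ := by
  have e : g * (L.Y j * l) = (L.Y (u * j) * (g * l * g⁻¹)) * g := by
    rw [← h.conj]; group
  rw [e, mul_left_inj]
  constructor
  · exact L.decomp_unique hk (h.conj_mem hl)
  · rintro ⟨rfl, rfl⟩; rfl

end Loc


section fourier
variable {n : ℕ} [NeZero n]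

/-- The standard additive character. -/
noncomputable def ee (x : ZMod n) : ℂ := ZMod.stdAddChar x

theorem ee_zero : ee (0 : ZMod n) = 1 := by simp [ee]
theorem ee_add (x y : ZMod n) : ee (x + y) = ee x * ee y := AddChar.map_add_eq_mul _ _ _

theorem ee_sum (b : ZMod n) : ∑ x : ZMod n, ee (b * x) = if b = 0 then (n : ℂ) else 0 := by
  have := AddChar.sum_mulShift b (ZMod.isPrimitive_stdAddChar n)
  simp only [ee]
  simp only [mul_comm b]
  rw [this]
  split_ifs <;> simp

theorem ee_sum' (b c : ZMod n) :
    ∑ x : ZMod n, ee (b * x) * ee (-(c * x)) = if b = c then (n : ℂ) else 0 := by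
  have := ee_sum (b - c)
  simp only [sub_eq_zero] at this
  rw [← this]
  refine Finset.sum_congr rfl fun x _ => ?_
  rw [← ee_add]; congr 1; ring

/-- Fourier inversion. -/
theorem fourier_inv (f : ZMod n → ℂ) (c : ZMod n → ℂ)
    (h : ∀ j, (n : ℂ) * c j = ∑ i, f i * ee (-(j * i))) (i : ZMod n) :
    f i = ∑ j, c j * ee (j * i) := by
  have hn : (n : ℂ) ≠ 0 := by exact_mod_cast NeZero.ne n
  rw [← mul_right_inj' hn, Finset.mul_sum]
  simp only [← mul_assoc, h, Finset.sum_mul]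
  rw [Finset.sum_comm]
  have : ∀ x, ∑ j, f x * ee (-(j * x)) * ee (j * i) = f x * if i = x then (n : ℂ) else 0 := by
    intro x
    rw [← ee_sum' i x, Finset.mul_sum]
    refine Finset.sum_congr rfl fun j _ => ?_
    rw [mul_comm j x, mul_comm j i]; ring
  simp only [this]
  simp [mul_comm]

end fourier

namespace Cyc
variable {G : Type*} [Group G] [Fintype G] {p a : ℕ} [Fact p.Prime] (L : Cyc G p a)

/-- twisted restriction to the cyclic group -/
noncomputable def tw {n : Type*} [Fintype n] [DecidableEq n] (σ : G →* Matrix n n ℂ)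
    (j : ZMod (p ^ a)) : Multiplicative (ZMod (p ^ a)) →* Matrix n n ℂ where
  toFun i := ee (-(j * i.toAdd)) • σ (L.Y i.toAdd)
  map_one' := by simp [ee_zero, L.Y_zero]
  map_mul' x y := by
    rw [toAdd_mul, L.Y_add, map_mul, mul_add, neg_add, ee_add, Matrix.smul_mul, Matrix.mul_smul,
      smul_smul]

variable (I : IrrData G)

theorem exists_b (j : ZMod (p ^ a)) (X : Fin I.r) : ∃ m : ℕ,
    ((p ^ a : ℕ) : ℂ) * m = ∑ i, I.χ X (L.Y i) * ee (-(j * i)) := by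
  obtain ⟨m, hm⟩ := avg_nat (L.tw (I.ρ X) j)
  refine ⟨m, ?_⟩
  rw [← hm, Fintype.card_multiplicative, ZMod.card, mul_inv_cancel_left₀]
  · rw [← Equiv.sum_comp Multiplicative.ofAdd]
    refine Finset.sum_congr rfl fun i _ => ?_
    simp only [tw, MonoidHom.coe_mk, OneHom.coe_mk, Matrix.trace_smul, IrrData.χ, toAdd_ofAdd,
      smul_eq_mul]
    ring
  · exact_mod_cast NeZero.ne (p ^ a)

/-- Multiplicity of the `j`-th character in the restriction of the `X`-th irreducible
character. -/
noncomputable def b (j : ZMod (p ^ a)) (X : Fin I.r) : ℕ := (L.exists_b I j X).choose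

theorem b_spec (j : ZMod (p ^ a)) (X : Fin I.r) :
    ((p ^ a : ℕ) : ℂ) * L.b I j X = ∑ i, I.χ X (L.Y i) * ee (-(j * i)) :=
  (L.exists_b I j X).choose_spec

theorem χ_Y (X : Fin I.r) (i : ZMod (p ^ a)) :
    I.χ X (L.Y i) = ∑ j, L.b I j X * ee (j * i) :=
  fourier_inv (fun i => I.χ X (L.Y i)) (fun j => (L.b I j X : ℂ)) (fun j => L.b_spec I j X) i

theorem sum_b (X : Fin I.r) : ∑ j, L.b I j X = I.d X := by
  have := L.χ_Y I X 0
  rw [L.Y_zero, I.χ_one] at this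
  simp only [mul_zero, ee_zero, mul_one] at this
  exact_mod_cast this.symm

theorem parseval (X : Fin I.r) : ∑ i, I.χ X (L.Y i) * I.χ X (L.Y i)⁻¹ =
    ((p ^ a : ℕ) : ℂ) * ∑ j, (L.b I j X : ℂ) ^ 2 := by
  have : ∀ i, I.χ X (L.Y i) * I.χ X (L.Y i)⁻¹ =
      ∑ j, L.b I j X * (I.χ X (L.Y i) * ee (-(j * i))) := by
    intro i
    rw [← L.Y_neg, L.χ_Y I X (-i), Finset.mul_sum]
    refine Finset.sum_congr rfl fun j _ => ?_
    rw [mul_neg]; ring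
  simp only [this]
  rw [Finset.sum_comm]
  simp only [← Finset.mul_sum, ← L.b_spec]
  rw [Finset.mul_sum]
  refine Finset.sum_congr rfl fun j _ => ?_
  ring

/-- spectral decomposition: if only one `j` occurs then `y` is scalar. -/
theorem scalar_of_single (X : Fin I.r) (j0 : ZMod (p ^ a)) (h : ∀ j, j ≠ j0 → L.b I j X = 0) :
    I.ρ X L.y = ee j0 • 1 := by
  have hn : ((p ^ a : ℕ) : ℂ) ≠ 0 := by exact_mod_cast NeZero.ne (p ^ a)
  have hb : ∀ i, I.χ X (L.Y i) = L.b I j0 X * ee (j0 * i) := by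
    intro i
    rw [L.χ_Y, Finset.sum_eq_single j0 (fun j _ hj => by simp [h j hj]) (by simp)]
  have hd : L.b I j0 X = I.d X := by
    rw [← L.sum_b I X, Finset.sum_eq_single j0 (fun j _ hj => by simp [h j hj]) (by simp)]
  have h1 := trivial_of_trace (L.tw (I.ρ X) j0) (by
    intro i
    simp only [tw, MonoidHom.coe_mk, OneHom.coe_mk, Matrix.trace_smul, smul_eq_mul]
    have := hb i.toAdd
    simp only [IrrData.χ] at this
    rw [this, hd, mul_comm, mul_assoc, ← ee_add]
    simp [ee_zero]) (Multiplicative.ofAdd 1)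
  simp only [tw, MonoidHom.coe_mk, OneHom.coe_mk, toAdd_ofAdd, mul_one, L.Y_one] at h1
  rw [← h1, smul_smul, ← ee_add]
  simp [ee_zero]

end Cyc

namespace Loc
variable {G : Type*} [Group G] [Fintype G] {p a : ℕ} [Fact p.Prime] (L : Loc G p a)
set_option linter.unusedSectionVars false
variable [Fintype L.K] (I : IrrData G) (J : IrrData L.K)

/-- twisted restriction to `⟨y⟩ × K` -/
noncomputable def tw2 {n m : Type*} [Fintype n] [DecidableEq n] [Fintype m] [DecidableEq m]
    (σ : G →* Matrix n n ℂ) (τ : L.K →* Matrix m m ℂ)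
    (j : ZMod (p ^ a)) :
    Multiplicative (ZMod (p ^ a)) × L.K →* Matrix (n × m) (n × m) ℂ where
  toFun x := Matrix.kronecker (ee (-(j * x.1.toAdd)) • σ (L.Y x.1.toAdd * x.2)) (dualR τ x.2)
  map_one' := by simp [ee_zero, L.Y_zero, Matrix.kronecker]
  map_mul' x y := by
    simp only [Prod.fst_mul, Prod.snd_mul, toAdd_mul, map_mul (dualR τ)]
    simp only [Matrix.kronecker]
    rw [← Matrix.mul_kronecker_mul]
    congr 1
    rw [Matrix.smul_mul, Matrix.mul_smul, smul_smul, ← map_mul, L.Y_add, mul_add, neg_add, ee_add]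
    congr 2
    have := L.Y_comm x.2.2 y.1.toAdd
    unfold Commute SemiconjBy at this
    rw [Subgroup.coe_mul, mul_assoc, mul_assoc]
    congr 1
    rw [← mul_assoc, ← this, mul_assoc]

theorem exists_a (j : ZMod (p ^ a)) (κ : Fin J.r) (X : Fin I.r) : ∃ m : ℕ,
    ((p ^ a : ℕ) : ℂ) * Fintype.card L.K * m =
      ∑ i, ∑ k : L.K, I.χ X (L.Y i * k) * (ee (-(j * i)) * J.χ κ k⁻¹) := by
  obtain ⟨m, hm⟩ := avg_nat (L.tw2 (I.ρ X) (J.ρ κ) j)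
  refine ⟨m, ?_⟩
  rw [← hm, Fintype.card_prod, Fintype.card_multiplicative, ZMod.card, Nat.cast_mul,
    mul_inv_cancel_left₀]
  · rw [Fintype.sum_prod_type, ← Equiv.sum_comp Multiplicative.ofAdd]
    refine Finset.sum_congr rfl fun i _ => Finset.sum_congr rfl fun k _ => ?_
    simp only [tw2, MonoidHom.coe_mk, OneHom.coe_mk, Matrix.trace_kronecker, Matrix.trace_smul,
      IrrData.χ, toAdd_ofAdd, smul_eq_mul, trace_dualR, Matrix.kronecker]
    ring
  · apply mul_ne_zero
    · exact_mod_cast NeZero.ne (p ^ a)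
    · exact_mod_cast Fintype.card_ne_zero

/-- Multiplicity of `λ_j × κ` in the restriction of the `X`-th character. -/
noncomputable def am (j : ZMod (p ^ a)) (κ : Fin J.r) (X : Fin I.r) : ℕ :=
  (L.exists_a I J j κ X).choose

theorem a_spec (j : ZMod (p ^ a)) (κ : Fin J.r) (X : Fin I.r) :
    ((p ^ a : ℕ) : ℂ) * Fintype.card L.K * L.am I J j κ X =
      ∑ i, ∑ k : L.K, I.χ X (L.Y i * k) * (ee (-(j * i)) * J.χ κ k⁻¹) :=
  (L.exists_a I J j κ X).choose_spec

theorem inv_Yk (i : ZMod (p ^ a)) (k : L.K) : (L.Y i * (k : G))⁻¹ = L.Y (-i) * ((k⁻¹ : L.K) : G) := by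
  rw [mul_inv_rev, L.Y_neg, Subgroup.coe_inv]
  exact ((L.Y_comm k.2 i).inv_inv).eq

theorem a_spec' (j : ZMod (p ^ a)) (κ : Fin J.r) (X : Fin I.r) :
    ((p ^ a : ℕ) : ℂ) * Fintype.card L.K * L.am I J j κ X =
      ∑ i, ∑ k : L.K, I.χ X (L.Y i * k)⁻¹ * (ee (j * i) * J.χ κ k) := by
  rw [a_spec, ← Equiv.sum_comp (Equiv.neg (ZMod (p ^ a)))]
  refine Finset.sum_congr rfl fun i _ => ?_
  rw [← Equiv.sum_comp (Equiv.inv L.K)]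
  refine Finset.sum_congr rfl fun k _ => ?_
  rw [inv_Yk]
  simp

theorem card_ne : ((p ^ a : ℕ) : ℂ) * Fintype.card L.K ≠ 0 := by
  apply mul_ne_zero
  · exact_mod_cast NeZero.ne (p ^ a)
  · exact_mod_cast Fintype.card_ne_zero

theorem cardK_ne : (Fintype.card L.K : ℂ) ≠ 0 := by
  exact_mod_cast Fintype.card_ne_zero

theorem χ_Yk_κ (κ : Fin J.r) (X : Fin I.r) (i : ZMod (p ^ a)) :
    ∑ k : L.K, I.χ X (L.Y i * k) * J.χ κ k⁻¹ =
      Fintype.card L.K * ∑ j, L.am I J j κ X * ee (j * i) := by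
  have := fourier_inv (fun i => ∑ k : L.K, I.χ X (L.Y i * k) * J.χ κ k⁻¹)
    (fun j => Fintype.card L.K * (L.am I J j κ X : ℂ)) (fun j => by
      rw [← mul_assoc, a_spec]
      refine Finset.sum_congr rfl fun i _ => ?_
      rw [Finset.sum_mul]
      refine Finset.sum_congr rfl fun k _ => ?_
      ring) i
  rw [this, Finset.mul_sum]
  refine Finset.sum_congr rfl fun k _ => ?_
  ring

theorem χ_Yk (X : Fin I.r) (i : ZMod (p ^ a)) (k : L.K) :
    I.χ X (L.Y i * k) = ∑ κ, ∑ j, L.am I J j κ X * (ee (j * i) * J.χ κ k) := by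
  have h := J.expand (fun k => I.χ X (L.Y i * k)) (by
    intro g h
    have : L.Y i * ((h * g * h⁻¹ : L.K) : G) = (h : G) * (L.Y i * g) * (h : G)⁻¹ := by
      have := (L.Y_comm h.2 i).eq
      simp only [Subgroup.coe_mul, Subgroup.coe_inv, ← mul_assoc]
      rw [this]
    simp only [this]
    exact I.χ_conj _ _ _) k
  rw [h]
  refine Finset.sum_congr rfl fun κ _ => ?_
  rw [χ_Yk_κ, inv_mul_cancel_left₀ L.cardK_ne, Finset.sum_mul]
  refine Finset.sum_congr rfl fun j _ => ?_
  ring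

theorem b_eq (j : ZMod (p ^ a)) (X : Fin I.r) : L.b I j X = ∑ κ, L.am I J j κ X * J.d κ := by
  have hn : ((p ^ a : ℕ) : ℂ) ≠ 0 := by exact_mod_cast NeZero.ne (p ^ a)
  have h1 := L.b_spec I j X
  have h2 : ∀ i, I.χ X (L.Y i) * ee (-(j * i)) =
      ∑ κ, ∑ j', L.am I J j' κ X * J.d κ * (ee (j' * i) * ee (-(j * i))) := by
    intro i
    have := L.χ_Yk I J X i 1
    rw [Subgroup.coe_one, mul_one] at this
    rw [this, Finset.sum_mul]
    refine Finset.sum_congr rfl fun κ _ => ?_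
    rw [Finset.sum_mul]
    refine Finset.sum_congr rfl fun j' _ => ?_
    rw [J.χ_one]; ring
  simp only [h2] at h1
  rw [Finset.sum_comm] at h1
  have h3 : ∀ κ, ∑ i, ∑ j', (L.am I J j' κ X * J.d κ * (ee (j' * i) * ee (-(j * i))) : ℂ) =
      ((p ^ a : ℕ) : ℂ) * (L.am I J j κ X * J.d κ) := by
    intro κ
    rw [Finset.sum_comm]
    simp only [← Finset.mul_sum, ee_sum']
    simp [mul_comm]
  simp only [h3, ← Finset.mul_sum] at h1
  have h4 := mul_left_cancel₀ hn h1
  exact_mod_cast h4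

theorem parseval2 (X : Fin I.r) : ∑ i, ∑ k : L.K, I.χ X (L.Y i * k) * I.χ X (L.Y i * k)⁻¹ =
    ((p ^ a : ℕ) : ℂ) * Fintype.card L.K * ∑ κ, ∑ j, (L.am I J j κ X : ℂ) ^ 2 := by
  have : ∀ i (k : L.K), I.χ X (L.Y i * k) * I.χ X (L.Y i * k)⁻¹ =
      ∑ κ, ∑ j, L.am I J j κ X * (I.χ X (L.Y i * k)⁻¹ * (ee (j * i) * J.χ κ k)) := by
    intro i k
    conv_lhs => rw [L.χ_Yk I J X i k]
    rw [Finset.sum_mul]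
    refine Finset.sum_congr rfl fun κ _ => ?_
    rw [Finset.sum_mul]
    refine Finset.sum_congr rfl fun j _ => ?_
    ring
  simp only [this]
  have h2 : ∀ κ j, ((p ^ a : ℕ) : ℂ) * Fintype.card L.K * (L.am I J j κ X : ℂ) ^ 2 =
      ∑ i, ∑ k : L.K, L.am I J j κ X * (I.χ X (L.Y i * k)⁻¹ * (ee (j * i) * J.χ κ k)) := by
    intro κ j
    simp only [← Finset.mul_sum]
    rw [← a_spec']; ring
  simp only [Finset.mul_sum, h2]
  have e1 : ∀ i, ∑ k : L.K, ∑ κ, ∑ j, (L.am I J j κ X * (I.χ X (L.Y i * k)⁻¹ * (ee (j * i) * J.χ κ k)) : ℂ)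
     = ∑ κ, ∑ j, ∑ k : L.K, (L.am I J j κ X * (I.χ X (L.Y i * k)⁻¹ * (ee (j * i) * J.χ κ k)) : ℂ) := by
    intro i
    rw [Finset.sum_comm]
    refine Finset.sum_congr rfl fun κ _ => ?_
    rw [Finset.sum_comm]
  simp only [e1]
  rw [Finset.sum_comm]
  refine Finset.sum_congr rfl fun κ _ => ?_
  rw [Finset.sum_comm]

end Loc


namespace Loc
variable {G : Type*} [Group G] [Fintype G] {p a : ℕ} [Fact p.Prime] (L : Loc G p a)
set_option linter.unusedSectionVars false
variable [Fintype L.K] (I : IrrData G) (J : IrrData L.K)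

/-- difference of multiplicities -/
noncomputable def uv (j j' : ZMod (p ^ a)) (κ : Fin J.r) (X : Fin I.r) : ℤ :=
  (L.am I J j κ X : ℤ) - L.am I J j' κ X

theorem uv_spec (j j' : ZMod (p ^ a)) (κ : Fin J.r) (X : Fin I.r) :
    ((p ^ a : ℕ) : ℂ) * Fintype.card L.K * L.uv I J j j' κ X =
      ∑ i, ∑ k : L.K, I.χ X (L.Y i * k) * ((ee (-(j * i)) - ee (-(j' * i))) * J.χ κ k⁻¹) := by
  unfold uv
  rw [Int.cast_sub, Int.cast_natCast, Int.cast_natCast, mul_sub, a_spec, a_spec, ← Finset.sum_sub_distrib]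
  refine Finset.sum_congr rfl fun i _ => ?_
  rw [← Finset.sum_sub_distrib]
  refine Finset.sum_congr rfl fun i _ => ?_
  ring

theorem uv_spec' (j j' : ZMod (p ^ a)) (κ : Fin J.r) (X : Fin I.r) :
    ((p ^ a : ℕ) : ℂ) * Fintype.card L.K * L.uv I J j j' κ X =
      ∑ i, ∑ k : L.K, I.χ X (L.Y i * k)⁻¹ * ((ee (j * i) - ee (j' * i)) * J.χ κ k) := by
  unfold uv
  rw [Int.cast_sub, Int.cast_natCast, Int.cast_natCast, mul_sub, a_spec', a_spec', ← Finset.sum_sub_distrib]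
  refine Finset.sum_congr rfl fun i _ => ?_
  rw [← Finset.sum_sub_distrib]
  refine Finset.sum_congr rfl fun i _ => ?_
  ring

open scoped Classical in
/-- The `K`-part of the key formula. -/
noncomputable def Bk (κ1 κ2 : Fin J.r) (g : G) : ℂ :=
  ∑ k : L.K, ∑ l : L.K, if (k : G) = g * l * g⁻¹ then J.χ κ1 k⁻¹ * J.χ κ2 l else 0

/-- The cyclic part of the key formula. -/
def dd (j1 j1' j2 j2' u : ZMod (p ^ a)) : ℤ :=
  (if j2 = u * j1 then 1 else 0) - (if j2 = u * j1' then 1 else 0)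
    - (if j2' = u * j1 then 1 else 0) + (if j2' = u * j1' then 1 else 0)

theorem nonunit_dvd {n : ℕ} {i : ZMod (p ^ n)} (hi : ¬ IsUnit i) : ∃ s, i = (p : ZMod (p ^ n)) * s := by
  obtain ⟨m, rfl⟩ := ZMod.natCast_zmod_surjective i
  rw [ZMod.isUnit_iff_coprime] at hi
  have hp : p.Prime := Fact.out
  have : p ∣ m := by
    by_contra h
    exact hi ((Nat.Coprime.pow_left n ((Nat.Prime.coprime_iff_not_dvd hp).mpr h)).symm)
  obtain ⟨s, rfl⟩ := this
  exact ⟨s, by push_cast; rfl⟩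

open scoped Classical in
theorem key_g (j1 j1' j2 j2' : ZMod (p ^ a)) (κ1 κ2 : Fin J.r)
    (h : (p : ZMod (p ^ a)) * j2 = p * j2') (g : G) :
    (∑ i, ∑ k : L.K, ∑ i', ∑ l : L.K, if L.Y i * k * g = g * (L.Y i' * l) then
      ((ee (-(j1 * i)) - ee (-(j1' * i))) * J.χ κ1 k⁻¹) *
      ((ee (j2 * i') - ee (j2' * i')) * J.χ κ2 l) else 0) =
    ((p ^ a : ℕ) : ℂ) * ∑ u, if L.Nm g u then (dd j1 j1' j2 j2' u : ℂ) * L.Bk J κ1 κ2 g else 0 := by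
  by_cases hg : ∃ u, L.Nm g u
  · obtain ⟨u, hu⟩ := hg
    rw [Finset.sum_eq_single u (fun v _ hv => if_neg fun h' => hv (h'.unique hu)) (by simp),
      if_pos hu]
    have hD : ∑ i', (ee (-(j1 * (u * i'))) - ee (-(j1' * (u * i')))) *
        (ee (j2 * i') - ee (j2' * i')) = ((p ^ a : ℕ) : ℂ) * (dd j1 j1' j2 j2' u : ℂ) := by
      have e1 : ∀ i', (ee (-(j1 * (u * i'))) - ee (-(j1' * (u * i')))) *
          (ee (j2 * i') - ee (j2' * i')) = ee (j2 * i') * ee (-(u * j1 * i'))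
            - ee (j2 * i') * ee (-(u * j1' * i')) - ee (j2' * i') * ee (-(u * j1 * i'))
            + ee (j2' * i') * ee (-(u * j1' * i')) := by
        intro i'
        rw [show j1 * (u * i') = u * j1 * i' by ring, show j1' * (u * i') = u * j1' * i' by ring]
        ring
      simp only [e1, Finset.sum_add_distrib, Finset.sum_sub_distrib, ee_sum', dd]
      push_cast
      simp only [mul_add, mul_sub, mul_ite, mul_one, mul_zero]
    rw [← mul_assoc, ← hD]
    have e2 : ∀ (i : ZMod (p ^ a)) (k : L.K) (i' : ZMod (p ^ a)) (l : L.K),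
        (if L.Y i * k * g = g * (L.Y i' * l) then
          ((ee (-(j1 * i)) - ee (-(j1' * i))) * J.χ κ1 k⁻¹) *
          ((ee (j2 * i') - ee (j2' * i')) * J.χ κ2 l) else 0) =
        (if i = u * i' then (ee (-(j1 * i)) - ee (-(j1' * i))) * (ee (j2 * i') - ee (j2' * i'))
          else 0) * (if (k : G) = g * l * g⁻¹ then J.χ κ1 k⁻¹ * J.χ κ2 l else 0) := by
      intro i k i' l
      rw [ite_zero_mul_ite_zero]
      simp only [hu.solve_iff k.2 l.2]
      split_ifs
      · ring
      · rfl
    simp only [e2, ← Finset.mul_sum, ← Finset.sum_mul]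
    congr 1
    rw [Finset.sum_comm]
    refine Finset.sum_congr rfl fun i' _ => ?_
    rw [Finset.sum_ite_eq' Finset.univ, if_pos (Finset.mem_univ _)]
  · have h0 : ∀ u, ¬ L.Nm g u := fun u hu => hg ⟨u, hu⟩
    simp only [h0, if_false, Finset.sum_const_zero, mul_zero]
    refine Finset.sum_eq_zero fun i _ => Finset.sum_eq_zero fun k _ =>
      Finset.sum_eq_zero fun i' _ => Finset.sum_eq_zero fun l _ => ?_
    by_cases hi : IsUnit i'
    · rw [if_neg]
      intro h1
      exact hg (L.conj_solve_unit hi (L.conj_solve k.2 l.2 h1))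
    · obtain ⟨s, rfl⟩ := nonunit_dvd hi
      have : j2 * (p * s) = j2' * (p * s) := by
        rw [← mul_assoc, ← mul_assoc, mul_comm j2, mul_comm j2', h]
      rw [this, sub_self, zero_mul, mul_zero, ite_self]

open scoped Classical in
theorem key (j1 j1' j2 j2' : ZMod (p ^ a)) (κ1 κ2 : Fin J.r)
    (h : (p : ZMod (p ^ a)) * j2 = p * j2') :
    (((p ^ a : ℕ) : ℂ) * Fintype.card L.K) ^ 2 *
      ∑ X, (L.uv I J j1 j1' κ1 X : ℂ) * L.uv I J j2 j2' κ2 X =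
    ((p ^ a : ℕ) : ℂ) * ∑ g, ∑ u, if L.Nm g u then
      (dd j1 j1' j2 j2' u : ℂ) * L.Bk J κ1 κ2 g else 0 := by
  rw [Finset.mul_sum Finset.univ _ ((p ^ a : ℕ) : ℂ)]
  simp only [← L.key_g J j1 j1' j2 j2' κ1 κ2 h]
  have h1 : ∀ X, (((p ^ a : ℕ) : ℂ) * Fintype.card L.K) ^ 2 *
      ((L.uv I J j1 j1' κ1 X : ℂ) * L.uv I J j2 j2' κ2 X) =
      ∑ x : ZMod (p ^ a) × L.K, ∑ z : ZMod (p ^ a) × L.K,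
        (I.χ X (L.Y x.1 * x.2) * I.χ X (L.Y z.1 * z.2)⁻¹) *
        (((ee (-(j1 * x.1)) - ee (-(j1' * x.1))) * J.χ κ1 x.2⁻¹) *
        ((ee (j2 * z.1) - ee (j2' * z.1)) * J.χ κ2 z.2)) := by
    intro X
    rw [show (((p ^ a : ℕ) : ℂ) * Fintype.card L.K) ^ 2 *
      ((L.uv I J j1 j1' κ1 X : ℂ) * L.uv I J j2 j2' κ2 X) =
      (((p ^ a : ℕ) : ℂ) * Fintype.card L.K * L.uv I J j1 j1' κ1 X) *
      (((p ^ a : ℕ) : ℂ) * Fintype.card L.K * L.uv I J j2 j2' κ2 X) by ring]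
    rw [uv_spec, uv_spec', ← Fintype.sum_prod_type', ← Fintype.sum_prod_type', Finset.sum_mul_sum]
    refine Finset.sum_congr rfl fun x _ => Finset.sum_congr rfl fun z _ => ?_
    ring
  have h2 : ∀ (x z : ZMod (p ^ a) × L.K),
      ∑ X, I.χ X (L.Y x.1 * x.2) * I.χ X (L.Y z.1 * z.2)⁻¹ =
      ∑ g, if L.Y x.1 * x.2 * g = g * (L.Y z.1 * z.2) then 1 else 0 := by
    intro x z
    simp only [IrrData.χ]
    rw [I.col, Finset.card_filter]
    push_cast
    rfl
  rw [Finset.mul_sum]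
  simp only [h1]
  rw [Finset.sum_comm]
  have h3 : ∀ (x z : ZMod (p ^ a) × L.K), ∑ X, (I.χ X (L.Y x.1 * x.2) * I.χ X (L.Y z.1 * z.2)⁻¹) *
        (((ee (-(j1 * x.1)) - ee (-(j1' * x.1))) * J.χ κ1 x.2⁻¹) *
        ((ee (j2 * z.1) - ee (j2' * z.1)) * J.χ κ2 z.2)) =
      ∑ g, if L.Y x.1 * x.2 * g = g * (L.Y z.1 * z.2) then
        (((ee (-(j1 * x.1)) - ee (-(j1' * x.1))) * J.χ κ1 x.2⁻¹) *
        ((ee (j2 * z.1) - ee (j2' * z.1)) * J.χ κ2 z.2)) else 0 := by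
    intro x z
    rw [← Finset.sum_mul, h2, Finset.sum_mul]
    refine Finset.sum_congr rfl fun g _ => ?_
    split_ifs <;> simp
  have h4 : ∀ x : ZMod (p ^ a) × L.K, ∑ X, ∑ z : ZMod (p ^ a) × L.K,
        (I.χ X (L.Y x.1 * x.2) * I.χ X (L.Y z.1 * z.2)⁻¹) *
        (((ee (-(j1 * x.1)) - ee (-(j1' * x.1))) * J.χ κ1 x.2⁻¹) *
        ((ee (j2 * z.1) - ee (j2' * z.1)) * J.χ κ2 z.2)) =
      ∑ g, ∑ z : ZMod (p ^ a) × L.K, if L.Y x.1 * x.2 * g = g * (L.Y z.1 * z.2) then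
        (((ee (-(j1 * x.1)) - ee (-(j1' * x.1))) * J.χ κ1 x.2⁻¹) *
        ((ee (j2 * z.1) - ee (j2' * z.1)) * J.χ κ2 z.2)) else 0 := by
    intro x
    rw [Finset.sum_comm]
    simp only [h3]
    rw [Finset.sum_comm]
  simp only [h4]
  rw [Finset.sum_comm]
  refine Finset.sum_congr rfl fun g _ => ?_
  simp only [Fintype.sum_prod_type]

end Loc


theorem norm_two_form {ι : Type*} [Fintype ι] [DecidableEq ι] (u : ι → ℤ) (d : ι → ℕ)
    (hd : ∀ i, 0 < d i) (h2 : ∑ i, u i * u i = 2) (h0 : ∑ i, u i * d i = 0) (ψ : ι)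
    (hψ : 1 ≤ u ψ) : ∃ X', X' ≠ ψ ∧ u = Pi.single ψ 1 - Pi.single X' 1 := by
  have hX : ∃ X', u X' < 0 := by
    by_contra! hc
    have : 0 < ∑ i, u i * d i := by
      refine Finset.sum_pos' (fun i _ => mul_nonneg (hc i) (by positivity)) ⟨ψ, Finset.mem_univ _, ?_⟩
      have := hd ψ
      positivity
    omega
  obtain ⟨X, hX⟩ := hX
  have hne : X ≠ ψ := by rintro rfl; omega
  refine ⟨X, hne, ?_⟩
  have e1 : ∑ i, u i * u i = u ψ * u ψ + ∑ i ∈ Finset.univ.erase ψ, u i * u i :=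
    (Finset.add_sum_erase _ _ (Finset.mem_univ ψ)).symm
  have e2 : ∑ i ∈ Finset.univ.erase ψ, u i * u i =
      u X * u X + ∑ i ∈ (Finset.univ.erase ψ).erase X, u i * u i :=
    (Finset.add_sum_erase _ (fun i => u i * u i)
      (Finset.mem_erase.mpr ⟨hne, Finset.mem_univ X⟩)).symm
  have e3 : 0 ≤ ∑ i ∈ (Finset.univ.erase ψ).erase X, u i * u i :=
    Finset.sum_nonneg fun i _ => mul_self_nonneg _
  have h1 : u ψ = 1 := by nlinarith
  have h1' : u X = -1 := by nlinarith
  have e4 : ∑ i ∈ (Finset.univ.erase ψ).erase X, u i * u i = 0 := by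
    rw [h1] at e1; rw [h1'] at e2; omega
  rw [Finset.sum_eq_zero_iff_of_nonneg (fun i _ => mul_self_nonneg _)] at e4
  funext i
  by_cases hi : i = ψ
  · subst hi; simp [h1, hne.symm]
  · by_cases hi' : i = X
    · subst hi'; simp [h1', hne]
    · have := e4 i (by simp [hi, hi'])
      simp [hi, hi', mul_self_eq_zero.mp this]

theorem sum_mul_form {ι : Type*} [Fintype ι] [DecidableEq ι] (v : ι → ℤ) (ψ X : ι) :
    ∑ i, v i * (Pi.single ψ 1 - Pi.single X 1 : ι → ℤ) i = v ψ - v X := by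
  simp [mul_sub, Finset.sum_sub_distrib, Pi.single_apply]

namespace Loc
variable {G : Type*} [Group G] [Fintype G] {p a : ℕ} [Fact p.Prime] (L : Loc G p a)
set_option linter.unusedSectionVars false
variable [Fintype L.K] (I : IrrData G) (J : IrrData L.K)

theorem pa_ne : ((p ^ a : ℕ) : ℂ) ≠ 0 := by exact_mod_cast NeZero.ne (p ^ a)

theorem orth (j1 j1' j2 j2' : ZMod (p ^ a)) (κ1 κ2 : Fin J.r)
    (h : (p : ZMod (p ^ a)) * j2 = p * j2')
    (hc : ∀ g u, L.Nm g u → j2 ≠ u * j1 ∧ j2 ≠ u * j1' ∧ j2' ≠ u * j1 ∧ j2' ≠ u * j1') :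
    ∑ X, L.uv I J j1 j1' κ1 X * L.uv I J j2 j2' κ2 X = 0 := by
  classical
  have hk := L.key I J j1 j1' j2 j2' κ1 κ2 h
  rw [Finset.sum_eq_zero (s := Finset.univ) (f := fun g => ∑ u, if L.Nm g u then
      (dd j1 j1' j2 j2' u : ℂ) * L.Bk J κ1 κ2 g else 0), mul_zero] at hk
  · have h1 := (mul_eq_zero.mp hk).resolve_left (pow_ne_zero 2 L.card_ne)
    exact_mod_cast h1
  · intro g _
    refine Finset.sum_eq_zero fun u _ => ?_
    split_ifs with hu
    · obtain ⟨c1, c2, c3, c4⟩ := hc g u hu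
      simp [dd, c1, c2, c3, c4]
    · rfl

theorem nm_one_iff (g : G) : L.Nm g 1 ↔ ∃ x : ZMod (p ^ a) × L.K, L.Y x.1 * x.2 = g := by
  constructor
  · intro h
    have h' : Commute g L.y := by
      have : g * L.y * g⁻¹ = L.y := by
        have h' : g * L.y * g⁻¹ = L.Y 1 := h
        rwa [Cyc.Y_one] at h'
      exact mul_inv_eq_iff_eq_mul.mp this
    obtain ⟨i, k, hk, rfl⟩ := L.hC g h'
    exact ⟨(i, ⟨k, hk⟩), by simp [Cyc.Y_nat]⟩
  · rintro ⟨⟨i, k⟩, rfl⟩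
    have h1 : Commute (L.Y i * (k : G)) L.y := by
      refine Commute.mul_left ?_ (L.hKy k k.2)
      rw [Cyc.Y]
      exact (Commute.refl L.y).pow_left _
    change _ = _
    rw [Cyc.Y_one]
    exact mul_inv_eq_iff_eq_mul.mpr h1

open scoped Classical in
theorem card_nm_one : (Finset.univ.filter (fun g => L.Nm g 1)).card = p ^ a * Fintype.card L.K := by
  have : Finset.univ.filter (fun g => L.Nm g 1) =
      Finset.univ.image (fun x : ZMod (p ^ a) × L.K => L.Y x.1 * (x.2 : G)) := by
    ext g; simp [nm_one_iff]
  rw [this, Finset.card_image_of_injective]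
  · simp [ZMod.card]
  · rintro ⟨i, k⟩ ⟨j, l⟩ h
    obtain ⟨h1, h2⟩ := L.decomp_unique k.2 l.2 h
    simp only [Prod.mk.injEq]
    exact ⟨h1, Subtype.ext h2⟩

theorem Bk_one (κ : Fin J.r) (g : G) (hg : L.Nm g 1) : L.Bk J κ κ g = Fintype.card L.K := by
  classical
  obtain ⟨⟨i, k0⟩, rfl⟩ := (L.nm_one_iff g).mp hg
  have h1 : ∀ l : L.K, L.Y i * (k0 : G) * l * (L.Y i * (k0 : G))⁻¹ = ((k0 * l * k0⁻¹ : L.K) : G) := by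
    intro l
    have := (L.Y_comm (k0 * l * k0⁻¹ : L.K).2 i).eq
    push_cast at this ⊢
    rw [mul_inv_rev, ← mul_assoc, mul_inv_eq_iff_eq_mul, this]
    group
  unfold Bk
  simp only [h1, SetLike.coe_eq_coe]
  rw [Finset.sum_comm]
  simp only [Finset.sum_ite_eq', Finset.mem_univ, if_true]
  rw [← J.row_self κ]
  refine Finset.sum_congr rfl fun l _ => ?_
  rw [show (k0 * l * k0⁻¹)⁻¹ = k0 * l⁻¹ * k0⁻¹ by group, J.χ_conj, mul_comm]

theorem Bk_triv (κ : Fin J.r) (hκ : ∀ k, J.χ κ k = 1) (g : G) (u) (hg : L.Nm g u) :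
    L.Bk J κ κ g = Fintype.card L.K := by
  classical
  unfold Bk
  simp only [hκ, mul_one]
  rw [Finset.sum_comm]
  have : ∀ l : L.K, (∑ k : L.K, if (k : G) = g * l * g⁻¹ then (1 : ℂ) else 0) = 1 := by
    intro l
    rw [Finset.sum_eq_single ⟨g * l * g⁻¹, hg.conj_mem l.2⟩ (fun k _ hk => if_neg fun h => hk (Subtype.ext h))
      (by simp)]
    simp
  simp [this]

theorem inner_same (j1 j1' j2 j2' : ZMod (p ^ a)) (κ : Fin J.r) (c : ℤ)
    (h : (p : ZMod (p ^ a)) * j2 = p * j2')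
    (hc : ∀ g u, L.Nm g u → dd j1 j1' j2 j2' u = if u = 1 then c else 0) :
    ∑ X, L.uv I J j1 j1' κ X * L.uv I J j2 j2' κ X = c := by
  classical
  have hk := L.key I J j1 j1' j2 j2' κ κ h
  have h1 : ∀ g, (∑ u, if L.Nm g u then (dd j1 j1' j2 j2' u : ℂ) * L.Bk J κ κ g else 0) =
      if L.Nm g 1 then (c : ℂ) * Fintype.card L.K else 0 := by
    intro g
    rw [Finset.sum_eq_single 1]
    · split_ifs with hg
      · rw [hc g 1 hg, if_pos rfl, L.Bk_one J κ g hg]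
      · rfl
    · intro u _ hu
      split_ifs with hg
      · rw [hc g u hg, if_neg hu]; simp
      · rfl
    · simp
  simp only [h1] at hk
  rw [← Finset.sum_filter, Finset.sum_const, card_nm_one, nsmul_eq_mul] at hk
  have h2 : (((p ^ a : ℕ) : ℂ) * Fintype.card L.K) ^ 2 *
      ∑ X, (L.uv I J j1 j1' κ X : ℂ) * L.uv I J j2 j2' κ X =
      (((p ^ a : ℕ) : ℂ) * Fintype.card L.K) ^ 2 * c := by
    rw [hk]; push_cast; ring
  have := mul_left_cancel₀ (pow_ne_zero 2 L.card_ne) h2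
  exact_mod_cast this

open scoped Classical in
theorem inner_triv (j1 j1' j2 j2' : ZMod (p ^ a)) (κ : Fin J.r) (hκ : ∀ k, J.χ κ k = 1)
    (h : (p : ZMod (p ^ a)) * j2 = p * j2')
    (hc : ∀ g u, L.Nm g u → dd j1 j1' j2 j2' u = 1 + if u = 1 then 1 else 0) (e : ℕ)
    (he : (Finset.univ.filter (fun g => ∃ u, L.Nm g u)).card = e * (p ^ a * Fintype.card L.K)) :
    ∑ X, L.uv I J j1 j1' κ X * L.uv I J j2 j2' κ X = e + 1 := by
  have hk := L.key I J j1 j1' j2 j2' κ κ h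
  have h1 : ∀ g, (∑ u, if L.Nm g u then (dd j1 j1' j2 j2' u : ℂ) * L.Bk J κ κ g else 0) =
      (if ∃ u, L.Nm g u then (Fintype.card L.K : ℂ) else 0) +
      if L.Nm g 1 then (Fintype.card L.K : ℂ) else 0 := by
    intro g
    by_cases hg : ∃ u, L.Nm g u
    · obtain ⟨u, hu⟩ := hg
      rw [Finset.sum_eq_single u (fun v _ hv => if_neg fun h' => hv (h'.unique hu)) (by simp),
        if_pos hu, if_pos ⟨u, hu⟩, hc g u hu, L.Bk_triv J κ hκ g u hu]
      by_cases h1 : u = 1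
      · subst h1; simp [hu]; ring
      · have : ¬ L.Nm g 1 := fun h' => h1 (hu.unique h')
        simp [h1, this]
    · have h0 : ∀ u, ¬ L.Nm g u := fun u hu => hg ⟨u, hu⟩
      simp [h0]
  simp only [h1] at hk
  rw [Finset.sum_add_distrib, ← Finset.sum_filter, ← Finset.sum_filter, Finset.sum_const,
    Finset.sum_const, card_nm_one, he, nsmul_eq_mul, nsmul_eq_mul] at hk
  have h2 : (((p ^ a : ℕ) : ℂ) * Fintype.card L.K) ^ 2 *
      ∑ X, (L.uv I J j1 j1' κ X : ℂ) * L.uv I J j2 j2' κ X =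
      (((p ^ a : ℕ) : ℂ) * Fintype.card L.K) ^ 2 * (e + 1) := by
    rw [hk]; push_cast; ring
  have := mul_left_cancel₀ (pow_ne_zero 2 L.card_ne) h2
  exact_mod_cast this

theorem sum_am_d (j : ZMod (p ^ a)) (κ : Fin J.r) :
    ((p ^ a : ℕ) : ℂ) * Fintype.card L.K * ∑ X, (L.am I J j κ X : ℂ) * I.d X =
      Fintype.card G * J.d κ := by
  classical
  have h1 : ∀ X, ((p ^ a : ℕ) : ℂ) * Fintype.card L.K * ((L.am I J j κ X : ℂ) * I.d X) =
      ∑ i, ∑ k : L.K, (I.χ X (L.Y i * k) * I.χ X 1⁻¹) * (ee (-(j * i)) * J.χ κ k⁻¹) := by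
    intro X
    rw [← mul_assoc, a_spec, Finset.sum_mul]
    refine Finset.sum_congr rfl fun i _ => ?_
    rw [Finset.sum_mul]
    refine Finset.sum_congr rfl fun k _ => ?_
    rw [inv_one, I.χ_one]; ring
  rw [Finset.mul_sum]
  simp only [h1]
  rw [Finset.sum_comm]
  have h2 : ∀ (i : ZMod (p ^ a)) (k : L.K), ∑ X, I.χ X (L.Y i * k) * I.χ X 1⁻¹ =
      if i = 0 then (if k = 1 then (Fintype.card G : ℂ) else 0) else 0 := by
    intro i k
    simp only [IrrData.χ]
    rw [I.col]
    simp only [mul_one, mul_eq_right]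
    by_cases h : i = 0 ∧ k = 1
    · obtain ⟨rfl, rfl⟩ := h
      simp [Cyc.Y_zero]
    · have h' : ¬ L.Y i * (k : G) = 1 := by
        intro h'
        apply h
        have : L.Y i * (k : G) = L.Y 0 * ((1 : L.K) : G) := by simp [Cyc.Y_zero, h']
        obtain ⟨a1, a2⟩ := L.decomp_unique k.2 (1 : L.K).2 this
        exact ⟨a1, Subtype.ext a2⟩
      simp only [h']
      rw [← ite_and, if_neg h]; simp
  have h3 : ∀ i, ∑ X, ∑ k : L.K, (I.χ X (L.Y i * k) * I.χ X 1⁻¹) * (ee (-(j * i)) * J.χ κ k⁻¹) =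
      if i = 0 then (Fintype.card G * J.d κ : ℂ) else 0 := by
    intro i
    rw [Finset.sum_comm]
    simp only [← Finset.sum_mul, h2]
    split_ifs with h
    · subst h
      simp [ee_zero, J.χ_one]
    · simp
  simp only [h3]
  simp

theorem sum_uv_d (j j' : ZMod (p ^ a)) (κ : Fin J.r) :
    ∑ X, L.uv I J j j' κ X * (I.d X : ℤ) = 0 := by
  have h1 := (L.sum_am_d I J j κ).trans (L.sum_am_d I J j' κ).symm
  have h2 := mul_left_cancel₀ L.card_ne h1
  have h3 : ∑ X, L.am I J j κ X * I.d X = ∑ X, L.am I J j' κ X * I.d X := by exact_mod_cast h2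
  unfold uv
  simp only [sub_mul, Finset.sum_sub_distrib]
  rw [sub_eq_zero]
  exact_mod_cast h3

/-- `j` and `j'` are not conjugate. -/
def NC (j j' : ZMod (p ^ a)) : Prop := ∀ g u, L.Nm g u → j' ≠ u * j

theorem NC.symm {L : Loc G p a} {j j' : ZMod (p ^ a)} (h : L.NC j j') : L.NC j' j := by
  intro g u hu hj
  obtain ⟨v, hv, hvu⟩ := hu.inv
  refine h _ v hv ?_
  rw [hj, ← mul_assoc, hvu, one_mul]

/-- trivial stabilizer -/
def Fr (j : ZMod (p ^ a)) : Prop := ∀ g u, L.Nm g u → u * j = j → u = 1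

/-- norm 2 -/
theorem diff_form {j1 j0 : ZMod (p ^ a)} (h : (p : ZMod (p ^ a)) * j1 = p * j0) (hn : L.NC j1 j0)
    (h1 : L.Fr j1) (h0 : L.Fr j0) (κ : Fin J.r) (ψ : Fin I.r) (hψ : 1 ≤ L.uv I J j1 j0 κ ψ) :
    ∃ X', X' ≠ ψ ∧ L.uv I J j1 j0 κ = Pi.single ψ 1 - Pi.single X' 1 := by
  refine norm_two_form _ I.d I.pos ?_ (L.sum_uv_d I J j1 j0 κ) ψ hψ
  refine L.inner_same I J j1 j0 j1 j0 κ 2 h ?_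
  intro g u hu
  unfold dd
  rw [if_neg (hn.symm g u hu), if_neg (hn g u hu)]
  by_cases h : u = 1
  · subst h; simp
  · rw [if_neg (fun h' => h (h1 g u hu h'.symm)), if_neg (fun h' => h (h0 g u hu h'.symm)), if_neg h]
    rfl

theorem am_zero_of_b {j : ZMod (p ^ a)} {X : Fin I.r} (h : L.b I j X = 0) (κ : Fin J.r) :
    L.am I J j κ X = 0 := by
  rw [L.b_eq I J, Finset.sum_eq_zero_iff] at h
  have := h κ (Finset.mem_univ _)
  rcases Nat.mul_eq_zero.mp this with h | h
  · exact h
  · exact absurd h (J.pos κ).ne'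

theorem am_pos_of_b {j : ZMod (p ^ a)} {X : Fin I.r} (h : L.b I j X ≠ 0) :
    ∃ κ : Fin J.r, 1 ≤ L.am I J j κ X := by
  by_contra! hc
  apply h
  rw [L.b_eq I J]
  refine Finset.sum_eq_zero fun κ _ => ?_
  have := hc κ
  rw [show L.am I J j κ X = 0 by omega, zero_mul]

/-- Single class lemma. -/
theorem single_class (ψ : Fin I.r) {j1 j0 j2 j3 : ZMod (p ^ a)}
    (h1 : L.b I j1 ψ ≠ 0) (h0 : L.b I j0 ψ = 0) (h2 : L.b I j2 ψ ≠ 0) (h3 : L.b I j3 ψ = 0)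
    (hp1 : (p : ZMod (p ^ a)) * j1 = p * j0) (hp2 : (p : ZMod (p ^ a)) * j2 = p * j3)
    (n10 : L.NC j1 j0) (n12 : L.NC j1 j2) (n13 : L.NC j1 j3) (n02 : L.NC j0 j2) (n03 : L.NC j0 j3)
    (n23 : L.NC j2 j3) (f0 : L.Fr j0) (f1 : L.Fr j1) (f2 : L.Fr j2) (f3 : L.Fr j3) : False := by
  classical
  obtain ⟨J⟩ := exists_irrData L.K
  obtain ⟨κ1, hκ1⟩ := L.am_pos_of_b I J h1
  obtain ⟨κ2, hκ2⟩ := L.am_pos_of_b I J h2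
  obtain ⟨X1, hX1, e1⟩ := L.diff_form I J hp1 n10 f1 f0 κ1 ψ (by
    unfold uv; rw [L.am_zero_of_b I J h0]; push_cast; omega)
  obtain ⟨X2, hX2, e2⟩ := L.diff_form I J hp2 n23 f2 f3 κ2 ψ (by
    unfold uv; rw [L.am_zero_of_b I J h3]; push_cast; omega)
  have ho := L.orth I J j1 j0 j2 j3 κ1 κ2 hp2 (fun g u hu =>
    ⟨n12 g u hu, n02 g u hu, n13 g u hu, n03 g u hu⟩)
  rw [e2, sum_mul_form, e1] at ho
  simp [hX1.symm, Pi.single_apply, hX2] at ho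
  split_ifs at ho <;> omega

end Loc


theorem ito_fact1 {Q : Type*} [Group Q] [Fintype Q] {p : ℕ} [hp : Fact p.Prime] (hQ : IsPGroup p Q)
    {n : ℕ} (hn : n < p) (σ : Q →* Matrix (Fin n) (Fin n) ℂ) (hσ : Function.Injective σ) (x y : Q) :
    Commute x y := by
  obtain ⟨I⟩ := exists_irrData Q
  -- elements whose commutators are central are central
  have key : ∀ z : Q, (∀ q, z * q * z⁻¹ * q⁻¹ ∈ Subgroup.center Q) → z ∈ Subgroup.center Q := by
    intro z hz
    rw [Subgroup.mem_center_iff]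
    intro q
    have hc : σ (z * q * z⁻¹ * q⁻¹) = 1 := by
      refine I.constituent σ _ fun i hi => ?_
      obtain ⟨c, hc⟩ := I.schur i (I.ρ i (z * q * z⁻¹ * q⁻¹)) (fun g => by
        rw [← map_mul, ← map_mul, (Subgroup.mem_center_iff.mp (hz q) g)])
      have : Nonempty (Fin (I.d i)) := ⟨⟨0, I.pos i⟩⟩
      have h1 : c ^ (I.d i) = 1 := by
        have := congrArg Matrix.det hc
        rw [Matrix.det_smul, Matrix.det_one, mul_one, Fintype.card_fin] at this
        rw [← this]
        have e : ((Matrix.detMonoidHom).comp (I.ρ i)) (z * q * z⁻¹ * q⁻¹) = 1 := by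
          have hz' : ((Matrix.detMonoidHom).comp (I.ρ i)) z *
            ((Matrix.detMonoidHom).comp (I.ρ i)) z⁻¹ = 1 := by rw [← map_mul]; simp
          have hq' : ((Matrix.detMonoidHom).comp (I.ρ i)) q *
            ((Matrix.detMonoidHom).comp (I.ρ i)) q⁻¹ = 1 := by rw [← map_mul]; simp
          simp only [map_mul] at hz' hq' ⊢
          linear_combination hz' * (((Matrix.detMonoidHom).comp (I.ρ i)) q *
            ((Matrix.detMonoidHom).comp (I.ρ i)) q⁻¹) + hq'
        exact e
      have h2 : c ^ (Fintype.card Q) = 1 := by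
        have e : (I.ρ i (z * q * z⁻¹ * q⁻¹)) ^ (Fintype.card Q) = 1 := by
          rw [← map_pow, pow_card_eq_one, map_one]
        rw [hc, smul_pow, one_pow] at e
        have := congrFun (congrFun e ⟨0, I.pos i⟩) ⟨0, I.pos i⟩
        simpa using this
      have h3 : c = 1 := by
        obtain ⟨m, hm⟩ := IsPGroup.iff_card.mp hQ
        rw [← Nat.card_eq_fintype_card, hm] at h2
        have hg : c ^ (Nat.gcd (I.d i) (p ^ m)) = 1 := pow_gcd_eq_one.mpr ⟨h1, h2⟩
        have hco : Nat.gcd (I.d i) (p ^ m) = 1 := by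
          apply Nat.Coprime.pow_right
          rw [Nat.coprime_comm, Nat.Prime.coprime_iff_not_dvd hp.out]
          intro hd
          have := Nat.le_of_dvd (I.pos i) hd
          omega
        rwa [hco, pow_one] at hg
      rw [hc, h3, one_smul]
    have h1 : z * q * z⁻¹ * q⁻¹ = 1 := hσ (by rw [hc, map_one])
    rw [mul_inv_eq_one, mul_inv_eq_iff_eq_mul] at h1
    exact h1.symm
  by_contra hxy
  have hne : Nontrivial (Q ⧸ Subgroup.center Q) := by
    refine ⟨⟨QuotientGroup.mk x, 1, fun h => hxy ?_⟩⟩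
    rw [QuotientGroup.eq_one_iff, Subgroup.mem_center_iff] at h
    exact (h y).symm
  have := (hQ.to_quotient (Subgroup.center Q)).center_nontrivial
  obtain ⟨⟨zb, hzb⟩, hz1⟩ := exists_ne (1 : Subgroup.center (Q ⧸ Subgroup.center Q))
  obtain ⟨z, rfl⟩ := QuotientGroup.mk_surjective zb
  apply hz1
  have : z ∈ Subgroup.center Q := by
    apply key
    intro q
    rw [← QuotientGroup.eq_one_iff]
    have := Subgroup.mem_center_iff.mp hzb (QuotientGroup.mk q)
    simp only [QuotientGroup.mk_mul, QuotientGroup.mk_inv]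
    rw [← this]; group
  exact Subtype.ext ((QuotientGroup.eq_one_iff z).mpr this)

theorem missing_two {G : Type*} [Group G] [Fintype G] {p a : ℕ} [hp : Fact p.Prime] (L : Cyc G p (a + 1))
    (I : IrrData G) (X : Fin I.r) (hX : I.d X < p - 1) (j m0 : ZMod (p ^ (a + 1))) :
    ∃ m, m ≠ m0 ∧ (p : ZMod (p ^ (a + 1))) * j = p * m ∧ L.b I m X = 0 := by
  classical
  by_contra! hc
  let T : Finset (ZMod (p ^ (a + 1))) := Finset.univ.image
    (fun t : Fin p => j + ((p ^ a * t : ℕ) : ZMod (p ^ (a + 1))))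
  have hT : T.card = p := by
    rw [Finset.card_image_of_injective, Finset.card_univ, Fintype.card_fin]
    intro t s h
    simp only [add_right_inj] at h
    rw [ZMod.natCast_eq_natCast_iff] at h
    have hpp := hp.out.pos
    have e : ∀ t : Fin p, p ^ a * (t : ℕ) < p ^ (a + 1) := fun t => by
      rw [pow_succ]; exact Nat.mul_lt_mul_of_pos_left t.2 (by positivity)
    have := Nat.ModEq.eq_of_lt_of_lt h (e t) (e s)
    exact Fin.ext (Nat.eq_of_mul_eq_mul_left (by positivity) this)
  have h1 : ∀ m ∈ T.erase m0, 1 ≤ L.b I m X := by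
    intro m hm
    rw [Finset.mem_erase] at hm
    obtain ⟨t, -, ht⟩ := Finset.mem_image.mp hm.2
    have := hc m hm.1 (by
      rw [← ht, mul_add, ← Nat.cast_mul, ← mul_assoc, ← pow_succ']
      push_cast [Nat.cast_mul]
      rw [← Nat.cast_pow, ZMod.natCast_self, zero_mul, add_zero])
    omega
  have h2 : (T.erase m0).card ≤ ∑ m, L.b I m X := by
    calc (T.erase m0).card = ∑ m ∈ T.erase m0, 1 := by simp
      _ ≤ ∑ m ∈ T.erase m0, L.b I m X := Finset.sum_le_sum h1
      _ ≤ _ := Finset.sum_le_sum_of_subset (Finset.subset_univ _)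
  rw [L.sum_b] at h2
  have := Finset.pred_card_le_card_erase (s := T) (a := m0)
  omega

theorem ito_fact2 {Γ : Type*} [Group Γ] [Fintype Γ] {p a : ℕ} [hp : Fact p.Prime] (R : Subgroup Γ) [R.Normal]
    (hR : (Nat.card R).Coprime p) (y : Γ) (hy : orderOf y = p ^ a)
    (hgen : ∀ g, ∃ r ∈ R, ∃ i : ℕ, g = r * y ^ i)
    {n : ℕ} (hn : n < p - 1) (σ : Γ →* Matrix (Fin n) (Fin n) ℂ) (hσ : Function.Injective σ)
    (r : Γ) : Commute r y := by
  classical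
  rcases a with _ | a
  · rw [pow_zero, orderOf_eq_one_iff] at hy
    rw [hy]; exact Commute.one_right r
  let L : Loc Γ p (a + 1) :=
    { y := y, hy := hy, K := R ⊓ Subgroup.centralizer {y}
      hKy := fun k hk => (Subgroup.mem_centralizer_singleton_iff.mp hk.2)
      hK := Nat.Coprime.coprime_dvd_left (Subgroup.card_dvd_of_le inf_le_left) hR
      hC := by
        intro c hc
        obtain ⟨r, hr, i, rfl⟩ := hgen c
        have h1 : Commute r y := by
          have := hc.mul_left (((Commute.refl y).pow_left i).inv_left)
          simpa using this
        refine ⟨i, r, ⟨hr, Subgroup.mem_centralizer_singleton_iff.mpr h1⟩, ?_⟩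
        exact (h1.pow_right i).eq }
  have hNm : ∀ g u, L.Nm g u → u = 1 := by
    intro g u hu
    obtain ⟨r, hr, i, rfl⟩ := hgen g
    have h1 : r * y * r⁻¹ = L.Y u := by
      rw [← hu]
      change _ = r * y ^ i * y * (r * y ^ i)⁻¹
      have : y ^ i * y = y * y ^ i := by rw [← pow_succ, pow_succ']
      rw [mul_assoc r (y ^ i) y, this]; group
    have h2 : L.Y (u - 1) ∈ R := by
      rw [sub_eq_add_neg, Cyc.Y_add, Cyc.Y_neg, Cyc.Y_one, ← h1]
      have := R.mul_mem hr ((inferInstance : R.Normal).conj_mem r⁻¹ (R.inv_mem hr) y)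
      rw [show r * y * r⁻¹ * L.y⁻¹ = r * (y * r⁻¹ * y⁻¹) by change r * y * r⁻¹ * y⁻¹ = _; group]
      exact this
    have h3 := L.Y_pow_card (u - 1)
    have h4 : L.Y (u - 1) ^ Nat.card R = 1 := by
      have := pow_card_eq_one' (x := (⟨_, h2⟩ : R))
      exact congrArg Subtype.val this
    have h5 : L.Y (u - 1) = 1 := by
      have := pow_gcd_eq_one.mpr ⟨h4, h3⟩
      rwa [Nat.Coprime.pow_right _ hR, pow_one] at this
    rw [← L.Y_zero] at h5
    exact sub_eq_zero.mp (L.Y_inj h5)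
  have hNC : ∀ j j' : ZMod (p ^ (a + 1)), j ≠ j' → L.NC j j' := by
    intro j j' h g u hu h'
    rw [hNm g u hu, one_mul] at h'
    exact h h'.symm
  have hFr : ∀ j : ZMod (p ^ (a + 1)), L.Fr j := fun j g u hu _ => hNm g u hu
  obtain ⟨I⟩ := exists_irrData Γ
  have hs : ∀ X, I.d X ≤ n → ∃ j0, ∀ j, j ≠ j0 → L.b I j X = 0 := by
    intro X hX
    have h0 : ∃ j0, L.b I j0 X ≠ 0 := by
      by_contra! hc
      have := L.sum_b I X
      simp only [hc, Finset.sum_const_zero] at this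
      exact (I.pos X).ne this
    obtain ⟨j0, h0⟩ := h0
    refine ⟨j0, fun j hj => ?_⟩
    by_contra hb
    obtain ⟨m0, -, hm0, hbm0⟩ := missing_two L.toCyc I X (by omega) j0 j0
    obtain ⟨m, hm, hpm, hbm⟩ := missing_two L.toCyc I X (by omega) j m0
    have ne : ∀ {s t}, L.b I s X ≠ 0 → L.b I t X = 0 → s ≠ t := by
      rintro s t hs ht rfl; exact hs ht
    exact L.single_class I X h0 hbm0 hb hbm hm0 hpm (hNC _ _ (ne h0 hbm0)) (hNC _ _ hj.symm)
      (hNC _ _ (ne h0 hbm)) (hNC _ _ (ne hb hbm0).symm) (hNC _ _ hm.symm) (hNC _ _ (ne hb hbm))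
      (hFr _) (hFr _) (hFr _) (hFr _)
  have hc : σ (r * y * r⁻¹ * y⁻¹) = 1 := by
    refine I.constituent σ _ fun X hX => ?_
    obtain ⟨j0, hj0⟩ := hs X hX
    have h1 : I.ρ X y = ee j0 • 1 := L.scalar_of_single I X j0 hj0
    have h2 : I.ρ X r * I.ρ X y = I.ρ X y * I.ρ X r := by rw [h1]; simp
    rw [map_mul, map_mul, map_mul, h2, mul_assoc (I.ρ X y), ← map_mul, mul_inv_cancel, map_one, mul_one,
      ← map_mul, mul_inv_cancel, map_one]
  have h1 : r * y * r⁻¹ * y⁻¹ = 1 := hσ (by rw [hc, map_one])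
  rw [mul_inv_eq_one, mul_inv_eq_iff_eq_mul] at h1
  exact h1


/-- `p`-elements -/
def PE {G : Type*} [Group G] (p : ℕ) (x : G) : Prop := ∃ k, x ^ p ^ k = 1

theorem PE.inv {G : Type*} [Group G] {p : ℕ} {x : G} (h : PE p x) : PE p x⁻¹ := by
  obtain ⟨k, hk⟩ := h; exact ⟨k, by rw [inv_pow, hk, inv_one]⟩

theorem PE.conj {G : Type*} [Group G] {p : ℕ} {x : G} (h : PE p x) (g : G) : PE p (g * x * g⁻¹) := by
  obtain ⟨k, hk⟩ := h; exact ⟨k, by rw [conj_pow, hk]; group⟩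

theorem PE.mul {G : Type*} [Group G] {p : ℕ} {x y : G} (h : PE p x) (h' : PE p y) (hc : Commute x y) :
    PE p (x * y) := by
  obtain ⟨k, hk⟩ := h
  obtain ⟨l, hl⟩ := h'
  refine ⟨k + l, ?_⟩
  rw [hc.mul_pow, pow_add, pow_mul, hk, one_pow, mul_comm, pow_mul, hl, one_pow, one_mul]

theorem PE.zpowers {G : Type*} [Group G] {p : ℕ} {x : G} (h : PE p x) :
    IsPGroup p (Subgroup.zpowers x) := by
  obtain ⟨k, hk⟩ := h
  rintro ⟨_, i, rfl⟩
  refine ⟨k, Subtype.ext ?_⟩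
  push_cast
  change (x ^ i) ^ p ^ k = 1
  rw [← zpow_natCast, ← zpow_mul, mul_comm, zpow_mul, zpow_natCast, hk, one_zpow]

theorem PE.of_mem {G : Type*} [Group G] {p : ℕ} {H : Subgroup G} (hH : IsPGroup p H) {x : G} (hx : x ∈ H) :
    PE p x := by
  obtain ⟨k, hk⟩ := hH ⟨x, hx⟩
  exact ⟨k, congrArg Subtype.val hk⟩

theorem PE.eq_one {G : Type*} [Group G] {p : ℕ} {x : G} (h : PE p x) {m : ℕ} (hm : m.Coprime p)
    (hx : x ^ m = 1) : x = 1 := by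
  obtain ⟨k, hk⟩ := h
  have := pow_gcd_eq_one.mpr ⟨hx, hk⟩
  rwa [Nat.Coprime.pow_right _ hm, pow_one] at this

theorem ito_fact1' {B : Type*} [Group B] [Fintype B] {p : ℕ} [hp : Fact p.Prime] {n : ℕ} (hn : n < p)
    (σ : B →* Matrix (Fin n) (Fin n) ℂ) (hσ : Function.Injective σ) {Q : Subgroup B} (hQ : IsPGroup p Q)
    {x y : B} (hx : x ∈ Q) (hy : y ∈ Q) : Commute x y := by
  classical
  have := ito_fact1 hQ hn (σ.comp Q.subtype) (hσ.comp Q.subtype_injective) ⟨x, hx⟩ ⟨y, hy⟩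
  exact congrArg Subtype.val this.eq

theorem ito_fact2' {B : Type*} [Group B] [Fintype B] {p : ℕ} [hp : Fact p.Prime] {n : ℕ} (hn : n < p - 1)
    (σ : B →* Matrix (Fin n) (Fin n) ℂ) (hσ : Function.Injective σ) (R : Subgroup B) [R.Normal]
    (hR : (Nat.card R).Coprime p) {x r : B} (hx : PE p x) (hr : r ∈ R) : Commute x r := by
  classical
  obtain ⟨a, ha⟩ : ∃ a, orderOf x = p ^ a := by
    obtain ⟨k, hk⟩ := hx
    obtain ⟨a, -, ha⟩ := (Nat.dvd_prime_pow hp.out).mp (orderOf_dvd_of_pow_eq_one hk)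
    exact ⟨a, ha⟩
  let Γ := R ⊔ Subgroup.zpowers x
  have hRΓ : R ≤ Γ := le_sup_left
  have hxΓ : x ∈ Γ := (le_sup_right : Subgroup.zpowers x ≤ Γ) (Subgroup.mem_zpowers x)
  have := ito_fact2 (Γ := Γ) (p := p) (a := a) (R.subgroupOf Γ) (by
      rw [Nat.card_congr (Subgroup.subgroupOfEquivOfLe hRΓ).toEquiv]; exact hR) ⟨x, hxΓ⟩
    (by rw [← ha, Subgroup.orderOf_mk]) (by
      rintro ⟨g, hg⟩
      obtain ⟨r, hr, z, hz, rfl⟩ := Subgroup.mem_sup_of_normal_left.mp hg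
      obtain ⟨i, rfl⟩ := (mem_powers_iff_mem_zpowers.mpr hz)
      refine ⟨⟨r, hRΓ hr⟩, Subgroup.mem_subgroupOf.mpr hr, i, Subtype.ext ?_⟩
      rfl) hn (σ.comp Γ.subtype) (hσ.comp Γ.subtype_injective) ⟨r, hRΓ hr⟩
  exact (congrArg Subtype.val this.eq).symm

theorem ito_step {B : Type*} [Group B] [Fintype B] {p : ℕ} [hp : Fact p.Prime] {n : ℕ} (hn : n < p - 1)
    (σ : B →* Matrix (Fin n) (Fin n) ℂ) (hσ : Function.Injective σ) (A : Subgroup B) [hA : A.Normal]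
    (hcA : ∀ x ∈ A, ∀ y ∈ A, PE p x → PE p y → Commute x y)
    (hq : IsPGroup p (B ⧸ A) ∨ (Nat.card (B ⧸ A)).Coprime p) (x y : B) (hx : PE p x) (hy : PE p y) :
    Commute x y := by
  classical
  rcases hq with hq | hq
  swap
  · have h : ∀ z : B, PE p z → z ∈ A := by
      intro z hz
      rw [← QuotientGroup.eq_one_iff]
      refine PE.eq_one (p := p) ?_ hq pow_card_eq_one'
      obtain ⟨k, hk⟩ := hz
      exact ⟨k, by rw [← QuotientGroup.mk_pow, hk]; rfl⟩
    exact hcA x (h x hx) y (h y hy) hx hy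
  let T : Subgroup B :=
    { carrier := {t | t ∈ A ∧ PE p t}
      one_mem' := ⟨A.one_mem, 0, one_pow _⟩
      mul_mem' := fun {s t} hs ht => ⟨A.mul_mem hs.1 ht.1, hs.2.mul ht.2 (hcA s hs.1 t ht.1 hs.2 ht.2)⟩
      inv_mem' := fun {s} hs => ⟨A.inv_mem hs.1, hs.2.inv⟩ }
  have hTn : T.Normal := ⟨fun t ht g => ⟨hA.conj_mem t ht.1 g, ht.2.conj g⟩⟩
  have hTp : IsPGroup p T := by
    rintro ⟨t, ht⟩
    obtain ⟨k, hk⟩ := ht.2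
    exact ⟨k, Subtype.ext hk⟩
  have hxT : ∀ z t, PE p z → t ∈ T → Commute z t := by
    intro z t hz ht
    have h1 : IsPGroup p (T ⊔ Subgroup.zpowers z : Subgroup B) :=
      hTp.to_sup_of_normal_left hz.zpowers
    exact ito_fact1' (by omega) σ hσ h1
      ((le_sup_right : Subgroup.zpowers z ≤ _) (Subgroup.mem_zpowers z))
      ((le_sup_left : T ≤ _) ht)
  let M := A ⊓ Subgroup.centralizer (T : Set B)
  have hTM : T ≤ M := fun t ht => ⟨ht.1, Subgroup.mem_centralizer_iff.mpr fun s hs =>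
    (hxT s t hs.2 ht)⟩
  have hMn : M.Normal := inferInstance
  have hNn : (T.subgroupOf M).Normal := inferInstance
  have hcop : Nat.Coprime (Nat.card (T.subgroupOf M)) (T.subgroupOf M).index := by
    rw [Nat.card_congr (Subgroup.subgroupOfEquivOfLe hTM).toEquiv]
    obtain ⟨k, hk⟩ := IsPGroup.iff_card.mp hTp
    rw [hk]
    apply Nat.Coprime.pow_left
    rw [Nat.Prime.coprime_iff_not_dvd hp.out]
    intro hd
    obtain ⟨P⟩ := (inferInstance : Nonempty (Sylow p M))
    have hPT : (P : Subgroup M) ≤ T.subgroupOf M := by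
      intro z hz
      rw [Subgroup.mem_subgroupOf]
      refine ⟨z.2.1, ?_⟩
      obtain ⟨k, hk⟩ := PE.of_mem P.2 hz
      exact ⟨k, congrArg Subtype.val hk⟩
    exact P.not_dvd_index (hd.trans (Subgroup.index_dvd_of_le hPT))
  obtain ⟨H, hH⟩ := Subgroup.exists_right_complement'_of_coprime hcop
  have hHc : (Nat.card H).Coprime p := by
    rw [← hH.symm.index_eq_card]
    by_contra hnc
    rw [Nat.coprime_comm, Nat.Prime.coprime_iff_not_dvd hp.out, not_not] at hnc
    rcases Nat.eq_zero_or_pos (Nat.card H) with h | h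
    · exact absurd h Nat.card_pos.ne'
    obtain ⟨P⟩ := (inferInstance : Nonempty (Sylow p M))
    have hPT : (P : Subgroup M) ≤ T.subgroupOf M := by
      intro z hz
      rw [Subgroup.mem_subgroupOf]
      refine ⟨z.2.1, ?_⟩
      obtain ⟨k, hk⟩ := PE.of_mem P.2 hz
      exact ⟨k, congrArg Subtype.val hk⟩
    exact P.not_dvd_index (hnc.trans (Subgroup.index_dvd_of_le hPT))
  let R := H.map M.subtype
  have hRc : (Nat.card R).Coprime p := by
    rw [Nat.card_congr (H.equivMapOfInjective _ M.subtype_injective).symm.toEquiv]; exact hHc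
  have hdec : ∀ m ∈ M, ∃ t ∈ T, ∃ r ∈ R, m = t * r := by
    intro m hm
    obtain ⟨⟨t, h⟩, hth⟩ := hH.2 ⟨m, hm⟩
    refine ⟨t, Subgroup.mem_subgroupOf.mp t.2, h, ⟨h, h.2, rfl⟩, ?_⟩
    exact (congrArg Subtype.val hth).symm
  have hRpow : ∀ r ∈ R, r ^ Nat.card R = 1 := by
    intro r hr
    have := pow_card_eq_one' (x := (⟨r, hr⟩ : R))
    exact congrArg Subtype.val this
  have hRM : R ≤ M := by
    rintro _ ⟨h, -, rfl⟩; exact h.2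
  have hRn : R.Normal := by
    refine ⟨fun r hr g => ?_⟩
    obtain ⟨t, ht, s, hs, he⟩ := hdec _ (hMn.conj_mem r (hRM hr) g)
    have h1 : (g * r * g⁻¹) ^ Nat.card R = 1 := by rw [conj_pow, hRpow r hr]; group
    have hts : Commute t s := Subgroup.mem_centralizer_iff.mp (hRM hs).2 t ht
    rw [he, hts.mul_pow, hRpow s hs, mul_one] at h1
    rw [he, ht.2.eq_one hRc h1, one_mul]
    exact hs
  have hxR : ∀ z r, PE p z → r ∈ R → Commute z r := fun z r hz hr =>
    ito_fact2' hn σ hσ R hRc hz hr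
  obtain ⟨Q, hQ⟩ := hx.zpowers.exists_le_sylow
  have hxQ : x ∈ Q := hQ (Subgroup.mem_zpowers x)
  have htop : A ⊔ (Q : Subgroup B) = ⊤ := by
    rw [← Subgroup.index_eq_one]
    obtain ⟨k, hk⟩ := IsPGroup.iff_card.mp hq
    have h1 : (A ⊔ (Q : Subgroup B)).index ∣ p ^ k := by
      rw [← hk]; exact Subgroup.index_dvd_of_le le_sup_left
    have h2 : ¬ p ∣ (A ⊔ (Q : Subgroup B)).index := fun h =>
      Q.not_dvd_index (h.trans (Subgroup.index_dvd_of_le le_sup_right))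
    obtain ⟨i, -, hi⟩ := (Nat.dvd_prime_pow hp.out).mp h1
    rcases i with _ | i
    · simpa using hi
    · exact absurd (hi ▸ dvd_pow_self p (Nat.succ_ne_zero i)) h2
  obtain ⟨a, ha, q, hq', rfl⟩ := Subgroup.mem_sup_of_normal_left.mp
    (htop ▸ Subgroup.mem_top y : y ∈ A ⊔ (Q : Subgroup B))
  have hqp : PE p q := PE.of_mem Q.2 hq'
  have haM : a ∈ M := by
    refine ⟨ha, Subgroup.mem_centralizer_iff.mpr fun t ht => ?_⟩
    have h1 := (hxT _ t hy ht).symm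
    have h2 := (hxT _ t hqp ht).symm
    have := h1.mul_right h2.inv_right
    rw [mul_inv_cancel_right] at this
    exact this
  obtain ⟨t, ht, r, hr, rfl⟩ := hdec a haM
  exact ((hxT x t hx ht).mul_right (hxR x r hx hr)).mul_right
    (ito_fact1' (by omega) σ hσ Q.2 hxQ hq')

theorem ito {B : Type*} [Group B] [Fintype B] {p : ℕ} [hp : Fact p.Prime] {n : ℕ} (hn : n < p - 1)
    (σ : B →* Matrix (Fin n) (Fin n) ℂ) (hσ : Function.Injective σ) (hB : IsPSolvable p B)
    (x y : B) (hx : PE p x) (hy : PE p y) : Commute x y := by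
  classical
  obtain ⟨m, H, h0, h1, hle, hs⟩ := hB
  have key : ∀ i : Fin (m + 1), ∀ x ∈ H i, ∀ y ∈ H i, PE p x → PE p y → Commute x y := by
    intro i
    induction i using Fin.induction with
    | zero =>
      intro x hx y _ _ _
      rw [h0, Subgroup.mem_bot] at hx
      rw [hx]; exact Commute.one_left y
    | succ i ih =>
      intro x hx y hy px py
      obtain ⟨hN, hq⟩ := hs i
      have e : ∀ {z : H i.succ}, PE p z → PE p (z : B) := fun ⟨k, hk⟩ => ⟨k, congrArg Subtype.val hk⟩
      have := ito_step hn (σ.comp (H i.succ).subtype) (hσ.comp (H i.succ).subtype_injective)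
        ((H i.castSucc).subgroupOf (H i.succ)) (fun u hu v hv pu pv => by
          have := ih u (Subgroup.mem_subgroupOf.mp hu) v (Subgroup.mem_subgroupOf.mp hv) (e pu) (e pv)
          exact Subtype.ext this.eq) hq ⟨x, hx⟩ ⟨y, hy⟩
          (by obtain ⟨k, hk⟩ := px; exact ⟨k, Subtype.ext hk⟩)
          (by obtain ⟨k, hk⟩ := py; exact ⟨k, Subtype.ext hk⟩)
      exact congrArg Subtype.val this.eq
  exact key (Fin.last m) x (h1 ▸ Subgroup.mem_top x) y (h1 ▸ Subgroup.mem_top y) hx hy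


namespace Loc
variable {G : Type*} [Group G] [Fintype G] {p : ℕ} [hp : Fact p.Prime] (L : Loc G p 1)
set_option linter.unusedSectionVars false

theorem p_zero : (p : ZMod (p ^ 1)) = 0 := by
  have := ZMod.natCast_self (p ^ 1)
  rw [Nat.cast_pow] at this
  exact (pow_one _).symm.trans this

theorem unit_of_ne {j : ZMod (p ^ 1)} (hj : j ≠ 0) : IsUnit j := by
  by_contra h
  obtain ⟨s, rfl⟩ := nonunit_dvd h
  exact hj (by rw [p_zero, zero_mul])

theorem Nm.unit {L : Loc G p 1} {g : G} {u : ZMod (p ^ 1)} (h : L.Nm g u) : IsUnit u := by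
  obtain ⟨v, -, hv⟩ := h.inv
  exact IsUnit.of_mul_eq_one_right v hv

theorem fr_of_ne {j : ZMod (p ^ 1)} (hj : j ≠ 0) : L.Fr j := by
  intro g u _ h
  exact (unit_of_ne hj).mul_right_cancel (by rw [h, one_mul])

open scoped Classical in
/-- the group of multipliers -/
noncomputable def E : Finset (ZMod (p ^ 1)) := Finset.univ.filter (fun u => ∃ g, L.Nm g u)

theorem mem_E {u : ZMod (p ^ 1)} : u ∈ L.E ↔ ∃ g, L.Nm g u := by simp [E]

theorem one_mem_E : 1 ∈ L.E := L.mem_E.mpr ⟨1, Nm.one L⟩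

/-- orbits -/
noncomputable def O (j : ZMod (p ^ 1)) : Finset (ZMod (p ^ 1)) := L.E.image (fun u => u * j)

theorem card_O (j : ZMod (p ^ 1)) : (L.O j).card ≤ L.E.card := Finset.card_image_le

theorem card_O_eq {j : ZMod (p ^ 1)} (hj : j ≠ 0) : (L.O j).card = L.E.card :=
  Finset.card_image_of_injective _ (fun _ _ h => (unit_of_ne hj).mul_right_cancel h)

theorem NC_iff {j j' : ZMod (p ^ 1)} : L.NC j j' ↔ j' ∉ L.O j := by
  constructor
  · intro h hm
    obtain ⟨u, hu, rfl⟩ := Finset.mem_image.mp hm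
    obtain ⟨g, hg⟩ := L.mem_E.mp hu
    exact h g u hg rfl
  · intro h g u hu hj
    exact h (Finset.mem_image.mpr ⟨u, L.mem_E.mpr ⟨g, hu⟩, hj.symm⟩)

open scoped Classical in
theorem card_nm [Fintype L.K] : (Finset.univ.filter (fun g => ∃ u, L.Nm g u)).card =
    L.E.card * (p ^ 1 * Fintype.card L.K) := by
  have h1 : Finset.univ.filter (fun g => ∃ u, L.Nm g u) =
      L.E.biUnion (fun u => Finset.univ.filter (fun g => L.Nm g u)) := by
    ext g
    simp only [Finset.mem_filter, Finset.mem_univ, true_and, Finset.mem_biUnion, mem_E]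
    exact ⟨fun ⟨u, hu⟩ => ⟨u, ⟨g, hu⟩, hu⟩, fun ⟨u, _, hu⟩ => ⟨u, hu⟩⟩
  rw [h1, Finset.card_biUnion]
  · rw [Finset.sum_const_nat]
    intro u hu
    obtain ⟨g0, hg0⟩ := L.mem_E.mp hu
    obtain ⟨v, hv, hvu⟩ := hg0.inv
    rw [← L.card_nm_one]
    refine Finset.card_bij' (fun g _ => g0⁻¹ * g) (fun g _ => g0 * g) ?_ ?_ ?_ ?_
    · intro g hg
      simp only [Finset.mem_filter, Finset.mem_univ, true_and] at hg ⊢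
      have := hv.mul hg
      rwa [hvu] at this
    · intro g hg
      simp only [Finset.mem_filter, Finset.mem_univ, true_and] at hg ⊢
      have := hg0.mul hg
      rwa [mul_one] at this
    · intro g _; simp
    · intro g _; simp
  · intro u _ v _ huv
    rw [Function.onFun, Finset.disjoint_left]
    intro g hg hg'
    simp only [Finset.mem_filter, Finset.mem_univ, true_and] at hg hg'
    exact huv (hg.unique hg')

variable (I : IrrData G)

theorem b_inv (X : Fin I.r) {g : G} {u : ZMod (p ^ 1)} (hu : L.Nm g u) (j : ZMod (p ^ 1)) :
    L.b I (u * j) X = L.b I j X := by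
  have h1 : ((p ^ 1 : ℕ) : ℂ) * L.b I (u * j) X = ((p ^ 1 : ℕ) : ℂ) * L.b I j X := by
    rw [L.b_spec, L.b_spec]
    obtain ⟨w, hw⟩ := hu.unit
    refine Fintype.sum_equiv (Units.mulLeft w) _ _ (fun i => ?_)
    rw [Units.mulLeft_apply, hw, show j * (u * i) = u * j * i by ring, ← hu.conj i, I.χ_conj]
  have := mul_left_cancel₀ pa_ne h1
  exact_mod_cast this

theorem NC_of_b {X : Fin I.r} {j j' : ZMod (p ^ 1)} (h : L.b I j X ≠ 0) (h' : L.b I j' X = 0) :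
    L.NC j j' := by
  rintro g u hu rfl
  exact h (by rw [← L.b_inv I X hu, h'])

theorem card_nonzero : (Finset.univ.filter (fun j : ZMod (p ^ 1) => j ≠ 0)).card = p - 1 := by
  rw [Finset.filter_ne' Finset.univ (0 : ZMod (p ^ 1)), Finset.card_erase_of_mem (Finset.mem_univ _),
    Finset.card_univ, ZMod.card, pow_one]

/-- nonzero missing characters -/
noncomputable def Ms (X : Fin I.r) : Finset (ZMod (p ^ 1)) :=
  Finset.univ.filter (fun j => j ≠ 0 ∧ L.b I j X = 0)

theorem mem_Ms {X : Fin I.r} {j : ZMod (p ^ 1)} : j ∈ L.Ms I X ↔ j ≠ 0 ∧ L.b I j X = 0 := by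
  simp [Ms]

theorem single_orbit {X : Fin I.r} (hM : L.E.card < (L.Ms I X).card) {j1 j2 : ZMod (p ^ 1)}
    (h1 : j1 ≠ 0) (h2 : j2 ≠ 0) (hb1 : L.b I j1 X ≠ 0) (hb2 : L.b I j2 X ≠ 0) : j2 ∈ L.O j1 := by
  classical
  by_contra hn
  obtain ⟨m0, hm0⟩ : (L.Ms I X).Nonempty := Finset.card_pos.mp (by omega)
  obtain ⟨m1, hm1, hm1'⟩ : ∃ m1 ∈ L.Ms I X, m1 ∉ L.O m0 := by
    by_contra! hc
    have := Finset.card_le_card (show L.Ms I X ⊆ L.O m0 from hc)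
    have := L.card_O m0
    omega
  rw [mem_Ms] at hm0 hm1
  exact L.single_class I X hb1 hm0.2 hb2 hm1.2 (by simp [p_zero]) (by simp [p_zero])
    (L.NC_of_b I hb1 hm0.2) (L.NC_iff.mpr hn) (L.NC_of_b I hb1 hm1.2) (L.NC_of_b I hb2 hm0.2).symm
    (L.NC_iff.mpr hm1') (L.NC_of_b I hb2 hm1.2) (L.fr_of_ne hm0.1) (L.fr_of_ne h1) (L.fr_of_ne h2)
    (L.fr_of_ne hm1.1)

/-- support among nonzero characters -/
noncomputable def Sp (X : Fin I.r) : Finset (ZMod (p ^ 1)) :=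
  Finset.univ.filter (fun j => j ≠ 0 ∧ L.b I j X ≠ 0)

theorem card_Sp_Ms (X : Fin I.r) : (L.Sp I X).card + (L.Ms I X).card = p - 1 := by
  classical
  rw [← card_nonzero, Sp, Ms, ← Finset.card_union_of_disjoint]
  · congr 1
    ext j
    simp only [Finset.mem_union, Finset.mem_filter, Finset.mem_univ, true_and]
    tauto
  · rw [Finset.disjoint_left]
    intro j h h'
    simp only [Finset.mem_filter, Finset.mem_univ, true_and] at h h'
    exact h.2 h'.2

theorem card_Sp_le (X : Fin I.r) : (L.Sp I X).card ≤ I.d X := by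
  rw [← L.sum_b I X, Finset.card_eq_sum_ones]
  calc ∑ _ ∈ L.Sp I X, 1 ≤ ∑ m ∈ L.Sp I X, L.b I m X := Finset.sum_le_sum fun m hm => by
        simp only [Sp, Finset.mem_filter] at hm; omega
    _ ≤ _ := Finset.sum_le_sum_of_subset (Finset.subset_univ _)

end Loc


namespace Loc
variable {G : Type*} [Group G] [Fintype G] {p : ℕ} [hp : Fact p.Prime] (L : Loc G p 1)
set_option linter.unusedSectionVars false
variable (I : IrrData G)

/-- If `ψ` occurs in `χ χ̄` then its `y`-eigenvalues are quotients of those of `χ`. -/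
theorem diff_occurs (X ψ : Fin I.r) (m : Fin I.r → ℕ)
    (hm : ∀ g, I.χ X g * I.χ X g⁻¹ = ∑ i, m i * I.χ i g) (hψ : m ψ ≠ 0) (j : ZMod (p ^ 1))
    (hj : L.b I j ψ ≠ 0) : ∃ j1 j2, L.b I j1 X ≠ 0 ∧ L.b I j2 X ≠ 0 ∧ j1 = j + j2 := by
  by_contra! hc
  have h1 : ((p ^ 1 : ℕ) : ℂ) * ∑ i, (m i * L.b I j i : ℂ) = 0 := by
    rw [Finset.mul_sum]
    have e1 : ∀ i, ((p ^ 1 : ℕ) : ℂ) * (m i * L.b I j i : ℂ) =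
        ∑ s, m i * I.χ i (L.Y s) * ee (-(j * s)) := by
      intro i
      rw [mul_left_comm, L.b_spec, Finset.mul_sum]
      refine Finset.sum_congr rfl fun s _ => ?_
      ring
    simp only [e1]
    rw [Finset.sum_comm]
    simp only [← Finset.sum_mul, ← hm]
    have e2 : ∀ s, I.χ X (L.Y s) * I.χ X (L.Y s)⁻¹ * ee (-(j * s)) =
        ∑ j1, ∑ j2, (L.b I j1 X * L.b I j2 X : ℂ) * (ee (j1 * s) * ee (-((j + j2) * s))) := by
      intro s
      rw [← L.Y_neg, L.χ_Y I X s, L.χ_Y I X (-s), Finset.sum_mul_sum, Finset.sum_mul]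
      refine Finset.sum_congr rfl fun j1 _ => ?_
      rw [Finset.sum_mul]
      refine Finset.sum_congr rfl fun j2 _ => ?_
      rw [show -((j + j2) * s) = j2 * -s + -(j * s) by ring, ee_add]
      ring
    simp only [e2]
    rw [Finset.sum_comm]
    refine Finset.sum_eq_zero fun j1 _ => ?_
    rw [Finset.sum_comm]
    refine Finset.sum_eq_zero fun j2 _ => ?_
    rw [← Finset.mul_sum, ee_sum']
    by_cases h1 : L.b I j1 X = 0
    · simp [h1]
    by_cases h2 : L.b I j2 X = 0
    · simp [h2]
    rw [if_neg (hc j1 j2 h1 h2), mul_zero]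
  have h2 := (mul_eq_zero.mp h1).resolve_left pa_ne
  have h3 : ∑ i, m i * L.b I j i = 0 := by exact_mod_cast h2
  rw [Finset.sum_eq_zero_iff] at h3
  exact (mul_ne_zero hψ hj) (h3 ψ (Finset.mem_univ _))

/-- nontrivial constituent of `χ χ̄` with trivial multiplicities -/
theorem exists_psi [Fintype L.K] (J : IrrData L.K) (X : Fin I.r) (hX : ∀ c : ℂ, I.ρ X L.y ≠ c • 1)
    (i0 : Fin I.r) (hi0 : ∀ g, I.χ i0 g = 1) (κ0 : Fin J.r) (hκ0 : ∀ k, J.χ κ0 k = 1) :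
    ∃ (m : Fin I.r → ℕ) (ψ : Fin I.r), (∀ g, I.χ X g * I.χ X g⁻¹ = ∑ i, m i * I.χ i g) ∧ m ψ ≠ 0 ∧
      ψ ≠ i0 ∧ 1 ≤ L.am I J 0 κ0 ψ := by
  obtain ⟨m, hm, hm'⟩ := I.dec (kronR (I.ρ X) (dualR (I.ρ X)))
  simp only [trace_kronR, trace_dualR] at hm hm'
  change ∀ g, I.χ X g * I.χ X g⁻¹ = _ at hm
  have hm0 : m i0 = 1 := by
    have := hm' i0
    simp only [hi0, mul_one] at this
    change _ * ∑ g, I.χ X g * I.χ X g⁻¹ = _ at this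
    rw [I.row_self, inv_mul_cancel₀ (by exact_mod_cast Fintype.card_ne_zero)] at this
    exact_mod_cast this.symm
  have ha : ∀ ψ, ((p ^ 1 : ℕ) : ℂ) * Fintype.card L.K * L.am I J 0 κ0 ψ =
      ∑ i, ∑ k : L.K, I.χ ψ (L.Y i * k) := by
    intro ψ
    rw [L.a_spec]
    simp [hκ0, ee_zero]
  have ha0 : L.am I J 0 κ0 i0 = 1 := by
    have := ha i0
    simp only [hi0, Finset.sum_const, Finset.card_univ, ZMod.card, nsmul_eq_mul, mul_one] at this
    have h2 : ((p ^ 1 : ℕ) : ℂ) * Fintype.card L.K * L.am I J 0 κ0 i0 =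
      ((p ^ 1 : ℕ) : ℂ) * Fintype.card L.K * 1 := by rw [this, mul_one]
    have := mul_left_cancel₀ L.card_ne h2
    exact_mod_cast this
  have hs : ∑ ψ, m ψ * L.am I J 0 κ0 ψ = ∑ κ, ∑ j, (L.am I J j κ X) ^ 2 := by
    have h1 : ((p ^ 1 : ℕ) : ℂ) * Fintype.card L.K * ∑ ψ, (m ψ * L.am I J 0 κ0 ψ : ℂ) =
        ((p ^ 1 : ℕ) : ℂ) * Fintype.card L.K * ∑ κ, ∑ j, (L.am I J j κ X : ℂ) ^ 2 := by
      rw [← L.parseval2 I J X, Finset.mul_sum]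
      simp only [hm]
      have e1 : ∀ ψ, ((p ^ 1 : ℕ) : ℂ) * Fintype.card L.K * (m ψ * L.am I J 0 κ0 ψ : ℂ) =
          ∑ i, ∑ k : L.K, m ψ * I.χ ψ (L.Y i * k) := by
        intro ψ
        rw [mul_left_comm, ha]
        simp only [Finset.mul_sum]
      simp only [e1]
      rw [Finset.sum_comm]
      refine Finset.sum_congr rfl fun i _ => ?_
      rw [Finset.sum_comm]
    have := mul_left_cancel₀ L.card_ne h1
    exact_mod_cast this
  have h2 : 2 ≤ ∑ κ, ∑ j, (L.am I J j κ X) ^ 2 := by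
    have : ∃ j, L.b I j X ≠ 0 := by
      by_contra! hc
      exact hX _ (L.scalar_of_single I X 0 (fun j _ => hc j))
    obtain ⟨j1, hj1⟩ := this
    have : ∃ j2, j2 ≠ j1 ∧ L.b I j2 X ≠ 0 := by
      by_contra! hc
      exact hX _ (L.scalar_of_single I X j1 hc)
    obtain ⟨j2, hj2, hb2⟩ := this
    obtain ⟨κ1, h1⟩ := L.am_pos_of_b I J hj1
    obtain ⟨κ2, h2⟩ := L.am_pos_of_b I J hb2
    rw [Finset.sum_comm]
    calc 2 = ∑ j ∈ ({j1, j2} : Finset (ZMod (p ^ 1))), 1 := by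
            rw [Finset.sum_const, Finset.card_pair hj2.symm]; rfl
      _ ≤ ∑ j ∈ ({j1, j2} : Finset (ZMod (p ^ 1))), ∑ κ, (L.am I J j κ X) ^ 2 := by
            refine Finset.sum_le_sum fun j hj => ?_
            have : ∃ κ, 1 ≤ L.am I J j κ X := by
              rcases Finset.mem_insert.mp hj with rfl | hj
              · exact ⟨κ1, h1⟩
              · rw [Finset.mem_singleton] at hj; subst hj; exact ⟨κ2, h2⟩
            obtain ⟨κ, hκ⟩ := this
            exact (Nat.one_le_pow 2 _ hκ).trans
              (Finset.single_le_sum (f := fun κ => (L.am I J j κ X) ^ 2) (fun _ _ => Nat.zero_le _)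
                (Finset.mem_univ κ))
      _ ≤ _ := Finset.sum_le_sum_of_subset (Finset.subset_univ _)
  rw [← hs, ← Finset.add_sum_erase _ _ (Finset.mem_univ i0), hm0, ha0] at h2
  have h3 : ∑ ψ ∈ Finset.univ.erase i0, m ψ * L.am I J 0 κ0 ψ ≠ 0 := by omega
  obtain ⟨ψ, hψ, h⟩ := Finset.exists_ne_zero_of_sum_ne_zero h3
  refine ⟨m, ψ, hm, left_ne_zero_of_mul h, Finset.ne_of_mem_erase hψ, ?_⟩
  have := right_ne_zero_of_mul h
  omega

theorem exceptional (f : ℕ) (hef : L.E.card * f = p - 1) (hf : L.E.card + 3 ≤ f) (X i0 : Fin I.r)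
    (hi0 : ∀ g, I.χ i0 g = 1) (hns : ∀ ψ, ψ ≠ i0 → ∀ c : ℂ, I.ρ ψ L.y ≠ c • 1)
    (hX : X ≠ i0) (hd : I.d X < L.E.card * (f - 1)) : False := by
  classical
  obtain ⟨J⟩ := exists_irrData L.K
  obtain ⟨κ0, hκ0, -⟩ := J.exists_triv
  have he : 1 ≤ L.E.card := Finset.card_pos.mpr ⟨1, L.one_mem_E⟩
  set e := L.E.card with hedef
  have hex : e * (f - 1) + e = p - 1 := by
    obtain ⟨f', rfl⟩ : ∃ f', f = f' + 1 := ⟨f - 1, by omega⟩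
    rw [← hef, Nat.add_sub_cancel]; ring
  -- support of `X`
  have hMX : e < (L.Ms I X).card := by
    have h1 := L.card_Sp_Ms I X
    have h2 := L.card_Sp_le I X
    omega
  obtain ⟨μ, hμ⟩ : ∃ μ, ∀ j, j ≠ 0 → L.b I j X ≠ 0 → j ∈ L.O μ := by
    by_cases h : ∃ μ, μ ≠ 0 ∧ L.b I μ X ≠ 0
    · obtain ⟨μ, h0, hb⟩ := h
      exact ⟨μ, fun j hj hbj => L.single_orbit I hMX h0 hj hb hbj⟩
    · push Not at h
      exact ⟨1, fun j hj hbj => absurd (h j hj) hbj⟩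
  obtain ⟨m, ψ, hm, hmψ, hψ0, haψ⟩ := L.exists_psi I J X (hns X hX) i0 hi0 κ0 hκ0
  have hSp : (L.Sp I ψ).card ≤ e * (e + 1) := by
    let T := insert 0 (L.O μ)
    have hT : T.card ≤ e + 1 := (Finset.card_insert_le _ _).trans (by
      have := L.card_O μ; omega)
    have hsub : L.Sp I ψ ⊆ T.offDiag.image (fun x => x.1 - x.2) := by
      intro j hj
      simp only [Sp, Finset.mem_filter, Finset.mem_univ, true_and] at hj
      obtain ⟨j1, j2, h1, h2, rfl⟩ := L.diff_occurs I X ψ m hm hmψ j hj.2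
      have hmem : ∀ s, L.b I s X ≠ 0 → s ∈ T := by
        intro s hs
        by_cases h0 : s = 0
        · rw [h0]; exact Finset.mem_insert_self _ _
        · exact Finset.mem_insert_of_mem (hμ s h0 hs)
      refine Finset.mem_image.mpr ⟨(j + j2, j2), ?_, by simp⟩
      rw [Finset.mem_offDiag]
      exact ⟨hmem _ h1, hmem _ h2, by simpa using hj.1⟩
    have h1 := (Finset.card_le_card hsub).trans Finset.card_image_le
    rw [Finset.offDiag_card] at h1
    have h2 : T.card * T.card - T.card = T.card * (T.card - 1) := by
      rw [Nat.mul_sub, mul_one]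
    rw [h2] at h1
    refine h1.trans ?_
    rw [mul_comm e]
    exact Nat.mul_le_mul hT (by omega)
  have hMψ : e < (L.Ms I ψ).card := by
    have h1 := L.card_Sp_Ms I ψ
    have : e * (e + 3) ≤ e * f := Nat.mul_le_mul_left e hf
    nlinarith
  obtain ⟨l0, hl0⟩ : (L.Ms I ψ).Nonempty := Finset.card_pos.mp (by omega)
  rw [mem_Ms] at hl0
  obtain ⟨l1, hl1, hb1⟩ : ∃ l1, l1 ≠ 0 ∧ L.b I l1 ψ ≠ 0 := by
    by_contra! hc
    exact hns ψ hψ0 _ (L.scalar_of_single I ψ 0 hc)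
  obtain ⟨κ, hκ⟩ := L.am_pos_of_b I J hb1
  -- the vector `w`
  let w := L.uv I J 0 l0 κ0
  have hwψ : 1 ≤ w ψ := by
    simp only [w, uv, L.am_zero_of_b I J hl0.2]
    push_cast
    omega
  have hnorm : ∑ Z, w Z * w Z = e + 1 := by
    refine L.inner_triv I J 0 l0 0 l0 κ0 hκ0 (by simp [p_zero]) ?_ e L.card_nm
    intro g u hu
    have h1 : ¬ (0 = u * l0) := fun h => hl0.1 (by
      rw [← hu.unit.mul_right_eq_zero]; exact h.symm)
    unfold dd
    by_cases hu1 : u = 1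
    · subst hu1; simp [hl0.1, hl0.1.symm]
    · have h2 : ¬ (l0 = u * l0) := fun h => hu1 (L.fr_of_ne hl0.1 g u hu h.symm)
      simp [h1, h2, hl0.1, hu1]
  let Λ := ((Finset.univ.filter (fun j : ZMod (p ^ 1) => j ≠ 0)) \ L.O l1) \ L.O l0
  have hΛ : e * (f - 2) ≤ Λ.card := by
    have h1 := Finset.le_card_sdiff (L.O l1) (Finset.univ.filter (fun j : ZMod (p ^ 1) => j ≠ 0))
    have h2 := Finset.le_card_sdiff (L.O l0)
      ((Finset.univ.filter (fun j : ZMod (p ^ 1) => j ≠ 0)) \ L.O l1)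
    have h3 := L.card_O l1
    have h4 := L.card_O l0
    rw [card_nonzero] at h1
    change _ ≤ Λ.card at h2
    have : e * (f - 2) + 2 * e = p - 1 := by
      obtain ⟨f', rfl⟩ : ∃ f', f = f' + 2 := ⟨f - 2, by omega⟩
      rw [← hef, Nat.add_sub_cancel]; ring
    omega
  have hmemΛ : ∀ l ∈ Λ, l ≠ 0 ∧ L.NC l1 l ∧ L.NC l0 l := by
    intro l hl
    simp only [Λ, Finset.mem_sdiff, Finset.mem_filter, Finset.mem_univ, true_and] at hl
    exact ⟨hl.1.1, L.NC_iff.mpr hl.1.2, L.NC_iff.mpr hl.2⟩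
  have hform : ∀ l ∈ Λ, ∃ Z, Z ≠ ψ ∧ L.uv I J l1 l κ = Pi.single ψ 1 - Pi.single Z 1 := by
    intro l hl
    obtain ⟨h0, h1, -⟩ := hmemΛ l hl
    refine L.diff_form I J (by simp [p_zero]) h1 (L.fr_of_ne hl1) (L.fr_of_ne h0) κ ψ ?_
    have hbl : L.b I l ψ = 0 := by
      by_contra hb
      exact L.NC_iff.mp h1 (L.single_orbit I hMψ hl1 h0 hb1 hb)
    simp only [uv, L.am_zero_of_b I J hbl]
    push_cast
    omega
  have : Nonempty (Fin I.r) := ⟨ψ⟩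
  choose! Z hZψ hZ using hform
  have hw : ∀ l ∈ Λ, w (Z l) = w ψ := by
    intro l hl
    obtain ⟨h0, h1, h2⟩ := hmemΛ l hl
    have := L.orth I J 0 l0 l1 l κ0 κ (by simp [p_zero]) (fun g u hu => ⟨by simpa using hl1,
      (L.NC_of_b I hb1 hl0.2).symm g u hu, by simpa using h0, h2 g u hu⟩)
    rw [hZ l hl, sum_mul_form] at this
    exact (sub_eq_zero.mp this).symm
  have hfib : ∀ c ∈ Λ.image Z, (Λ.filter (fun l => Z l = c)).card ≤ e := by
    intro c hc
    obtain ⟨l, hl, rfl⟩ := Finset.mem_image.mp hc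
    refine le_trans (Finset.card_le_card ?_) (L.card_O l)
    intro l' hl'
    rw [Finset.mem_filter] at hl'
    by_contra hn
    obtain ⟨h0, h1, h2⟩ := hmemΛ l hl
    obtain ⟨h0', h1', h2'⟩ := hmemΛ l' hl'.1
    have hi := L.inner_same I J l1 l l1 l' κ 1 (by simp [p_zero]) (by
      intro g u hu
      unfold dd
      rw [if_neg (h1.symm g u hu), if_neg (h1' g u hu), if_neg (L.NC_iff.mpr hn g u hu)]
      by_cases hu1 : u = 1
      · subst hu1; simp
      · rw [if_neg (fun h => hu1 (L.fr_of_ne hl1 g u hu h.symm)), if_neg hu1]; rfl)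
    rw [hZ l' hl'.1, sum_mul_form, hZ l hl, hl'.2] at hi
    simp [hZψ l hl, (hZψ l hl).symm] at hi
  have hcard := Finset.card_le_mul_card_image Λ e hfib
  have hc2 : f - 2 ≤ (Λ.image Z).card := Nat.le_of_mul_le_mul_left (hΛ.trans hcard) he
  have hψn : ψ ∉ Λ.image Z := by
    intro h
    obtain ⟨l, hl, h⟩ := Finset.mem_image.mp h
    exact hZψ l hl h
  have hsum : ((insert ψ (Λ.image Z)).card : ℤ) ≤ ∑ Y, w Y * w Y := by
    calc ((insert ψ (Λ.image Z)).card : ℤ) = ∑ Y ∈ insert ψ (Λ.image Z), 1 := by simp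
      _ ≤ ∑ Y ∈ insert ψ (Λ.image Z), w Y * w Y := by
        refine Finset.sum_le_sum fun Y hY => ?_
        have : 1 ≤ w Y := by
          rcases Finset.mem_insert.mp hY with rfl | hY
          · exact hwψ
          · obtain ⟨l, hl, rfl⟩ := Finset.mem_image.mp hY
            rw [hw l hl]; exact hwψ
        nlinarith
      _ ≤ _ := Finset.sum_le_sum_of_subset_of_nonneg (Finset.subset_univ _)
        (fun _ _ _ => mul_self_nonneg _)
  rw [hnorm, Finset.card_insert_of_notMem hψn] at hsum
  push_cast at hsum
  omega

end Loc


def PStep {G : Type*} [Group G] (p : ℕ) (A B : Subgroup G) : Prop :=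
  A ≤ B ∧ (∀ b ∈ B, ∀ a ∈ A, b * a * b⁻¹ ∈ A) ∧
    ((∀ b ∈ B, ∃ k : ℕ, b ^ p ^ k ∈ A) ∨ (A.relIndex B).Coprime p)

theorem pstep_iff {G : Type*} [Group G] (p : ℕ) (A B : Subgroup G) :
    PStep p A B ↔ (A ≤ B ∧ ∃ _ : (A.subgroupOf B).Normal,
      IsPGroup p (↥B ⧸ A.subgroupOf B) ∨ (Nat.card (↥B ⧸ A.subgroupOf B)).Coprime p) := by
  constructor
  · rintro ⟨h1, h2, h3⟩
    have hn : (A.subgroupOf B).Normal := by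
      constructor
      intro n hn g
      rw [Subgroup.mem_subgroupOf] at hn ⊢
      exact h2 g g.2 n hn
    refine ⟨h1, hn, ?_⟩
    rcases h3 with h3 | h3
    · left
      intro q
      induction q using QuotientGroup.induction_on with
      | H b =>
        obtain ⟨k, hk⟩ := h3 b b.2
        refine ⟨k, ?_⟩
        rw [← QuotientGroup.mk_pow, QuotientGroup.eq_one_iff, Subgroup.mem_subgroupOf]
        simpa using hk
    · right
      exact h3
  · rintro ⟨h1, hn, h3⟩
    refine ⟨h1, ?_, ?_⟩
    · intro b hb a ha
      have := hn.conj_mem ⟨a, h1 ha⟩ (by rw [Subgroup.mem_subgroupOf]; exact ha) ⟨b, hb⟩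
      rw [Subgroup.mem_subgroupOf] at this
      exact this
    · rcases h3 with h3 | h3
      · left
        intro b hb
        obtain ⟨k, hk⟩ := h3 (QuotientGroup.mk ⟨b, hb⟩)
        refine ⟨k, ?_⟩
        rw [← QuotientGroup.mk_pow, QuotientGroup.eq_one_iff, Subgroup.mem_subgroupOf] at hk
        simpa using hk
      · right
        exact h3

theorem isPSolvable_of_chain {G : Type*} [Group G] (p : ℕ) (T : Subgroup G)
    (h : Relation.ReflTransGen (PStep p) (⊥ : Subgroup G) T) :
    ∃ (n : ℕ) (H : Fin (n + 1) → Subgroup G), H 0 = ⊥ ∧ H (Fin.last n) = T ∧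
      ∀ i : Fin n, PStep p (H i.castSucc) (H i.succ) := by
  induction h with
  | refl => exact ⟨0, fun _ => ⊥, rfl, rfl, fun i => i.elim0⟩
  | @tail B C hB hC ih =>
    obtain ⟨n, H, h0, hl, hs⟩ := ih
    refine ⟨n + 1, Fin.snoc (α := fun _ => Subgroup G) H C, ?_, ?_, ?_⟩
    · have : (0 : Fin (n + 1 + 1)) = Fin.castSucc 0 := rfl
      rw [this, Fin.snoc_castSucc, h0]
    · rw [Fin.snoc_last]
    · intro i
      induction i using Fin.lastCases with
      | last =>
        rw [Fin.snoc_castSucc, Fin.succ_last, Fin.snoc_last, hl]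
        exact hC
      | cast i =>
        rw [Fin.snoc_castSucc, Fin.succ_castSucc, Fin.snoc_castSucc]
        exact hs i

theorem isPSolvable_iff {G : Type*} [Group G] (p : ℕ) :
    IsPSolvable p G ↔ Relation.ReflTransGen (PStep p) (⊥ : Subgroup G) ⊤ := by
  constructor
  · rintro ⟨n, H, h0, hl, hle, hs⟩
    have : ∀ i : Fin (n + 1), Relation.ReflTransGen (PStep p) (⊥ : Subgroup G) (H i) := by
      intro i
      induction i using Fin.induction with
      | zero => rw [h0]
      | succ i ih => exact ih.tail ((pstep_iff p _ _).2 ⟨hle i, hs i⟩)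
    rw [← hl]
    exact this _
  · intro h
    obtain ⟨n, H, h0, hl, hs⟩ := isPSolvable_of_chain p _ h
    exact ⟨n, H, h0, hl, fun i => (hs i).1, fun i => ((pstep_iff p _ _).1 (hs i)).2⟩

theorem rtg_lift {α β : Type*} {r : α → α → Prop} {s : β → β → Prop} (f : α → β)
    (h : ∀ a b, r a b → s (f a) (f b)) {a b : α} (hab : Relation.ReflTransGen r a b) :
    Relation.ReflTransGen s (f a) (f b) := by
  induction hab with
  | refl => exact Relation.ReflTransGen.refl
  | tail _ h2 ih => exact ih.tail (h _ _ h2)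

theorem mem_cent {G : Type*} [Group G] (g x : G) :
    x ∈ Subgroup.centralizer {g} ↔ Commute g x := by
  rw [Subgroup.mem_centralizer_singleton_iff]
  exact ⟨fun h => h.symm, fun h => h.symm⟩

theorem isPSolvable_ext {G : Type*} [Group G] (p : ℕ) (N : Subgroup G) [N.Normal]
    (h1 : IsPSolvable p N) (h2 : IsPSolvable p (G ⧸ N)) : IsPSolvable p G := by
  rw [isPSolvable_iff] at *
  have e1 : Relation.ReflTransGen (PStep p) (Subgroup.map N.subtype ⊥) (Subgroup.map N.subtype ⊤) := by
    refine rtg_lift (Subgroup.map N.subtype) ?_ h1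
    rintro A B ⟨a, b, c⟩
    refine ⟨Subgroup.map_mono a, ?_, ?_⟩
    · rintro _ ⟨x, hx, rfl⟩ _ ⟨y, hy, rfl⟩
      exact ⟨x * y * x⁻¹, b x hx y hy, by simp⟩
    · rcases c with c | c
      · left
        rintro _ ⟨x, hx, rfl⟩
        obtain ⟨k, hk⟩ := c x hx
        exact ⟨k, _, hk, by simp⟩
      · right
        rw [Subgroup.relIndex_map_map_of_injective _ _ N.subtype_injective]
        exact c
  have e2 : Relation.ReflTransGen (PStep p) (Subgroup.comap (QuotientGroup.mk' N) ⊥)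
      (Subgroup.comap (QuotientGroup.mk' N) ⊤) := by
    refine rtg_lift (Subgroup.comap (QuotientGroup.mk' N)) ?_ h2
    rintro A B ⟨a, b, c⟩
    refine ⟨Subgroup.comap_mono a, ?_, ?_⟩
    · intro x hx y hy
      rw [Subgroup.mem_comap] at *
      simpa using b _ hx _ hy
    · rcases c with c | c
      · left
        intro x hx
        obtain ⟨k, hk⟩ := c _ hx
        exact ⟨k, by rw [Subgroup.mem_comap, map_pow]; exact hk⟩
      · right
        rw [Subgroup.relIndex_comap, Subgroup.map_comap_eq_self_of_surjective
          (QuotientGroup.mk'_surjective N)]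
        exact c
  rw [Subgroup.map_bot, ← MonoidHom.range_eq_map, Subgroup.range_subtype] at e1
  rw [MonoidHom.comap_bot, QuotientGroup.ker_mk', Subgroup.comap_top] at e2
  exact e1.trans e2

theorem isPSolvable_of_pgroup {G : Type*} [Group G] (p : ℕ) (h : IsPGroup p G) :
    IsPSolvable p G := by
  rw [isPSolvable_iff]
  refine Relation.ReflTransGen.single ⟨bot_le, ?_, Or.inl ?_⟩
  · intro b _ a ha
    rw [Subgroup.mem_bot] at *
    simp [ha]
  · intro b _
    obtain ⟨k, hk⟩ := h b
    exact ⟨k, by rw [hk]; exact one_mem _⟩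

theorem isPSolvable_of_coprime {G : Type*} [Group G] (p : ℕ) (h : (Nat.card G).Coprime p) :
    IsPSolvable p G := by
  rw [isPSolvable_iff]
  refine Relation.ReflTransGen.single ⟨bot_le, ?_, Or.inr ?_⟩
  · intro b _ a ha
    rw [Subgroup.mem_bot] at *
    simp [ha]
  · rw [Subgroup.relIndex_top_right, Subgroup.index_bot]
    exact h

theorem isPSolvable_of_equiv {G H : Type*} [Group G] [Group H] (p : ℕ) (e : G ≃* H)
    (h : IsPSolvable p G) : IsPSolvable p H := by
  rw [isPSolvable_iff] at *
  have e1 : Relation.ReflTransGen (PStep p) (Subgroup.map e.toMonoidHom ⊥)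
      (Subgroup.map e.toMonoidHom ⊤) := by
    refine rtg_lift (Subgroup.map e.toMonoidHom) ?_ h
    rintro A B ⟨a, b, c⟩
    refine ⟨Subgroup.map_mono a, ?_, ?_⟩
    · rintro _ ⟨x, hx, rfl⟩ _ ⟨y, hy, rfl⟩
      exact ⟨x * y * x⁻¹, b x hx y hy, by simp⟩
    · rcases c with c | c
      · left
        rintro _ ⟨x, hx, rfl⟩
        obtain ⟨k, hk⟩ := c x hx
        exact ⟨k, _, hk, by simp⟩
      · right
        rw [Subgroup.relIndex_map_map_of_injective _ _ e.injective]
        exact c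
  rw [Subgroup.map_bot, Subgroup.map_top_of_surjective _ e.surjective] at e1
  exact e1

theorem card_inter_le {G : Type*} [Group G] [Finite G] (H C : Subgroup G) :
    Nat.card C ≤ H.index * Nat.card (H ⊓ C : Subgroup G) := by
  have h1 : H.relIndex C ≤ H.relIndex ⊤ :=
    Subgroup.relIndex_le_of_le_right le_top (by
      rw [Subgroup.relIndex_top_right]; exact Subgroup.index_ne_zero_of_finite)
  rw [Subgroup.relIndex_top_right] at h1
  have h2 := Subgroup.card_mul_index (H.subgroupOf C)
  have h3 : Nat.card (H.subgroupOf C) = Nat.card (H ⊓ C : Subgroup G) := by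
    rw [← Subgroup.inf_subgroupOf_right]
    exact Nat.card_congr (Subgroup.subgroupOfEquivOfLe inf_le_right).toEquiv
  rw [h3] at h2
  change _ * H.relIndex C = _ at h2
  rw [← h2, mul_comm]
  exact Nat.mul_le_mul_right _ h1

theorem card_comm_sub {G : Type*} [Group G] [Finite G] (H : Subgroup G) :
    Nat.card {x : G × G // Commute x.1 x.2} ≤
      H.index ^ 2 * Nat.card {x : H × H // Commute x.1 x.2} := by
  classical
  have := Fintype.ofFinite G
  -- number of commuting pairs as sums of centralizers
  have f1 : Nat.card {x : G × G // Commute x.1 x.2} =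
      ∑ g : G, Nat.card (Subgroup.centralizer {g}) := by
    rw [← Nat.card_sigma]
    refine Nat.card_congr ⟨fun x => ⟨x.1.1, ⟨x.1.2, ?_⟩⟩, fun x => ⟨(x.1, x.2.1), ?_⟩, ?_, ?_⟩
    · exact (mem_cent _ _).2 x.2
    · exact (mem_cent _ _).1 x.2.2
    · intro x; rfl
    · intro x; rfl
  have f2 : Nat.card {x : G × H // Commute x.1 (x.2 : G)} =
      ∑ g : G, Nat.card (H ⊓ Subgroup.centralizer {g} : Subgroup G) := by
    rw [← Nat.card_sigma]
    refine Nat.card_congr ⟨fun x => ⟨x.1.1, ⟨x.1.2, x.1.2.2, ?_⟩⟩,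
      fun x => ⟨(x.1, ⟨x.2.1, x.2.2.1⟩), ?_⟩, ?_, ?_⟩
    · exact (mem_cent _ _).2 x.2
    · exact (mem_cent _ _).1 x.2.2.2
    · intro x; rfl
    · intro x; rfl
  have f3 : Nat.card {x : G × H // Commute x.1 (x.2 : G)} =
      ∑ g : H, Nat.card (Subgroup.centralizer {(g : G)}) := by
    rw [← Nat.card_sigma]
    refine Nat.card_congr ⟨fun x => ⟨x.1.2, ⟨x.1.1, ?_⟩⟩, fun x => ⟨(x.2.1, x.1), ?_⟩, ?_, ?_⟩
    · exact (mem_cent _ _).2 x.2.symm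
    · exact ((mem_cent _ _).1 x.2.2).symm
    · intro x; rfl
    · intro x; rfl
  have f4 : Nat.card {x : H × H // Commute x.1 x.2} =
      ∑ g : H, Nat.card (H ⊓ Subgroup.centralizer {(g : G)} : Subgroup G) := by
    rw [← Nat.card_sigma]
    refine Nat.card_congr ⟨fun x => ⟨x.1.1, ⟨x.1.2, x.1.2.2, ?_⟩⟩,
      fun x => ⟨(x.1, ⟨x.2.1, x.2.2.1⟩), ?_⟩, ?_, ?_⟩
    · exact (mem_cent _ _).2 (congrArg Subtype.val x.2.eq)
    · exact Subtype.ext ((mem_cent _ _).1 x.2.2.2).eq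
    · intro x; rfl
    · intro x; rfl
  calc Nat.card {x : G × G // Commute x.1 x.2} = _ := f1
    _ ≤ ∑ g : G, H.index * Nat.card (H ⊓ Subgroup.centralizer {g} : Subgroup G) :=
      Finset.sum_le_sum fun g _ => card_inter_le _ _
    _ = H.index * Nat.card {x : G × H // Commute x.1 (x.2 : G)} := by rw [← Finset.mul_sum, f2]
    _ = H.index * ∑ g : H, Nat.card (Subgroup.centralizer {(g : G)}) := by rw [f3]
    _ ≤ H.index * ∑ g : H, H.index * Nat.card (H ⊓ Subgroup.centralizer {(g : G)} : Subgroup G) :=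
      Nat.mul_le_mul_left _ (Finset.sum_le_sum fun g _ => card_inter_le _ _)
    _ = _ := by rw [← Finset.mul_sum, f4]; ring

theorem card_comm_quot {G : Type*} [Group G] [Finite G] (N : Subgroup G) [N.Normal] :
    Nat.card {x : G × G // Commute x.1 x.2} ≤
      Nat.card N ^ 2 * Nat.card {x : (G ⧸ N) × (G ⧸ N) // Commute x.1 x.2} := by
  have : Nat.card N ^ 2 * Nat.card {x : (G ⧸ N) × (G ⧸ N) // Commute x.1 x.2} =
    Nat.card ((N × N) × {x : (G ⧸ N) × (G ⧸ N) // Commute x.1 x.2}) := by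
    rw [Nat.card_prod, Nat.card_prod, sq]
  rw [this]
  have key : ∀ x : G, (x : G ⧸ N).out⁻¹ * x ∈ N := by
    intro x
    rw [← QuotientGroup.eq, QuotientGroup.out_eq']
  refine Nat.card_le_card_of_injective (fun x => ((⟨_, key x.1.1⟩, ⟨_, key x.1.2⟩),
    ⟨((x.1.1 : G ⧸ N), (x.1.2 : G ⧸ N)), ?_⟩)) ?_
  · exact (congrArg (QuotientGroup.mk (s := N)) x.2.eq)
  · rintro ⟨⟨x, y⟩, h⟩ ⟨⟨x', y'⟩, h'⟩ he
    have h1 := congrArg (fun z => (z.1.1 : G)) he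
    have h2 := congrArg (fun z => (z.1.2 : G)) he
    have h3 := congrArg (fun z => z.2.1.1) he
    have h4 := congrArg (fun z => z.2.1.2) he
    rw [Subtype.mk.injEq, Prod.mk.injEq]
    have q : ∀ x x' : G, (x : G ⧸ N) = (x' : G ⧸ N) →
        (x : G ⧸ N).out⁻¹ * x = (x' : G ⧸ N).out⁻¹ * x' → x = x' := by
      intro x x' h h'
      rw [h] at h'
      exact mul_left_cancel h'
    exact ⟨q _ _ h3 h1, q _ _ h4 h2⟩

theorem reduction.{u} (p : ℕ) [hp : Fact p.Prime]
    (simple_case : ∀ (G : Type u) [Group G] [Fintype G] [IsSimpleGroup G], p ∣ Nat.card G →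
      ¬ IsPGroup p G → (∀ H : Subgroup G, H ≠ ⊤ → IsPSolvable p H) →
      Nat.card (ConjClasses G) * p ^ 2 < 3 * Nat.card G) :
    ∀ (n : ℕ) (G : Type u) [Group G] [Finite G], Nat.card G = n →
      3 * Nat.card G ^ 2 ≤ p ^ 2 * Nat.card {x : G × G // Commute x.1 x.2} →
      IsPSolvable p G := by
  intro n
  induction n using Nat.strong_induction_on with
  | _ n ih =>
    intro G _ _ hn h
    have hsub : ∀ H : Subgroup G, H ≠ ⊤ → IsPSolvable p H := by
      intro H hH
      refine ih (Nat.card H) ?_ H rfl ?_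
      · rw [← hn]
        exact lt_of_le_of_ne (Subgroup.card_le_card_group H) (fun he => hH (Subgroup.eq_top_of_card_eq H he))
      · have h1 := card_comm_sub H
        have h2 := Subgroup.card_mul_index H
        have h3 : 0 < H.index := Nat.pos_of_ne_zero Subgroup.index_ne_zero_of_finite
        rw [← h2] at h
        have : H.index ^ 2 * (3 * Nat.card H ^ 2) ≤
          H.index ^ 2 * (p ^ 2 * Nat.card {x : H × H // Commute x.1 x.2}) := by
          calc _ = 3 * (Nat.card H * H.index) ^ 2 := by ring
            _ ≤ _ := h
            _ ≤ p ^ 2 * (H.index ^ 2 * Nat.card {x : H × H // Commute x.1 x.2}) :=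
              Nat.mul_le_mul_left _ h1
            _ = _ := by ring
        exact Nat.le_of_mul_le_mul_left this (by positivity)
    by_cases hs : ∃ N : Subgroup G, N.Normal ∧ N ≠ ⊥ ∧ N ≠ ⊤
    · obtain ⟨N, hN, hb, ht⟩ := hs
      refine isPSolvable_ext p N (hsub N ht) ?_
      have h2 := Subgroup.card_mul_index N
      have h4 : 1 < Nat.card N := (Subgroup.one_lt_card_iff_ne_bot N).2 hb
      have h3 : 0 < N.index := Nat.pos_of_ne_zero Subgroup.index_ne_zero_of_finite
      refine ih (Nat.card (G ⧸ N)) ?_ (G ⧸ N) rfl ?_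
      · rw [← hn, ← h2]
        change N.index < _
        nlinarith
      · have h1 := card_comm_quot N
        rw [← h2] at h
        change 3 * N.index ^ 2 ≤ _
        have : Nat.card N ^ 2 * (3 * N.index ^ 2) ≤
          Nat.card N ^ 2 * (p ^ 2 * Nat.card {x : (G ⧸ N) × (G ⧸ N) // Commute x.1 x.2}) := by
          calc _ = 3 * (Nat.card N * N.index) ^ 2 := by ring
            _ ≤ _ := h
            _ ≤ p ^ 2 * (Nat.card N ^ 2 * Nat.card {x : (G ⧸ N) × (G ⧸ N) // Commute x.1 x.2}) :=
              Nat.mul_le_mul_left _ h1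
            _ = _ := by ring
        exact Nat.le_of_mul_le_mul_left this (by positivity)
    · push Not at hs
      by_cases hpg : IsPGroup p G
      · exact isPSolvable_of_pgroup p hpg
      by_cases hd : p ∣ Nat.card G
      · exfalso
        have : Nontrivial G := by
          by_contra hc
          rw [not_nontrivial_iff_subsingleton] at hc
          exact hpg (fun g => ⟨0, Subsingleton.elim _ _⟩)
        have : IsSimpleGroup G := ⟨fun N hN => by
          by_cases hb : N = ⊥
          · exact Or.inl hb
          · exact Or.inr (hs N hN hb)⟩
        have := Fintype.ofFinite G
        have key := simple_case G hd hpg hsub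
        rw [card_comm_eq_card_conjClasses_mul_card] at h
        have h0 : 0 < Nat.card G := Nat.card_pos
        nlinarith
      · exact isPSolvable_of_coprime p (((Nat.Prime.coprime_iff_not_dvd hp.out).2 hd).symm)


set_option linter.unusedSectionVars false

section simple
variable {G : Type*} [Group G] [Fintype G] [IsSimpleGroup G]

theorem simple_center (p : ℕ) [hp : Fact p.Prime] (hd : p ∣ Nat.card G) (hpg : ¬ IsPGroup p G) :
    Subgroup.center G = ⊥ := by
  rcases Subgroup.Normal.eq_bot_or_eq_top (inferInstance : (Subgroup.center G).Normal) with h | h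
  · exact h
  · exfalso
    obtain ⟨y, hy⟩ := exists_prime_orderOf_dvd_card' p hd
    have hn : (Subgroup.zpowers y).Normal := by
      constructor
      intro n hn g
      have : n ∈ Subgroup.center G := by rw [h]; trivial
      rw [Subgroup.mem_center_iff] at this
      rw [this g, mul_inv_cancel_right]
      exact hn
    rcases hn.eq_bot_or_eq_top with h1 | h1
    · rw [Subgroup.zpowers_eq_bot] at h1
      rw [h1, orderOf_one] at hy
      exact hp.out.one_lt.ne hy
    · apply hpg
      have : Nat.card G = p ^ 1 := by
        rw [pow_one, ← hy, ← Nat.card_zpowers, h1, Subgroup.card_top]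
      exact IsPGroup.of_card this

theorem central_eq_one (hc : Subgroup.center G = ⊥) {y : G} (h : ∀ g, Commute g y) : y = 1 := by
  have : y ∈ Subgroup.center G := by
    rw [Subgroup.mem_center_iff]
    exact fun g => (h g).eq
  rw [hc, Subgroup.mem_bot] at this
  exact this

theorem simple_inj (I : IrrData G) {i0 : Fin I.r} (h0 : ∀ i, i ≠ i0 → ∑ g, I.χ i g = 0)
    {i : Fin I.r} (hi : i ≠ i0) : Function.Injective (I.ρ i) := by
  rw [← MonoidHom.ker_eq_bot_iff]
  rcases (MonoidHom.normal_ker (I.ρ i)).eq_bot_or_eq_top with h | h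
  · exact h
  · exfalso
    have := h0 i hi
    have h2 : ∀ g, I.χ i g = I.d i := by
      intro g
      have : g ∈ (I.ρ i).ker := by rw [h]; trivial
      rw [MonoidHom.mem_ker] at this
      rw [← I.χ_one i]
      change (I.ρ i g).trace = (I.ρ i 1).trace
      rw [this, map_one]
    simp only [h2, Finset.sum_const, Finset.card_univ, nsmul_eq_mul, mul_eq_zero, Nat.cast_eq_zero] at this
    rcases this with h | h
    · exact Fintype.card_ne_zero h
    · exact (I.pos i).ne' h

theorem simple_nonscalar (hc : Subgroup.center G = ⊥) (I : IrrData G) {i0 : Fin I.r}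
    (h0 : ∀ i, i ≠ i0 → ∑ g, I.χ i g = 0)
    {i : Fin I.r} (hi : i ≠ i0) {y : G} (hy : y ≠ 1) (c : ℂ) : I.ρ i y ≠ c • 1 := by
  intro h
  apply hy
  apply central_eq_one hc
  intro g
  apply simple_inj I h0 hi
  rw [map_mul, map_mul, h]
  simp

theorem simple_two_le (hc : Subgroup.center G = ⊥) (I : IrrData G) {i0 : Fin I.r}
    (h0 : ∀ i, i ≠ i0 → ∑ g, I.χ i g = 0)
    {i : Fin I.r} (hi : i ≠ i0) : 2 ≤ I.d i := by
  by_contra hlt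
  have hd : I.d i = 1 := by have := I.pos i; omega
  obtain ⟨y, hy⟩ := exists_ne (1 : G)
  have : Subsingleton (Fin (I.d i)) := by rw [hd]; infer_instance
  have z : Fin (I.d i) := ⟨0, I.pos i⟩
  refine simple_nonscalar hc I h0 hi hy (I.ρ i y z z) ?_
  ext a b
  rw [Subsingleton.elim a z, Subsingleton.elim b z]
  simp

theorem triv_d (I : IrrData G) {i0 : Fin I.r} (hi0 : ∀ g, I.χ i0 g = 1) : I.d i0 = 1 := by
  have := I.χ_one i0
  rw [hi0] at this
  exact_mod_cast this.symm

/-- lower bound on the order from a lower bound on nontrivial degrees -/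
theorem card_ge_of_deg (I : IrrData G) {i0 : Fin I.r} (hi0 : ∀ g, I.χ i0 g = 1) (q : ℕ)
    (hq : ∀ i, i ≠ i0 → q ≤ I.d i) :
    1 + (Nat.card (ConjClasses G) - 1) * q ^ 2 ≤ Nat.card G := by
  rw [← I.r_eq, Nat.card_eq_fintype_card, ← I.sum_sq,
    ← Finset.add_sum_erase _ _ (Finset.mem_univ i0), triv_d I hi0]
  have : (Finset.univ.erase i0).card = I.r - 1 := by
    rw [Finset.card_erase_of_mem (Finset.mem_univ _), Finset.card_univ, Fintype.card_fin]
  rw [← this, one_pow, ← smul_eq_mul]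
  refine Nat.add_le_add_left (Finset.card_nsmul_le_sum _ _ _ ?_) _
  intro i hi
  exact Nat.pow_le_pow_left (hq i (Finset.ne_of_mem_erase hi)) 2

end simple

theorem sum_sq_gap {ι : Type*} [Fintype ι] [DecidableEq ι] (a : ι → ℕ) (A : Finset ι)
    (h : ∀ i ∈ A, ∀ j ∉ A, a i ≠ a j) :
    (∑ i, a i) ^ 2 + A.card * (Aᶜ).card ≤ Fintype.card ι * ∑ i, a i ^ 2 := by
  have key : (2 : ℤ) * (Fintype.card ι * ∑ i, (a i : ℤ) ^ 2 - (∑ i, (a i : ℤ)) ^ 2) =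
      ∑ i, ∑ j, ((a i : ℤ) - a j) ^ 2 := by
    have : ∀ i j, ((a i : ℤ) - a j) ^ 2 = (a i : ℤ) ^ 2 + (a j : ℤ) ^ 2 - 2 * (a i * a j) := by
      intros; ring
    simp only [this, Finset.sum_sub_distrib, Finset.sum_add_distrib, Finset.sum_const,
      Finset.card_univ, nsmul_eq_mul, ← Finset.mul_sum, ← Finset.sum_mul]
    ring
  have one : ∀ i j, a i ≠ a j → (1 : ℤ) ≤ ((a i : ℤ) - a j) ^ 2 := by
    intro i j hij
    have : ((a i : ℤ) - a j) ≠ 0 := by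
      intro h
      apply hij
      have : (a i : ℤ) = a j := by linarith
      exact_mod_cast this
    have := sq_pos_of_ne_zero this
    linarith
  have b1 : ∀ i ∈ A, ((Aᶜ).card : ℤ) ≤ ∑ j, ((a i : ℤ) - a j) ^ 2 := by
    intro i hi
    calc ((Aᶜ).card : ℤ) = ∑ j ∈ Aᶜ, (1 : ℤ) := by simp
      _ ≤ ∑ j ∈ Aᶜ, ((a i : ℤ) - a j) ^ 2 := Finset.sum_le_sum fun j hj =>
        one i j (h i hi j (Finset.mem_compl.1 hj))
      _ ≤ _ := Finset.sum_le_sum_of_subset_of_nonneg (Finset.subset_univ _) fun _ _ _ => sq_nonneg _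
  have b2 : ∀ i ∈ Aᶜ, (A.card : ℤ) ≤ ∑ j, ((a i : ℤ) - a j) ^ 2 := by
    intro i hi
    calc (A.card : ℤ) = ∑ j ∈ A, (1 : ℤ) := by simp
      _ ≤ ∑ j ∈ A, ((a i : ℤ) - a j) ^ 2 := Finset.sum_le_sum fun j hj =>
        one i j (h j hj i (Finset.mem_compl.1 hi)).symm
      _ ≤ _ := Finset.sum_le_sum_of_subset_of_nonneg (Finset.subset_univ _) fun _ _ _ => sq_nonneg _
  have b3 : (2 : ℤ) * (A.card * (Aᶜ).card) ≤ ∑ i, ∑ j, ((a i : ℤ) - a j) ^ 2 := by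
    rw [← Finset.sum_add_sum_compl A]
    have c1 := Finset.card_nsmul_le_sum A (fun i => ∑ j, ((a i : ℤ) - a j) ^ 2) _ b1
    have c2 := Finset.card_nsmul_le_sum Aᶜ (fun i => ∑ j, ((a i : ℤ) - a j) ^ 2) _ b2
    simp only [nsmul_eq_mul] at c1 c2
    linarith
  zify
  linarith

namespace Cyc
variable {G : Type*} [Group G] [Fintype G] {p : ℕ} [hp : Fact p.Prime] (L : Cyc G p 1)
variable (I : IrrData G)

theorem zc {p : ℕ} [Fintype (ZMod (p ^ 1))] : Fintype.card (ZMod (p ^ 1)) = p :=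
  (ZMod.card _).trans (pow_one p)

theorem cent_Y {i : ZMod (p ^ 1)} (hi : i ≠ 0) :
    Subgroup.centralizer {L.Y i} = Subgroup.centralizer {L.y} := by
  ext g
  rw [mem_cent, mem_cent]
  constructor
  · intro h
    obtain ⟨u, hu⟩ := (Loc.unit_of_ne hi).exists_right_inv
    have : L.y = L.Y i ^ u.val := by
      change _ = (L.y ^ i.val) ^ u.val
      rw [← pow_mul, ← L.Y_nat]
      push_cast
      rw [ZMod.natCast_zmod_val, ZMod.natCast_zmod_val, hu, L.Y_one]
    rw [this]
    exact h.pow_left _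
  · intro h
    exact h.pow_left _

noncomputable def Q (X : Fin I.r) : ℕ := p * ∑ j, L.b I j X ^ 2

theorem sum_Q : ∑ X, L.Q I X =
    Nat.card G + (p - 1) * Nat.card (Subgroup.centralizer {L.y}) := by
  have h1 : ∀ X, ((L.Q I X : ℕ) : ℂ) = ∑ i, I.χ X (L.Y i) * I.χ X (L.Y i)⁻¹ := by
    intro X
    rw [L.parseval]
    simp [Q]
  have h2 : ((∑ X, L.Q I X : ℕ) : ℂ) =
      ∑ i : ZMod (p ^ 1), (Nat.card (Subgroup.centralizer {L.Y i}) : ℂ) := by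
    push_cast
    simp only [h1]
    rw [Finset.sum_comm]
    exact Finset.sum_congr rfl fun i _ => I.centralizer_sum _
  have h3 : ∑ X, L.Q I X = ∑ i : ZMod (p ^ 1), Nat.card (Subgroup.centralizer {L.Y i}) := by
    exact_mod_cast h2
  rw [h3, ← Finset.add_sum_erase _ _ (Finset.mem_univ (0 : ZMod (p ^ 1)))]
  congr 1
  · rw [L.Y_zero]
    have : Subgroup.centralizer {(1 : G)} = ⊤ := by
      ext g; rw [mem_cent]; simp
    rw [this, Subgroup.card_top]
  · rw [Finset.sum_congr rfl (fun i hi => by rw [L.cent_Y (Finset.ne_of_mem_erase hi)]),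
      Finset.sum_const, Finset.card_erase_of_mem (Finset.mem_univ _), Finset.card_univ,
      ZMod.card, pow_one, smul_eq_mul]

theorem Q_gap (X : Fin I.r) (A : Finset (ZMod (p ^ 1)))
    (h : ∀ i ∈ A, ∀ j ∉ A, L.b I i X ≠ L.b I j X) :
    I.d X ^ 2 + A.card * (p - A.card) ≤ L.Q I X := by
  have := sum_sq_gap (fun j => L.b I j X) A h
  rw [L.sum_b, Finset.card_compl, zc] at this
  exact this

theorem Q_triv {i0 : Fin I.r} (hi0 : ∀ g, I.χ i0 g = 1) : L.Q I i0 = p := by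
  have : ((L.Q I i0 : ℕ) : ℂ) = ∑ i, I.χ i0 (L.Y i) * I.χ i0 (L.Y i)⁻¹ := by
    rw [L.parseval]
    simp [Q]
  simp only [hi0, mul_one, Finset.sum_const, Finset.card_univ, ZMod.card, pow_one,
    nsmul_eq_mul] at this
  exact_mod_cast this

theorem d_of_const (X : Fin I.r) (h : ∀ i j, L.b I i X = L.b I j X) : p ≤ I.d X := by
  have h1 := L.sum_b I X
  rw [Finset.sum_congr rfl (fun j _ => h j 0), Finset.sum_const, Finset.card_univ, zc,
    smul_eq_mul] at h1
  have := I.pos X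
  rw [← h1]
  refine Nat.le_mul_of_pos_right _ ?_
  rcases Nat.eq_zero_or_pos (L.b I 0 X) with h | h
  · rw [h] at h1; omega
  · exact h

theorem mul_gap {p q : ℕ} (e : ℕ) (h1 : e ≤ q) (h2 : q + e ≤ p) : e * (p - e) ≤ q * (p - q) := by
  obtain ⟨s, rfl⟩ := Nat.exists_eq_add_of_le h1
  obtain ⟨t, rfl⟩ := Nat.exists_eq_add_of_le h2
  have e1 : e + s + e + t - e = e + s + t := by omega
  have e2 : e + s + e + t - (e + s) = e + t := by omega
  rw [e1, e2]
  nlinarith [Nat.zero_le (s * t)]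

theorem Q_any (X : Fin I.r) : I.d X < p → I.d X ^ 2 + (p - 1) ≤ L.Q I X := by
  classical
  intro hd
  by_cases h : ∀ j, L.b I j X = L.b I 0 X
  · exact absurd (L.d_of_const I X (fun i j => (h i).trans (h j).symm)) (by omega)
  · push Not at h
    obtain ⟨j, hj⟩ := h
    let A : Finset (ZMod (p ^ 1)) := Finset.univ.filter (fun i => L.b I i X = L.b I 0 X)
    have h0 : 0 ∈ A := by simp [A]
    have hjA : j ∉ A := by simpa [A] using hj
    have hg := L.Q_gap I X A (by
      intro i hi k hk he
      simp only [A, Finset.mem_filter, Finset.mem_univ, true_and] at hi hk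
      exact hk (he ▸ hi))
    have c1 : 1 ≤ A.card := Finset.card_pos.2 ⟨0, h0⟩
    have c2 : A.card + 1 ≤ p := by
      have := Finset.card_lt_univ_of_notMem hjA
      rwa [zc] at this
    have := mul_gap 1 c1 c2
    omega

/-- the first class number bound -/
theorem bound1 (I : IrrData G) : Nat.card (ConjClasses G) * p ^ 2 ≤
    Nat.card G + p ^ 2 * Nat.card (Subgroup.centralizer {L.y}) := by
  have hX : ∀ X, (p - 1) * p ^ 2 + p ^ 2 * I.d X ^ 2 ≤ (p - 1) * I.d X ^ 2 + p ^ 2 * L.Q I X := by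
    intro X
    by_cases h : I.d X < p
    · have := L.Q_any I X h
      nlinarith [Nat.zero_le ((p - 1) * I.d X ^ 2), Nat.mul_le_mul_left (p ^ 2) this]
    · have h2 : p ^ 2 ≤ I.d X ^ 2 := Nat.pow_le_pow_left (by omega) 2
      have h3 := L.Q_gap I X ∅ (by simp)
      simp only [Finset.card_empty, zero_mul, add_zero] at h3
      exact Nat.add_le_add (Nat.mul_le_mul_left _ h2) (Nat.mul_le_mul_left _ h3)
  have hs := Finset.sum_le_sum (s := Finset.univ) fun X _ => hX X
  simp only [Finset.sum_add_distrib, ← Finset.mul_sum, I.sum_sq, L.sum_Q, Finset.sum_const,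
    Finset.card_univ, Fintype.card_fin, smul_eq_mul, I.r_eq, ← Nat.card_eq_fintype_card (α := G)] at hs
  have hp1 : 0 < p - 1 := by have := hp.out.one_lt; omega
  refine le_of_mul_le_mul_left (a := p - 1) ?_ hp1
  nlinarith
end Cyc


section caseD
variable {G : Type*} [Group G] [Fintype G] [IsSimpleGroup G]

theorem exists_noncomm_conj (hc : Subgroup.center G = ⊥) {y : G} (hy : y ≠ 1) :
    ∃ g, ¬ Commute (g * y * g⁻¹) y := by
  by_contra h
  push Not at h
  have h1 : ∀ z ∈ Subgroup.normalClosure {y}, Commute z y := by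
    have : Subgroup.normalClosure {y} ≤ Subgroup.centralizer {y} := by
      rw [Subgroup.normalClosure, Subgroup.closure_le]
      intro z hz
      rw [Group.mem_conjugatesOfSet_iff] at hz
      obtain ⟨w, hw, hwz⟩ := hz
      rw [Set.mem_singleton_iff] at hw
      subst hw
      obtain ⟨g, rfl⟩ := isConj_iff.1 hwz
      rw [SetLike.mem_coe, mem_cent]
      exact (h g).symm
    intro z hz
    exact ((mem_cent _ _).1 (this hz)).symm
  rcases (Subgroup.normalClosure_normal (s := {y})).eq_bot_or_eq_top with h2 | h2
  · have : y ∈ Subgroup.normalClosure {y} := Subgroup.subset_normalClosure rfl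
    rw [h2, Subgroup.mem_bot] at this
    exact hy this
  · exact hy (central_eq_one hc fun g => h1 g (by rw [h2]; trivial))

theorem class_large (p : ℕ) [hp : Fact p.Prime] (hc : Subgroup.center G = ⊥)
    (hsub : ∀ H : Subgroup G, H ≠ ⊤ → IsPSolvable p H) {n : ℕ} (hn : n < p - 1)
    (σ : G →* Matrix (Fin n) (Fin n) ℂ) (hσ : Function.Injective σ)
    (P : Sylow p G) (y : G) (hyP : y ∈ P) (hy : y ≠ 1) :
    Nat.card P * Nat.card (Subgroup.centralizer {y}) ≤ Nat.card G := by
  obtain ⟨g, hg⟩ := exists_noncomm_conj hc hy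
  have hab : ∀ x ∈ P, ∀ z ∈ P, Commute x z := fun x hx z hz =>
    ito_fact1' (by omega) σ hσ P.2 hx hz
  have pe : ∀ x ∈ P, PE p x := fun x hx => PE.of_mem P.2 hx
  have key : ∀ u ∈ P, Commute u (g * y * g⁻¹) → u = 1 := by
    intro u hu hcu
    by_contra hu1
    apply hg
    have hB : Subgroup.centralizer {u} ≠ ⊤ := by
      intro ht
      apply hu1
      apply central_eq_one hc
      intro x
      have : x ∈ Subgroup.centralizer {u} := by rw [ht]; trivial
      exact ((mem_cent _ _).1 this).symm
    have h1 : (g * y * g⁻¹) ∈ Subgroup.centralizer {u} := (mem_cent _ _).2 hcu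
    have h2 : y ∈ Subgroup.centralizer {u} := (mem_cent _ _).2 (hab u hu y hyP)
    have := Fintype.ofFinite (Subgroup.centralizer {u})
    have h3 := ito hn (σ.comp (Subgroup.centralizer {u}).subtype)
      (hσ.comp (Subgroup.subtype_injective _)) (hsub _ hB) ⟨_, h1⟩ ⟨_, h2⟩ (by
        obtain ⟨k, hk⟩ := pe y hyP
        refine ⟨k, Subtype.ext ?_⟩
        rw [SubmonoidClass.coe_pow, conj_pow, hk]
        simp) (by
        obtain ⟨k, hk⟩ := pe y hyP
        exact ⟨k, Subtype.ext hk⟩)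
    exact congrArg Subtype.val h3.eq
  rw [← Nat.card_prod]
  refine Nat.card_le_card_of_injective (fun x : P × Subgroup.centralizer {y} => (x.1 : G) * g * x.2) ?_
  rintro ⟨⟨r, hr⟩, ⟨w, hw⟩⟩ ⟨⟨s, hs⟩, ⟨v, hv⟩⟩ he
  simp only at he
  have hw' := (mem_cent _ _).1 hw
  have hv' := (mem_cent _ _).1 hv
  have e1 : ∀ r w, Commute y w → (r * g * w) * y * (r * g * w)⁻¹ = r * (g * y * g⁻¹) * r⁻¹ := by
    intro r w h
    calc (r * g * w) * y * (r * g * w)⁻¹ = r * g * (w * y) * w⁻¹ * g⁻¹ * r⁻¹ := by group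
      _ = _ := by rw [← h.eq]; group
  have e2 : r * (g * y * g⁻¹) * r⁻¹ = s * (g * y * g⁻¹) * s⁻¹ := by
    rw [← e1 r w hw', ← e1 s v hv', he]
  have e3 : s⁻¹ * r = 1 := by
    apply key _ (mul_mem (inv_mem hs) hr)
    change s⁻¹ * r * (g * y * g⁻¹) = (g * y * g⁻¹) * (s⁻¹ * r)
    calc s⁻¹ * r * (g * y * g⁻¹) = s⁻¹ * (r * (g * y * g⁻¹) * r⁻¹) * r := by group
      _ = _ := by rw [e2]; group
  have e4 : r = s := (inv_mul_eq_one.1 e3).symm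
  subst e4
  have e5 : w = v := mul_left_cancel he
  subst e5
  rfl

theorem case_two (hc : Subgroup.center G = ⊥) :
    Nat.card (ConjClasses G) * 2 ^ 2 < 3 * Nat.card G := by
  obtain ⟨I⟩ := exists_irrData G
  obtain ⟨i0, hi0, h0⟩ := I.exists_triv
  have := card_ge_of_deg I hi0 2 (fun i hi => simple_two_le hc I h0 hi)
  have h1 : 1 < Nat.card G := Finite.one_lt_card
  omega

theorem caseD (p : ℕ) [hp : Fact p.Prime] (hp3 : 3 ≤ p) (hc : Subgroup.center G = ⊥)
    (hpg : ¬ IsPGroup p G)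
    (hsub : ∀ H : Subgroup G, H ≠ ⊤ → IsPSolvable p H)
    (P : Sylow p G) (hP : p ^ 2 ≤ Nat.card P) :
    Nat.card (ConjClasses G) * p ^ 2 < 3 * Nat.card G := by
  obtain ⟨I⟩ := exists_irrData G
  obtain ⟨i0, hi0, h0⟩ := I.exists_triv
  have hG0 : 0 < Nat.card G := Nat.card_pos
  by_cases h : ∃ i, i ≠ i0 ∧ I.d i < p - 1
  · obtain ⟨i, hi, hd⟩ := h
    have hdvd : p ∣ Nat.card P := by
      obtain ⟨n, hn⟩ := IsPGroup.iff_card.1 P.2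
      change Nat.card P = _ at hn
      rw [hn] at hP ⊢
      refine dvd_pow_self p ?_
      rintro rfl
      nlinarith
    obtain ⟨y, hy⟩ := exists_prime_orderOf_dvd_card' p hdvd
    have hy' : orderOf (y : G) = p ^ 1 := by rw [Subgroup.orderOf_coe, hy, pow_one]
    have hy1 : (y : G) ≠ 1 := by
      intro h
      rw [h, orderOf_one, pow_one] at hy'
      omega
    have h1 := class_large p hc hsub hd (I.ρ i) (simple_inj I h0 hi) P y y.2 hy1
    let L : Cyc G p 1 := ⟨y, hy'⟩
    have h2 := L.bound1 I
    have h3 : L.y = y := rfl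
    rw [h3] at h2
    have h4 := Nat.mul_le_mul_right (Nat.card (Subgroup.centralizer {(y : G)})) hP
    omega
  · push Not at h
    have h1 := card_ge_of_deg I hi0 (p - 1) h
    have h2 : 2 * Nat.card P ≤ Nat.card G := by
      have e := Subgroup.card_mul_index (P : Subgroup G)
      have e2 : (P : Subgroup G).index ≠ 0 := Subgroup.index_ne_zero_of_finite
      have e3 : (P : Subgroup G).index ≠ 1 := by
        intro h
        rw [Subgroup.index_eq_one] at h
        apply hpg
        have := P.2
        rw [h] at this
        exact this.of_equiv Subgroup.topEquiv
      change Nat.card P * _ = _ at e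
      rw [← e]
      have : 2 ≤ (P : Subgroup G).index := by omega
      rw [mul_comm 2]
      exact Nat.mul_le_mul_left _ this
    have hk : 0 < Nat.card (ConjClasses G) := Nat.card_pos
    obtain ⟨k, hk⟩ : ∃ k, Nat.card (ConjClasses G) = k + 1 := ⟨_, (Nat.succ_pred_eq_of_pos hk).symm⟩
    rw [hk] at h1 ⊢
    rw [Nat.add_sub_cancel] at h1
    obtain ⟨q, rfl⟩ : ∃ q, p = q + 1 := ⟨p - 1, by omega⟩
    rw [Nat.add_sub_cancel] at h1
    have hq : 2 ≤ q := by omega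
    -- 4 (q+1)^2 ≤ 9 q^2
    have h5 : 4 * (q + 1) ^ 2 ≤ 9 * q ^ 2 := by nlinarith
    have h6 : 4 * (k * (q + 1) ^ 2) ≤ 9 * (k * q ^ 2) := by
      have := Nat.mul_le_mul_left k h5
      linarith
    nlinarith
end caseD


set_option linter.unusedSectionVars false

theorem exists_loc {G : Type*} [Group G] [Fintype G] (p : ℕ) [hp : Fact p.Prime] (P : Sylow p G)
    (hP : Nat.card P = p) : ∃ L : Loc G p 1, (P : Subgroup G) = Subgroup.zpowers L.y := by
  obtain ⟨y', hy'⟩ := exists_prime_orderOf_dvd_card' (G := P) p (by rw [hP])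
  obtain ⟨y, hyP⟩ := y'
  have hy : orderOf y = p := by rw [← hy', Subgroup.orderOf_mk]
  have hz : Subgroup.zpowers y = (P : Subgroup G) := by
    apply Subgroup.eq_of_le_of_card_ge
    · rw [Subgroup.zpowers_le]; exact hyP
    · rw [Nat.card_zpowers, hy]
      exact hP.le
  let C := Subgroup.centralizer {y}
  let N := (Subgroup.zpowers y).subgroupOf C
  have hle : Subgroup.zpowers y ≤ C := by
    rw [Subgroup.zpowers_le]
    exact (mem_cent _ _).2 (Commute.refl _)
  have hNmem : ∀ n ∈ N, ∃ i : ℕ, (n : G) = y ^ i := by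
    intro n hn
    rw [Subgroup.mem_subgroupOf, ← mem_powers_iff_mem_zpowers] at hn
    obtain ⟨i, hi⟩ := hn
    exact ⟨i, hi.symm⟩
  have hN : N.Normal := by
    constructor
    intro n hn g
    obtain ⟨i, hi⟩ := hNmem n hn
    have : g * n * g⁻¹ = n := by
      rw [mul_inv_eq_iff_eq_mul]
      apply Subtype.ext
      have hg : Commute (g : G) y := ((mem_cent _ _).1 g.2).symm
      push_cast
      rw [hi]
      exact (hg.pow_right i).eq
    rw [this]
    exact hn
  have hcN : Nat.card N = p := by
    rw [← hy, ← Nat.card_zpowers]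
    exact Nat.card_congr (Subgroup.subgroupOfEquivOfLe hle).toEquiv
  have hnd : ¬ p ∣ N.index := by
    intro h
    have h2 : N.index ∣ (Subgroup.zpowers y).index := Subgroup.relIndex_dvd_index_of_le hle
    rw [hz] at h2
    exact P.not_dvd_index (h.trans h2)
  obtain ⟨H, hH⟩ := Subgroup.exists_right_complement'_of_coprime (N := N) (by
    rw [hcN]
    exact (Nat.Prime.coprime_iff_not_dvd hp.out).2 hnd)
  refine ⟨⟨⟨y, by rw [hy, pow_one]⟩, H.map C.subtype, ?_, ?_, ?_⟩, hz.symm⟩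
  · rintro _ ⟨k, hk, rfl⟩
    exact ((mem_cent _ _).1 k.2).symm
  · rw [Nat.card_congr (H.equivMapOfInjective C.subtype C.subtype_injective).toEquiv.symm,
      ← hH.symm.index_eq_card]
    exact ((Nat.Prime.coprime_iff_not_dvd hp.out).2 hnd).symm
  · intro c hc
    obtain ⟨⟨n, h⟩, hnh⟩ := hH.2 ⟨c, (mem_cent _ _).2 hc.symm⟩
    obtain ⟨i, hi⟩ := hNmem n n.2
    refine ⟨i, (h : C), ⟨h, h.2, rfl⟩, ?_⟩
    have := congrArg Subtype.val hnh
    change ((n : C) : G) * ((h : C) : G) = c at this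
    rw [← this, hi]

namespace Loc
variable {G : Type*} [Group G] [Fintype G] {p : ℕ} [hp : Fact p.Prime] (L : Loc G p 1)

theorem mem_norm (P : Sylow p G) (hP : (P : Subgroup G) = Subgroup.zpowers L.y) (g : G) :
    g ∈ Subgroup.normalizer (P : Set G) ↔ ∃ u, L.Nm g u := by
  have hmem : ∀ x : G, x ∈ (P : Subgroup G) ↔ ∃ i : ZMod (p ^ 1), x = L.Y i := by
    intro x
    rw [hP, ← mem_powers_iff_mem_zpowers]
    constructor
    · rintro ⟨i, rfl⟩
      exact ⟨i, (L.Y_nat i).symm⟩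
    · rintro ⟨i, rfl⟩
      exact ⟨i.val, rfl⟩
  constructor
  · intro h
    have h1 := (Subgroup.mem_normalizer_iff.1 h L.y).1 ((hmem _).2 ⟨1, L.Y_one.symm⟩)
    exact (hmem _).1 h1
  · rintro ⟨u, hu⟩
    have hone : ∀ (g : G) (u), L.Nm g u → ∀ x ∈ (P : Subgroup G), g * x * g⁻¹ ∈ (P : Subgroup G) := by
      intro g u hu x hx
      obtain ⟨i, rfl⟩ := (hmem x).1 hx
      rw [hu.conj]
      exact (hmem _).2 ⟨_, rfl⟩
    refine Subgroup.mem_normalizer_iff.2 fun x => ⟨hone g u hu x, fun hx => ?_⟩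
    obtain ⟨v, hv, _⟩ := hu.inv
    have := hone _ v hv _ hx
    have e : g⁻¹ * (g * x * g⁻¹) * g⁻¹⁻¹ = x := by group
    rw [e] at this
    exact this

theorem card_cent [Fintype L.K] : Nat.card (Subgroup.centralizer {L.y}) = p * Fintype.card L.K := by
  classical
  have h := L.card_nm_one
  rw [congrArg (· * Fintype.card L.K) (pow_one p).symm]
  change _ = p ^ 1 * Fintype.card L.K
  rw [← h, ← Fintype.card_subtype, ← Nat.card_eq_fintype_card]
  refine Nat.card_congr (Equiv.subtypeEquivRight fun g => ?_)
  rw [mem_cent]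
  unfold Nm
  rw [L.Y_one, mul_inv_eq_iff_eq_mul]
  exact ⟨fun h => h.symm, fun h => h.symm⟩

theorem card_norm (P : Sylow p G) (hP : (P : Subgroup G) = Subgroup.zpowers L.y) :
    Nat.card (Subgroup.normalizer (P : Set G)) =
      L.E.card * Nat.card (Subgroup.centralizer {L.y}) := by
  classical
  have := Fintype.ofFinite L.K
  rw [L.card_cent]
  have h := L.card_nm
  change _ = L.E.card * (p * Fintype.card L.K)
  rw [show p * Fintype.card L.K = p ^ 1 * Fintype.card L.K by rw [pow_one]]
  rw [← h, ← Fintype.card_subtype, ← Nat.card_eq_fintype_card]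
  exact Nat.card_congr (Equiv.subtypeEquivRight fun g => L.mem_norm P hP g)

theorem E_dvd : L.E.card ∣ p - 1 := by
  classical
  let S : Subgroup (ZMod (p ^ 1))ˣ :=
    { carrier := {u | (u : ZMod (p ^ 1)) ∈ L.E}
      one_mem' := by simpa using L.one_mem_E
      mul_mem' := by
        intro u v hu hv
        obtain ⟨g, hg⟩ := L.mem_E.1 hu
        obtain ⟨h, hh⟩ := L.mem_E.1 hv
        exact L.mem_E.2 ⟨g * h, by rw [Units.val_mul]; exact hg.mul hh⟩
      inv_mem' := by
        intro u hu
        obtain ⟨g, hg⟩ := L.mem_E.1 hu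
        obtain ⟨v, hv, hvu⟩ := hg.inv
        refine L.mem_E.2 ⟨g⁻¹, ?_⟩
        have : ((u⁻¹ : (ZMod (p ^ 1))ˣ) : ZMod (p ^ 1)) = v := by
          calc ((u⁻¹ : (ZMod (p ^ 1))ˣ) : ZMod (p ^ 1)) = v * u * (u⁻¹ : (ZMod (p ^ 1))ˣ) := by
                rw [hvu, one_mul]
            _ = v := Units.mul_inv_cancel_right v u
        rw [this]
        exact hv }
  have h1 : Nat.card S = L.E.card := by
    rw [← Fintype.card_coe L.E, ← Nat.card_eq_fintype_card]
    refine Nat.card_congr (Equiv.ofBijective (fun u : S => (⟨(u : (ZMod (p ^ 1))ˣ), u.2⟩ : L.E)) ⟨?_, ?_⟩)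
    · intro u v h
      exact Subtype.ext (Units.ext (congrArg Subtype.val h))
    · rintro ⟨u, hu⟩
      obtain ⟨g, hg⟩ := L.mem_E.1 hu
      obtain ⟨w, hw⟩ := hg.unit
      exact ⟨⟨w, show (w : ZMod (p ^ 1)) ∈ L.E by rw [hw]; exact hu⟩, Subtype.ext hw⟩
  rw [← h1]
  have h2 := Subgroup.card_subgroup_dvd_card S
  rw [Nat.card_eq_fintype_card (α := (ZMod (p ^ 1))ˣ), ZMod.card_units_eq_totient] at h2
  rwa [show (p ^ 1).totient = p - 1 by rw [pow_one, Nat.totient_prime hp.out]] at h2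

theorem two_le_E [IsSimpleGroup G] (hpg : ¬ IsPGroup p G) (P : Sylow p G)
    (hP : (P : Subgroup G) = Subgroup.zpowers L.y) : 2 ≤ L.E.card := by
  by_contra hlt
  have hE : L.E = {1} := by
    have h1 : L.E.card ≤ 1 := by omega
    exact (Finset.eq_of_subset_of_card_le (by simpa using L.one_mem_E) (by simpa using h1)).symm
  have hle : Subgroup.normalizer (P : Set G) ≤ Subgroup.centralizer (P : Set G) := by
    intro g hg
    obtain ⟨u, hu⟩ := (L.mem_norm P hP g).1 hg
    have h1 : u ∈ L.E := L.mem_E.2 ⟨g, hu⟩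
    rw [hE, Finset.mem_singleton] at h1
    subst h1
    unfold Nm at hu
    rw [L.Y_one, mul_inv_eq_iff_eq_mul] at hu
    have hc : Commute g L.y := hu
    rw [Subgroup.mem_centralizer_iff]
    intro x hx
    change x ∈ (P : Subgroup G) at hx
    rw [hP] at hx
    obtain ⟨i, rfl⟩ := hx
    exact (hc.zpow_right i).symm.eq
  have hcomp := MonoidHom.ker_transferSylow_isComplement' P hle
  have hone : L.y ∈ (P : Subgroup G) := by rw [hP]; exact Subgroup.mem_zpowers _
  rcases (MonoidHom.normal_ker (MonoidHom.transferSylow P hle)).eq_bot_or_eq_top with h | h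
  · rw [h, Subgroup.isComplement'_bot_left] at hcomp
    apply hpg
    have := P.2
    rw [hcomp] at this
    exact this.of_equiv Subgroup.topEquiv
  · rw [h, Subgroup.isComplement'_top_left] at hcomp
    rw [hcomp, Subgroup.mem_bot] at hone
    have := L.hy
    rw [hone, orderOf_one, pow_one] at this
    exact hp.out.one_lt.ne this

theorem index_data [IsSimpleGroup G] (hpg : ¬ IsPGroup p G) (P : Sylow p G)
    (hP : (P : Subgroup G) = Subgroup.zpowers L.y) :
    ∃ t, p + 1 ≤ t ∧ Nat.card G = t * (L.E.card * Nat.card (Subgroup.centralizer {L.y})) := by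
  refine ⟨Nat.card (Sylow p G), ?_, ?_⟩
  · have h1 := card_sylow_modEq_one p G
    have h2 : Nat.card (Sylow p G) ≠ 1 := by
      intro h
      have : Subsingleton (Sylow p G) := (Nat.card_eq_one_iff_unique.1 h).1
      rcases (P.normal_of_subsingleton).eq_bot_or_eq_top with h | h
      · have hone : L.y ∈ (P : Subgroup G) := by rw [hP]; exact Subgroup.mem_zpowers _
        rw [h, Subgroup.mem_bot] at hone
        have := L.hy
        rw [hone, orderOf_one, pow_one] at this
        exact hp.out.one_lt.ne this
      · apply hpg
        have := P.2
        rw [h] at this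
        exact this.of_equiv Subgroup.topEquiv
    have h3 : 0 < Nat.card (Sylow p G) := Nat.card_pos
    obtain ⟨k, hk⟩ := (Nat.modEq_iff_dvd' (by omega)).1 h1.symm
    have : k ≠ 0 := by rintro rfl; omega
    have : p ≤ p * k := Nat.le_mul_of_pos_right _ (by omega)
    omega
  · rw [← L.card_norm P hP, P.card_eq_index_normalizer, mul_comm]
    exact (Subgroup.card_mul_index _).symm

variable (I : IrrData G)

theorem Q_lp (X : Fin I.r) (hns : ∀ c : ℂ, I.ρ X L.y ≠ c • 1) :
    L.E.card * p ^ 2 + (p + L.E.card) * I.d X ^ 2 ≤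
      L.E.card * I.d X ^ 2 + (p + L.E.card) * L.Q I X := by
  classical
  have hp1 : 1 < p := hp.out.one_lt
  have hE : L.E.card ≤ p - 1 := Nat.le_of_dvd (by omega) L.E_dvd
  have hE1 : 1 ≤ L.E.card := Finset.card_pos.2 ⟨1, L.one_mem_E⟩
  set e := L.E.card with he
  by_cases hconst : ∀ i j, L.b I i X = L.b I j X
  · have h1 := L.d_of_const I X hconst
    have h2 : p ^ 2 ≤ I.d X ^ 2 := Nat.pow_le_pow_left h1 2
    have h3 := L.Q_gap I X ∅ (by simp)
    simp only [Finset.card_empty, zero_mul, add_zero] at h3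
    exact Nat.add_le_add (Nat.mul_le_mul_left _ h2) (Nat.mul_le_mul_left _ h3)
  by_cases hc2 : ∀ j ≠ 0, L.b I j X = L.b I 1 X
  · have hb0 : L.b I 0 X ≠ L.b I 1 X := by
      intro h
      apply hconst
      have : ∀ j, L.b I j X = L.b I 1 X := by
        intro j
        by_cases hj : j = 0
        · rw [hj, h]
        · exact hc2 j hj
      intro i j
      rw [this i, this j]
    have hb1 : 1 ≤ L.b I 1 X := by
      by_contra h
      have h0 : L.b I 1 X = 0 := by omega
      exact hns _ (L.scalar_of_single I X 0 (fun j hj => by rw [hc2 j hj, h0]))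
    have hd : p - 1 ≤ I.d X := by
      rw [← L.sum_b I X, ← Finset.add_sum_erase _ _ (Finset.mem_univ (0 : ZMod (p ^ 1)))]
      have h := Finset.card_nsmul_le_sum (Finset.univ.erase (0 : ZMod (p ^ 1)))
        (fun j => L.b I j X) 1 (fun j hj => by rw [hc2 j (Finset.ne_of_mem_erase hj)]; exact hb1)
      rw [Finset.card_erase_of_mem (Finset.mem_univ _), Finset.card_univ, Cyc.zc, smul_eq_mul,
        mul_one] at h
      omega
    have hg := L.Q_gap I X {0} (by
      intro i hi j hj
      rw [Finset.mem_singleton] at hi hj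
      rw [hi, hc2 j hj]
      exact hb0)
    rw [Finset.card_singleton, one_mul] at hg
    obtain ⟨q, rfl⟩ : ∃ q, p = q + 1 := ⟨p - 1, by omega⟩
    rw [Nat.add_sub_cancel] at *
    have h2 : q ^ 2 ≤ I.d X ^ 2 := Nat.pow_le_pow_left hd 2
    have h3 := Nat.mul_le_mul_left (q + 1 + e) hg
    have h4 := Nat.mul_le_mul_left e h2
    nlinarith
  · push Not at hc2
    obtain ⟨j, hj, hjb⟩ := hc2
    have : Nontrivial (ZMod (p ^ 1)) := ⟨j, 0, hj⟩
    have orb : ∀ i, ∀ k ∈ L.O i, L.b I k X = L.b I i X := by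
      intro i k hk
      obtain ⟨u, hu, rfl⟩ := Finset.mem_image.1 hk
      obtain ⟨g, hg⟩ := L.mem_E.1 hu
      exact L.b_inv I X hg i
    let A : Finset (ZMod (p ^ 1)) := Finset.univ.filter (fun i => L.b I i X = L.b I j X)
    have hA1 : L.O j ⊆ A := by
      intro k hk
      simp only [A, Finset.mem_filter, Finset.mem_univ, true_and]
      exact orb j k hk
    have hA2 : L.O 1 ⊆ Aᶜ := by
      intro k hk
      simp only [A, Finset.mem_compl, Finset.mem_filter, Finset.mem_univ, true_and]
      rw [orb 1 k hk]
      exact hjb.symm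
    have c1 := Finset.card_le_card hA1
    have c2 := Finset.card_le_card hA2
    rw [L.card_O_eq hj, ← he] at c1
    rw [L.card_O_eq one_ne_zero, ← he, Finset.card_compl, Cyc.zc] at c2
    have hg := L.Q_gap I X A (by
      intro i hi k hk h
      simp only [A, Finset.mem_filter, Finset.mem_univ, true_and] at hi hk
      exact hk (h ▸ hi))
    have hm := Cyc.mul_gap (p := p) (q := A.card) e c1 (by omega)
    have hd : e ≤ I.d X := by
      have : ∃ i : ZMod (p ^ 1), i ≠ 0 ∧ 1 ≤ L.b I i X := by
        by_cases h : 1 ≤ L.b I j X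
        · exact ⟨j, hj, h⟩
        · exact ⟨1, one_ne_zero, by omega⟩
      obtain ⟨i, hi, hib⟩ := this
      rw [← L.sum_b I X]
      have h := Finset.card_nsmul_le_sum (L.O i)
        (fun j => L.b I j X) 1 (fun k hk => by rw [orb i k hk]; exact hib)
      rw [L.card_O_eq hi, ← he, smul_eq_mul, mul_one] at h
      exact h.trans (Finset.sum_le_sum_of_subset (Finset.subset_univ _))
    have hq : I.d X ^ 2 + e * (p - e) ≤ L.Q I X := by omega
    obtain ⟨q, hq'⟩ : ∃ q, p = q + e := ⟨p - e, by omega⟩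
    have hqe : p - e = q := by omega
    rw [hqe] at hq
    have h2 : e ^ 2 ≤ I.d X ^ 2 := Nat.pow_le_pow_left hd 2
    have h3 := Nat.mul_le_mul_left (p + e) hq
    have h4 := Nat.mul_le_mul_left e h2
    have h5 : e * p ^ 2 = e * e ^ 2 + (p + e) * (e * q) := by rw [hq']; ring
    rw [h5]
    linarith

theorem bound2 {i0 : Fin I.r} (hi0 : ∀ g, I.χ i0 g = 1)
    (hns : ∀ X, X ≠ i0 → ∀ c : ℂ, I.ρ X L.y ≠ c • 1) :
    L.E.card * p ^ 2 * (Nat.card (ConjClasses G) - 1) + L.E.card + (p + L.E.card) * (p - 1) ≤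
      L.E.card * Nat.card G +
      (p + L.E.card) * ((p - 1) * Nat.card (Subgroup.centralizer {L.y})) := by
  have hs := Finset.sum_le_sum (s := Finset.univ.erase i0)
    fun X hX => L.Q_lp I X (hns X (Finset.ne_of_mem_erase hX))
  have hc : (Finset.univ.erase i0).card = Nat.card (ConjClasses G) - 1 := by
    rw [Finset.card_erase_of_mem (Finset.mem_univ _), Finset.card_univ, Fintype.card_fin, I.r_eq]
  simp only [Finset.sum_add_distrib, ← Finset.mul_sum, Finset.sum_const, smul_eq_mul, hc] at hs
  have h1 := I.sum_sq
  have h2 := L.sum_Q I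
  rw [← Finset.add_sum_erase _ _ (Finset.mem_univ i0)] at h1 h2
  rw [L.Q_triv I hi0] at h2
  have hd : I.d i0 = 1 := by
    have := I.χ_one i0
    rw [hi0] at this
    exact_mod_cast this.symm
  rw [hd, one_pow, ← Nat.card_eq_fintype_card] at h1
  generalize (∑ x ∈ Finset.univ.erase i0, I.d x ^ 2) = D at *
  generalize (∑ x ∈ Finset.univ.erase i0, L.Q I x) = R at *
  generalize Nat.card (ConjClasses G) - 1 = k at *
  obtain ⟨q, rfl⟩ : ∃ q, p = q + 1 := ⟨p - 1, by have := hp.out.one_lt; omega⟩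
  rw [Nat.add_sub_cancel] at *
  generalize L.E.card = e at *
  generalize Nat.card (Subgroup.centralizer {L.y}) = c at *
  have h3 : R + q = D + q * c := by omega
  rw [← h1]
  nlinarith

end Loc


theorem arith_ef {p e f : ℕ} (hp : p.Prime) (hef : e * f = p - 1) (he : 2 ≤ e) (hf : f ≤ e + 2) :
    f * f + 2 * f < 2 * e * f + 4 := by
  have hp1 := hp.one_lt
  have hpe : p = e * f + 1 := by omega
  rcases Nat.lt_or_ge e 4 with h | h
  · have : f ≤ 5 := by omega
    interval_cases e <;> interval_cases f <;> first | omega | (exfalso; subst hpe; revert hp; norm_num)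
  · nlinarith

theorem arith_main {p e f c t g k : ℕ} (hpe : p = e * f + 1) (he : 2 ≤ e) (hf1 : 1 ≤ f)
    (hf : f * f + 2 * f < 2 * e * f + 4) (hcp : p ≤ c) (ht : p + 1 ≤ t) (hg : g = t * (e * c))
    (hb : e * p ^ 2 * k + e + (p + e) * (p - 1) ≤ e * g + (p + e) * ((p - 1) * c)) :
    (k + 1) * p ^ 2 < 3 * g := by
  have hp1 : p - 1 = e * f := by omega
  rw [hp1] at hb
  -- divide by e
  have hb2 : p ^ 2 * k + 1 + (p + e) * f ≤ g + (p + e) * (f * c) := by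
    refine le_of_mul_le_mul_left (a := e) ?_ (by omega)
    calc e * (p ^ 2 * k + 1 + (p + e) * f) = e * p ^ 2 * k + e + (p + e) * (e * f) := by ring
      _ ≤ _ := hb
      _ = _ := by ring
  have hg2 : (p + 1) * (e * c) ≤ g := by rw [hg]; exact Nat.mul_le_mul_right _ ht
  -- coefficient estimate
  have hδ : (p + e) * f + e + (e - 1) * f ≤ 2 * e * (p + 1) := by
    obtain ⟨e', rfl⟩ : ∃ e', e = e' + 1 := ⟨e - 1, by omega⟩
    rw [Nat.add_sub_cancel, hpe]
    have := Nat.mul_le_mul_left (e' + 1) (Nat.succ_le_of_lt hf)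
    nlinarith
  obtain ⟨e', rfl⟩ : ∃ e', e = e' + 1 := ⟨e - 1, by omega⟩
  rw [Nat.add_sub_cancel] at hδ
  have h1 := Nat.mul_le_mul_right c hδ
  have h2 : (e' + 1 + e' * f) * p ≤ (e' + 1 + e' * f) * c := Nat.mul_le_mul_left _ hcp
  have h3 : p ^ 2 ≤ (e' + 1 + e' * f) * p + (p + (e' + 1)) * f := by
    have : (e' + 1 + e' * f) * p + (p + (e' + 1)) * f = (e' + 1) * p + p * ((e' + 1) * f) + (e' + 1) * f := by ring
    rw [this]
    have h4 : (e' + 1) * f = p - 1 := by omega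
    have h5 : p * ((e' + 1) * f) + p = p ^ 2 := by
      have : p * ((e' + 1) * f) + p = p * ((e' + 1) * f + 1) := by ring
      rw [this, ← hpe, sq]
    nlinarith
  nlinarith

theorem arith_exc {p e f g k : ℕ} (hpe : p = e * f + 1) (he : 2 ≤ e) (hf : e + 3 ≤ f)
    (hg : p ^ 2 < g)
    (hb : 1 + k * (e * (f - 1)) ^ 2 ≤ g) :
    (k + 1) * p ^ 2 < 3 * g := by
  obtain ⟨f', rfl⟩ : ∃ f', f = f' + 1 := ⟨f - 1, by omega⟩
  rw [Nat.add_sub_cancel] at hb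
  have h1 : p * 8 ≤ 11 * (e * f') := by
    rw [hpe]
    nlinarith
  have h2 : p ^ 2 ≤ 2 * (e * f') ^ 2 := by
    have := Nat.pow_le_pow_left h1 2
    nlinarith
  have h3 := Nat.mul_le_mul_left k h2
  nlinarith

theorem caseE {G : Type*} [Group G] [Fintype G] [IsSimpleGroup G] (p : ℕ) [hp : Fact p.Prime]
    (hc : Subgroup.center G = ⊥) (hpg : ¬ IsPGroup p G) (P : Sylow p G) (hP : Nat.card P = p) :
    Nat.card (ConjClasses G) * p ^ 2 < 3 * Nat.card G := by
  obtain ⟨L, hL⟩ := exists_loc p P hP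
  obtain ⟨I⟩ := exists_irrData G
  obtain ⟨i0, hi0, h0⟩ := I.exists_triv
  have hp1 := hp.out.one_lt
  have hy1 : L.y ≠ 1 := by
    intro h
    have := L.hy
    rw [h, orderOf_one, pow_one] at this
    omega
  have hns : ∀ X, X ≠ i0 → ∀ c : ℂ, I.ρ X L.y ≠ c • 1 :=
    fun X hX c => simple_nonscalar hc I h0 hX hy1 c
  have he := L.two_le_E hpg P hL
  obtain ⟨t, ht, hG⟩ := L.index_data hpg P hL
  obtain ⟨f, hf⟩ := L.E_dvd
  have hcp : p ≤ Nat.card (Subgroup.centralizer {L.y}) := by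
    have := Fintype.ofFinite L.K
    rw [L.card_cent]
    exact Nat.le_mul_of_pos_right _ Fintype.card_pos
  have hpe : p = L.E.card * f + 1 := by omega
  have hk : 0 < Nat.card (ConjClasses G) := Nat.card_pos
  have hk1 : Nat.card (ConjClasses G) = (Nat.card (ConjClasses G) - 1) + 1 := by omega
  rw [hk1]
  by_cases hfe : f ≤ L.E.card + 2
  · refine arith_main hpe he ?_ (arith_ef hp.out hf.symm he hfe) hcp ht hG (L.bound2 I hi0 hns)
    rcases Nat.eq_zero_or_pos f with h | h
    · rw [h] at hpe; omega
    · exact h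
  · refine arith_exc hpe he (by omega) ?_ (card_ge_of_deg I hi0 _ ?_)
    · rw [hG]
      have h1 : p ≤ L.E.card * Nat.card (Subgroup.centralizer {L.y}) :=
        hcp.trans (Nat.le_mul_of_pos_left _ (by omega))
      have := Nat.mul_le_mul ht h1
      nlinarith
    · intro X hX
      by_contra hlt
      exact L.exceptional I f hf.symm (by omega) X i0 hi0 hns hX (by omega)

theorem simple_case {G : Type*} [Group G] [Fintype G] [IsSimpleGroup G] (p : ℕ) [hp : Fact p.Prime]
    (hd : p ∣ Nat.card G) (hpg : ¬ IsPGroup p G)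
    (hsub : ∀ H : Subgroup G, H ≠ ⊤ → IsPSolvable p H) :
    Nat.card (ConjClasses G) * p ^ 2 < 3 * Nat.card G := by
  have hc := simple_center p hd hpg
  have hp2 := hp.out.two_le
  by_cases h2 : p = 2
  · subst h2
    exact case_two hc
  obtain ⟨P⟩ : Nonempty (Sylow p G) := inferInstance
  obtain ⟨n, hn⟩ := IsPGroup.iff_card.1 P.2
  change Nat.card P = _ at hn
  have hdP : p ∣ Nat.card P := P.dvd_card_of_dvd_card hd
  have hn0 : n ≠ 0 := by
    rintro rfl
    rw [hn, pow_zero, Nat.dvd_one] at hdP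
    omega
  by_cases hn1 : n = 1
  · rw [hn1, pow_one] at hn
    exact caseE p hc hpg P hn
  · refine caseD p (by omega) hc hpg hsub P ?_
    rw [hn]
    exact Nat.pow_le_pow_right (by omega) (by omega)

/-- If `k(G) ≥ (3/p²)·|G|`, then the finite group `G` is `p`-solvable. -/
theorem degree_sum_p_solvable_class_number (G : Type*) [Group G] [Fintype G] (p : ℕ)
    (hp : p.Prime)
    (h : (Nat.card (ConjClasses G) : ℝ) ≥ 3 / (p : ℝ) ^ 2 * Nat.card G) :
    IsPSolvable p G := by
  have : Fact p.Prime := ⟨hp⟩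
  refine reduction p (fun G _ _ _ hd hpg hsub => simple_case p hd hpg hsub) _ G rfl ?_
  rw [card_comm_eq_card_conjClasses_mul_card]
  have hp0 : (0 : ℝ) < (p : ℝ) ^ 2 := by
    have := hp.pos
    positivity
  have h1 : (3 : ℝ) * Nat.card G ≤ (p : ℝ) ^ 2 * Nat.card (ConjClasses G) := by
    have e : (3 : ℝ) / (p : ℝ) ^ 2 * Nat.card G = (3 * Nat.card G) / (p : ℝ) ^ 2 := by ring
    rw [e, ge_iff_le, div_le_iff₀ hp0] at h
    linarith
  have h2 : 3 * Nat.card G ≤ p ^ 2 * Nat.card (ConjClasses G) := by exact_mod_cast h1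
  have := Nat.mul_le_mul_right (Nat.card G) h2
  calc 3 * Nat.card G ^ 2 = 3 * Nat.card G * Nat.card G := by ring
    _ ≤ _ := this
    _ = _ := by ring
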